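/- arXiv:2403.15259 — 2 statements merged into one kernel-verified Lean document; each statement's English description precedes it below -/
import Mathlib

section
/- Let E be an ordered Polish space and P a monotone Markov kernel on E. Assume there exists a Borel set C ⊆ E such that C × C is achievable, and that there exist Borel sets A, B with A ⪯ B (meaning a ⪯ b for all a ∈ A, b ∈ B), a number ε > 0 and an integer N ≥ 1 such that P⁽ᴺ⁾(x, A) ≥ ε and P⁽ᴺ⁾(x, B) ≥ ε for every x ∈ C, where P⁽ᴺ⁾ is the N-step transition kernel. Then the set M = {(x,y) : x ⪯ y} is achievable. -/
open MeasureTheory ProbabilityTheory Filter Topology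

/-- `μ` is *stochastically smaller* than `ν` (written `μ ⪯ ν` in the paper):
`μ I ≤ ν I` for every Borel increasing (upper) set `I`. -/
def StochDom {E : Type*} [MeasurableSpace E] [Preorder E] (μ ν : Measure E) : Prop :=
  ∀ I : Set E, MeasurableSet I → IsUpperSet I → μ I ≤ ν I

/-- A Markov kernel `P` is *(stochastically) monotone* if for every bounded monotone
measurable `g : E → [0,1]` the map `x ↦ ∫ g dP(x)` is again monotone. -/
def MonotoneKernel {E : Type*} [MeasurableSpace E] [Preorder E] (P : Kernel E E) : Prop :=
  ∀ g : E → ℝ, Measurable g → Monotone g → (∀ x, g x ∈ Set.Icc (0 : ℝ) 1) →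
    Monotone fun x => ∫ y, g y ∂(P x)

/-- The `n`-step transition kernel `P⁽ⁿ⁾` of a Markov kernel `P`;
`kpow P n x` is the law of `Xₙˣ`, the chain with kernel `P` started at `x`. -/
noncomputable def kpow {E : Type*} [MeasurableSpace E] (P : Kernel E E) : ℕ → Kernel E E
  | 0 => Kernel.id
  | n + 1 => P.comp (kpow P n)

/-- The process `Z` on `(Ω, μ)` is a (possibly time-inhomogeneous) Markov chain with
one-step kernels `Q n`, expressed through finite-dimensional distributions: for every
bounded measurable cylinder functional `φ` of the past and every Borel set `A`,
`E[φ(Z₀,…,Zₙ) · 1_A(Z_{n+1})] = E[φ(Z₀,…,Zₙ) · (Q n)(Zₙ, A)]`. -/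
def MCStep {Ω S : Type*} [MeasurableSpace Ω] [MeasurableSpace S]
    (μ : Measure Ω) (Q : ℕ → Kernel S S) (Z : ℕ → Ω → S) : Prop :=
  ∀ (n : ℕ) (A : Set S), MeasurableSet A →
    ∀ φ : (Fin (n + 1) → S) → ℝ, Measurable φ → (∀ v, φ v ∈ Set.Icc (0 : ℝ) 1) →
      ∫ ω, φ (fun i => Z i.1 ω) * A.indicator (fun _ => (1 : ℝ)) (Z (n + 1) ω) ∂μ
        = ∫ ω, φ (fun i => Z i.1 ω) * ((Q n) (Z n ω) A).toReal ∂μ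

/-- `X` on `(Ω, μ)` is a time-homogeneous Markov chain with kernel `P` started at `x`. -/
def IsMChain {E Ω : Type*} [MeasurableSpace E] [MeasurableSpace Ω]
    (P : Kernel E E) (x : E) (μ : Measure Ω) (X : ℕ → Ω → E) : Prop :=
  IsProbabilityMeasure μ ∧ (∀ n, Measurable (X n)) ∧ (∀ᵐ ω ∂μ, X 0 ω = x) ∧
    MCStep μ (fun _ => P) X

/-- A *Markovian coupling* of two chains with kernel `P` started at `x` and `y`:
both coordinates are Markov chains with kernel `P` and the pair process is itself a
(possibly time-inhomogeneous) Markov chain. -/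
def IsMarkovianCoupling {E Ω : Type*} [MeasurableSpace E] [MeasurableSpace Ω]
    (P : Kernel E E) (x y : E) (μ : Measure Ω) (X Y : ℕ → Ω → E) : Prop :=
  IsMChain P x μ X ∧ IsMChain P y μ Y ∧
    ∃ Q : ℕ → Kernel (E × E) (E × E), (∀ n, IsMarkovKernel (Q n)) ∧
      MCStep μ Q fun n ω => (X n ω, Y n ω)

/-- A set `H ⊆ E × E` is *achievable* for the kernel `P` if for all `x, y` there is a
Markovian coupling of the chains started at `x` and `y` whose hitting time of `H`
is finite almost surely. -/
def Achievable {E : Type*} [MeasurableSpace E] (P : Kernel E E) (H : Set (E × E)) : Prop :=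
  ∀ x y : E, ∃ (Ω : Type) (_ : MeasurableSpace Ω) (μ : Measure Ω) (X Y : ℕ → Ω → E),
    IsMarkovianCoupling P x y μ X Y ∧ ∀ᵐ ω ∂μ, ∃ n, (X n ω, Y n ω) ∈ H

/-- Condition (BMC): every increasing sequence bounded above by some element converges. -/
def BMC (E : Type*) [Preorder E] [TopologicalSpace E] : Prop :=
  ∀ (x : ℕ → E) (y : E), Monotone x → (∀ n, x n ≤ y) → ∃ l, Tendsto x atTop (nhds l)

/-- The ordered metric space `E` is *normal*: there is a continuous `h : [0,∞) → [0,∞)`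
with `h 0 = 0` such that `x ⪯ y ⪯ z` implies `d(x,y) ≤ h (d(x,z))`. -/
def NormalOrdered (E : Type*) [PseudoMetricSpace E] [Preorder E] : Prop :=
  ∃ h : ℝ → ℝ, ContinuousOn h (Set.Ici 0) ∧ h 0 = 0 ∧ (∀ t ≥ (0 : ℝ), 0 ≤ h t) ∧
    ∀ x y z : E, x ≤ y → y ≤ z → dist x y ≤ h (dist x z)

/-- Condition (PR): there are `x₀ ⪯ y₀` such that the hitting times
`ν⁻ = min {n ≥ 1 : Xₙ^{x₀} ⪰ x₀}` and `ν⁺ = min {n ≥ 1 : Xₙ^{y₀} ⪯ y₀}`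
have finite expectations. -/
def PRCond {E : Type*} [MeasurableSpace E] [Preorder E] (P : Kernel E E) : Prop :=
  ∃ x₀ y₀ : E, x₀ ≤ y₀ ∧
    (∃ (Ω : Type) (_ : MeasurableSpace Ω) (μ : Measure Ω) (X : ℕ → Ω → E),
      IsMChain P x₀ μ X ∧ (∀ᵐ ω ∂μ, ∃ n, 1 ≤ n ∧ x₀ ≤ X n ω) ∧
      Integrable (fun ω => ((sInf {n : ℕ | 1 ≤ n ∧ x₀ ≤ X n ω} : ℕ) : ℝ)) μ) ∧
    (∃ (Ω : Type) (_ : MeasurableSpace Ω) (μ : Measure Ω) (X : ℕ → Ω → E),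
      IsMChain P y₀ μ X ∧ (∀ᵐ ω ∂μ, ∃ n, 1 ≤ n ∧ X n ω ≤ y₀) ∧
      Integrable (fun ω => ((sInf {n : ℕ | 1 ≤ n ∧ X n ω ≤ y₀} : ℕ) : ℝ)) μ)

set_option linter.all false

/-- Positivity of the functional `(f,g) ↦ ∫ f + ∫ g` under Hall's condition. -/
lemma hall_pos {S T : Type*} [TopologicalSpace S] [CompactSpace S] [MeasurableSpace S]
    [BorelSpace S] [TopologicalSpace T] [CompactSpace T] [MeasurableSpace T] [BorelSpace T]
    (α : Measure S) (α' : Measure T) [IsFiniteMeasure α] [IsFiniteMeasure α']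
    (hmass : α Set.univ = α' Set.univ) (R : Set (S × T))
    (hall : ∀ K : Set S, IsClosed K → α K ≤ α' (Prod.snd '' (R ∩ Prod.fst ⁻¹' K)))
    (f : C(S, ℝ)) (g : C(T, ℝ)) (hfg : ∀ z ∈ R, 0 ≤ f z.1 + g z.2) :
    0 ≤ ∫ s, f s ∂α + ∫ t, g t ∂α' := by
  set c : ℝ := ‖f‖ + ‖g‖ with hc
  have hf : ∀ s, 0 ≤ c - f s := fun s => by
    have := (abs_le.1 (f.norm_coe_le_norm s)).2
    have := norm_nonneg g
    linarith
  have hg : ∀ t, 0 ≤ g t + c := fun t => by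
    have := (abs_le.1 (g.norm_coe_le_norm t)).1
    have := norm_nonneg f
    linarith
  have fi : Integrable (fun s => f s) α :=
    (BoundedContinuousFunction.integrable α (BoundedContinuousFunction.mkOfCompact f))
  have gi : Integrable (fun s => g s) α' :=
    (BoundedContinuousFunction.integrable α' (BoundedContinuousFunction.mkOfCompact g))
  have key : ∫⁻ s, ENNReal.ofReal (c - f s) ∂α ≤ ∫⁻ t, ENNReal.ofReal (g t + c) ∂α' := by
    rw [lintegral_eq_lintegral_meas_le α (ae_of_all _ hf)
        ((continuous_const.sub f.continuous).measurable.aemeasurable),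
      lintegral_eq_lintegral_meas_le α' (ae_of_all _ hg)
        ((g.continuous.add continuous_const).measurable.aemeasurable)]
    refine lintegral_mono fun t => ?_
    refine (hall {s | t ≤ c - f s} (isClosed_le continuous_const
      (continuous_const.sub f.continuous))).trans (measure_mono ?_)
    rintro _ ⟨⟨s, u⟩, ⟨hR, hs⟩, rfl⟩
    have := hfg _ hR
    simp only [Set.mem_preimage, Set.mem_ofPred_eq] at hs this ⊢
    linarith
  have e1 : ∫ s, (c - f s) ∂α ≤ ∫ t, (g t + c) ∂α' := by
    rw [integral_eq_lintegral_of_nonneg_ae (ae_of_all _ hf)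
        ((continuous_const.sub f.continuous).measurable.aestronglyMeasurable),
      integral_eq_lintegral_of_nonneg_ae (ae_of_all _ hg)
        ((g.continuous.add continuous_const).measurable.aestronglyMeasurable)]
    refine ENNReal.toReal_mono ?_ key
    have := (gi.add (integrable_const c)).lintegral_lt_top
    exact this.ne
  rw [integral_sub (integrable_const c) fi, integral_add gi (integrable_const c)] at e1
  have : α.real Set.univ = α'.real Set.univ := by simp [measureReal_def, hmass]
  simp only [integral_const, this] at e1
  linarith

lemma lin_section {V W : Type*} [AddCommGroup V] [Module ℝ V] [AddCommGroup W] [Module ℝ W]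
    (F : V →ₗ[ℝ] W) : ∃ g : LinearMap.range F →ₗ[ℝ] V, ∀ q, F (g q) = q := by
  obtain ⟨g, hg⟩ := F.rangeRestrict.exists_rightInverse_of_surjective F.range_rangeRestrict
  refine ⟨g, fun q => ?_⟩
  have := congrArg (fun h => ((h q : LinearMap.range F) : W)) hg
  simpa using this

lemma strassen_compact {S T : Type*} [MetricSpace S] [CompactSpace S] [MeasurableSpace S]
    [BorelSpace S] [MetricSpace T] [CompactSpace T] [MeasurableSpace T] [BorelSpace T]
    (α : Measure S) (α' : Measure T) [IsFiniteMeasure α] [IsFiniteMeasure α']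
    (hmass : α Set.univ = α' Set.univ) (R : Set (S × T)) (hR : IsClosed R)
    (hall : ∀ K : Set S, IsClosed K → α K ≤ α' (Prod.snd '' (R ∩ Prod.fst ⁻¹' K))) :
    ∃ γ : Measure (S × T), IsFiniteMeasure γ ∧ γ.map Prod.fst = α ∧ γ.map Prod.snd = α' ∧
      γ Rᶜ = 0 := by
  rcases R.eq_empty_or_nonempty with rfl | hne
  · have h0 : α Set.univ = 0 := by
      have := hall Set.univ isClosed_univ
      simpa using this
    have h1 : α = 0 := Measure.measure_univ_eq_zero.1 h0
    have h2 : α' = 0 := Measure.measure_univ_eq_zero.1 (hmass ▸ h0)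
    exact ⟨0, inferInstance, by simp [h1], by simp [h2], by simp⟩
  let F : (C(S, ℝ) × C(T, ℝ)) →ₗ[ℝ] C(S × T, ℝ) :=
    { toFun := fun p => ⟨fun z => p.1 z.1 + p.2 z.2, by fun_prop⟩
      map_add' := fun p q => by
        ext z; simp; ring
      map_smul' := fun c p => by
        ext z; simp; ring }
  have fi : ∀ f : C(S, ℝ), Integrable (fun s => f s) α := fun f =>
    (BoundedContinuousFunction.integrable α (BoundedContinuousFunction.mkOfCompact f))
  have gi : ∀ f : C(T, ℝ), Integrable (fun s => f s) α' := fun f =>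
    (BoundedContinuousFunction.integrable α' (BoundedContinuousFunction.mkOfCompact f))
  let l : (C(S, ℝ) × C(T, ℝ)) →ₗ[ℝ] ℝ :=
    { toFun := fun p => ∫ s, p.1 s ∂α + ∫ t, p.2 t ∂α'
      map_add' := fun p q => by
        simp only [Prod.fst_add, Prod.snd_add, ContinuousMap.add_apply]
        rw [integral_add (fi _) (fi _), integral_add (gi _) (gi _)]; ring
      map_smul' := fun c p => by
        simp only [Prod.smul_fst, Prod.smul_snd, ContinuousMap.smul_apply, smul_eq_mul,
          integral_const_mul, RingHom.id_apply]; ring }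
  have hpos : ∀ p, (∀ z ∈ R, 0 ≤ F p z) → 0 ≤ l p := fun p hp =>
    hall_pos α α' hmass R hall p.1 p.2 hp
  obtain ⟨g, hgF⟩ := lin_section F
  have hl : ∀ p q, F p = F q → l p = l q := by
    intro p q h
    have h1 := hpos (p - q) (fun z _ => by rw [map_sub, h]; simp)
    have h2 := hpos (q - p) (fun z _ => by rw [map_sub, h]; simp)
    rw [map_sub] at h1 h2
    linarith
  let s : PointedCone ℝ C(S × T, ℝ) :=
    { carrier := {φ | ∀ z ∈ R, 0 ≤ φ z}
      add_mem' := fun ha hb z hz => add_nonneg (ha z hz) (hb z hz)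
      zero_mem' := fun z _ => le_rfl
      smul_mem' := fun c φ h z hz => mul_nonneg c.2 (h z hz) }
  have hs : ∀ φ, φ ∈ s ↔ ∀ z ∈ R, 0 ≤ φ z := fun φ => Iff.rfl
  obtain ⟨Λ, hΛ1, hΛ2⟩ := riesz_extension s ⟨LinearMap.range F, l ∘ₗ g⟩
    (by
      intro x hx
      refine hpos _ fun z hz => ?_
      rw [hgF]
      exact hx z hz)
    (by
      intro y
      refine ⟨⟨F (ContinuousMap.const S ‖y‖, 0), ⟨_, rfl⟩⟩, ?_⟩
      rw [hs]
      intro z _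
      have := (abs_le.1 (y.norm_coe_le_norm z)).1
      change 0 ≤ (‖y‖ + 0) + y z
      linarith)
  have hΛF : ∀ p, Λ (F p) = l p := fun p => by
    have := hΛ1 ⟨F p, ⟨p, rfl⟩⟩
    refine this.trans ?_
    exact hl _ _ (hgF _)
  let Λc : CompactlySupportedContinuousMap (S × T) ℝ →ₚ[ℝ] ℝ :=
    { toFun := fun φ => Λ φ.toContinuousMap
      map_add' := fun a b => by
        rw [← map_add]; rfl
      map_smul' := fun c a => by
        rw [← map_smul]; rfl
      monotone' := fun a b hab => by
        have := hΛ2 (b.toContinuousMap - a.toContinuousMap) (by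
          rw [hs]; intro z _
          exact sub_nonneg.2 (hab z))
        rw [map_sub] at this
        change Λ _ ≤ Λ _
        linarith }
  have hRint : ∀ φ : C(S × T, ℝ), ∫ z, φ z ∂(RealRMK.rieszMeasure Λc) = Λ φ := fun φ => by
    exact RealRMK.integral_rieszMeasure Λc ⟨φ, HasCompactSupport.of_compactSpace _⟩
  refine ⟨RealRMK.rieszMeasure Λc, inferInstance, ?_, ?_, ?_⟩
  · haveI : IsFiniteMeasure ((RealRMK.rieszMeasure Λc).map Prod.fst) := inferInstance
    refine ext_of_forall_integral_eq_of_IsFiniteMeasure fun f => ?_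
    rw [integral_map measurable_fst.aemeasurable f.continuous.measurable.aestronglyMeasurable]
    have := hRint (F (f.toContinuousMap, 0))
    rw [hΛF] at this
    simpa [F, l] using this
  · haveI : IsFiniteMeasure ((RealRMK.rieszMeasure Λc).map Prod.snd) := inferInstance
    refine ext_of_forall_integral_eq_of_IsFiniteMeasure fun f => ?_
    rw [integral_map measurable_snd.aemeasurable f.continuous.measurable.aestronglyMeasurable]
    have := hRint (F (0, f.toContinuousMap))
    rw [hΛF] at this
    simpa [F, l] using this
  · let h : C(S × T, ℝ) := ⟨fun z => Metric.infDist z R, Metric.continuous_infDist_pt R⟩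
    have hz : ∀ z ∈ R, h z = 0 := fun z hz => Metric.infDist_zero_of_mem hz
    have h0 : ∫ z, h z ∂(RealRMK.rieszMeasure Λc) = 0 := by
      rw [hRint]
      have h1 := hΛ2 h (fun z hzR => (hz z hzR).ge)
      have h2 := hΛ2 (-h) (fun z hzR => by simp [hz z hzR])
      rw [map_neg] at h2
      linarith
    have hi : Integrable (fun z => h z) (RealRMK.rieszMeasure Λc) :=
      (BoundedContinuousFunction.integrable _ (BoundedContinuousFunction.mkOfCompact h))
    replace h0 := (integral_eq_zero_iff_of_nonneg (f := fun z => h z)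
      (fun z => Metric.infDist_nonneg) hi).1 h0
    refine measure_mono_null ?_ (ae_iff.1 h0)
    intro z hzR
    simp only [Set.mem_ofPred_eq]
    intro hcon
    exact hzR ((hR.mem_iff_infDist_zero hne).2 hcon)

lemma strassen {S T : Type*} [TopologicalSpace S] [PolishSpace S] [MeasurableSpace S]
    [BorelSpace S] [TopologicalSpace T] [PolishSpace T] [MeasurableSpace T] [BorelSpace T]
    (α : Measure S) (α' : Measure T) [IsFiniteMeasure α] [IsFiniteMeasure α']
    (hmass : α Set.univ = α' Set.univ) (R : Set (S × T)) (hR : IsClosed R)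
    (hall : ∀ K : Set S, IsCompact K → α K ≤ α' (Prod.snd '' (R ∩ Prod.fst ⁻¹' K))) :
    ∃ γ : Measure (S × T), IsFiniteMeasure γ ∧ γ.map Prod.fst = α ∧ γ.map Prod.snd = α' ∧
      γ Rᶜ = 0 := by
  let := TopologicalSpace.upgradeIsCompletelyMetrizable S
  let := TopologicalSpace.upgradeIsCompletelyMetrizable T
  obtain ⟨i, hi⟩ := Metric.PiNatEmbed.exists_embedding_to_hilbert_cube (X := S)
  obtain ⟨j, hj⟩ := Metric.PiNatEmbed.exists_embedding_to_hilbert_cube (X := T)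
  let : MetricSpace (ℕ → unitInterval) := TopologicalSpace.metrizableSpaceMetric _
  have him := hi.continuous.measurableEmbedding hi.injective
  have hjm := hj.continuous.measurableEmbedding hj.injective
  set Rb := closure (Prod.map i j '' R) with hRb
  obtain ⟨γ, hγf, hγ1, hγ2, hγR⟩ := strassen_compact (α.map i) (α'.map j) (by
      rw [Measure.map_apply him.measurable .univ, Measure.map_apply hjm.measurable .univ]
      simpa using hmass) Rb isClosed_closure (by
    intro L hL
    rw [him.map_apply, hjm.map_apply]
    have hLm : MeasurableSet (i ⁻¹' L) := (hL.preimage hi.continuous).measurableSet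
    rw [(innerRegular_isCompact_isClosed_measurableSet_of_finite α).measure_eq_iSup hLm]
    refine iSup₂_le fun K hKL => iSup_le fun hK => (hall K hK.1).trans (measure_mono ?_)
    rintro _ ⟨⟨s, t⟩, ⟨hst, hsK⟩, rfl⟩
    exact ⟨(i s, j t), ⟨subset_closure ⟨(s, t), hst, rfl⟩, hKL hsK⟩, rfl⟩)
  have hij : IsEmbedding (Prod.map i j) := hi.prodMap hj
  have hijm : MeasurableEmbedding (Prod.map i j) :=
    hij.continuous.measurableEmbedding hij.injective
  have hrange : γ (Set.range (Prod.map i j))ᶜ = 0 := by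
    have h1 : γ (Prod.fst ⁻¹' (Set.range i)ᶜ) = 0 := by
      rw [← Measure.map_apply measurable_fst him.measurableSet_range.compl, hγ1, him.map_apply]
      simp
    have h2 : γ (Prod.snd ⁻¹' (Set.range j)ᶜ) = 0 := by
      rw [← Measure.map_apply measurable_snd hjm.measurableSet_range.compl, hγ2, hjm.map_apply]
      simp
    refine measure_mono_null ?_ (measure_union_null h1 h2)
    rintro ⟨a, b⟩ hab
    by_contra hcon
    simp only [Set.mem_union, Set.mem_preimage, Set.mem_compl_iff, not_or, not_not] at hcon
    obtain ⟨⟨a', rfl⟩, ⟨b', rfl⟩⟩ := hcon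
    exact hab ⟨(a', b'), rfl⟩
  set γ' := γ.comap (Prod.map i j) with hγ'
  have hmap : γ'.map (Prod.map i j) = γ := by
    rw [hγ', hijm.map_comap]
    exact Measure.restrict_eq_self_of_ae_mem (by rw [ae_iff]; exact hrange)
  have hfin : IsFiniteMeasure γ' := ⟨by
    rw [hγ', hijm.comap_apply]; exact measure_lt_top _ _⟩
  refine ⟨γ', hfin, ?_, ?_, ?_⟩
  · rw [← him.comap_map (γ'.map Prod.fst), ← him.comap_map α, ← hγ1, ← hmap,
      Measure.map_map him.measurable measurable_fst,
      Measure.map_map measurable_fst hijm.measurable]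
    rfl
  · rw [← hjm.comap_map (γ'.map Prod.snd), ← hjm.comap_map α', ← hγ2, ← hmap,
      Measure.map_map hjm.measurable measurable_snd,
      Measure.map_map measurable_snd hijm.measurable]
    rfl
  · rw [hγ', hijm.comap_apply]
    refine measure_mono_null ?_ hγR
    rintro _ ⟨z, hz, rfl⟩ hcl
    have : z ∈ Prod.map i j ⁻¹' closure (Prod.map i j '' R) := hcl
    rw [← hij.closure_eq_preimage_closure_image, hR.closure_eq] at this
    exact hz this

lemma closed_section {S T : Type*} [TopologicalSpace S] [TopologicalSpace T]
    (R : Set (S × T)) (hR : IsClosed R) (K : Set S) (hK : IsCompact K) :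
    IsClosed (Prod.snd '' (R ∩ Prod.fst ⁻¹' K)) := by
  have : CompactSpace K := isCompact_iff_compactSpace.1 hK
  have h1 : IsClosed ((fun p : K × T => ((p.1 : S), p.2)) ⁻¹' R) :=
    hR.preimage (by fun_prop)
  have h2 := isClosedMap_snd_of_compactSpace _ h1
  convert h2 using 1
  ext t
  constructor
  · rintro ⟨⟨s, t⟩, ⟨h, hk⟩, rfl⟩
    exact ⟨(⟨s, hk⟩, t), h, rfl⟩
  · rintro ⟨⟨⟨s, hs⟩, t⟩, h, rfl⟩
    exact ⟨(s, t), ⟨h, hs⟩, rfl⟩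

/-- The order relation as a set. -/
def MM (E : Type*) [LE E] : Set (E × E) := {p | p.1 ≤ p.2}

section
variable {E : Type*} [MetricSpace E] [PolishSpace E] [MeasurableSpace E] [BorelSpace E]
    [PartialOrder E] [OrderClosedTopology E]

lemma isClosed_MM : IsClosed (MM E) := isClosed_le continuous_fst continuous_snd

lemma measurableSet_MM : MeasurableSet (MM E) := isClosed_MM.measurableSet

lemma up_closed (K : Set E) (hK : IsCompact K) :
    IsClosed {y : E | ∃ x ∈ K, x ≤ y} := by
  have := closed_section (MM E) isClosed_MM K hK
  convert this using 1
  ext y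
  constructor
  · rintro ⟨x, hx, hxy⟩
    exact ⟨(x, y), ⟨hxy, hx⟩, rfl⟩
  · rintro ⟨⟨x, y⟩, ⟨hxy, hx⟩, rfl⟩
    exact ⟨x, hx, hxy⟩

lemma upper_defect (α α' : Measure E) [IsFiniteMeasure α] :
    ∃ d : ENNReal, d ≠ ⊤ ∧ (∀ I, MeasurableSet I → IsUpperSet I → α I ≤ α' I + d) ∧
      ∀ η : ENNReal, η ≠ 0 → ∃ I, MeasurableSet I ∧ IsUpperSet I ∧ d + α' I ≤ α I + η := by
  classical
  set d : ENNReal := ⨆ (I : {I : Set E // MeasurableSet I ∧ IsUpperSet I}), α I.1 - α' I.1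
  have hd : d ≤ α Set.univ := iSup_le fun I => tsub_le_self.trans (measure_mono (Set.subset_univ _))
  have hdt : d ≠ ⊤ := (hd.trans_lt (measure_lt_top _ _)).ne
  refine ⟨d, hdt, fun I hI hu => ?_, fun η hη => ?_⟩
  · have : α I - α' I ≤ d := le_iSup (fun I : {I : Set E // MeasurableSet I ∧ IsUpperSet I} =>
      α I.1 - α' I.1) ⟨I, hI, hu⟩
    rw [add_comm]
    exact tsub_le_iff_right.1 this
  · by_cases h0 : d = 0
    · exact ⟨∅, .empty, isUpperSet_empty, by simp [h0]⟩
    · have h1 : d - η < d := ENNReal.sub_lt_self hdt h0 hη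
      obtain ⟨⟨I, hI, hu⟩, h2⟩ := lt_iSup_iff.1 h1
      refine ⟨I, hI, hu, ?_⟩
      have h3 : α' I < α I := by
        by_contra hcon
        rw [tsub_eq_zero_of_le (not_lt.1 hcon)] at h2
        exact absurd h2 (by simp)
      have h4 : d ≤ (α I - α' I) + η := tsub_le_iff_right.1 h2.le
      calc d + α' I ≤ (α I - α' I) + η + α' I := by gcongr
        _ = (α I - α' I) + α' I + η := by ring
        _ = α I + η := by rw [tsub_add_cancel_of_le h3.le]

lemma greedy_step (α α' : Measure E) [IsFiniteMeasure α] [IsFiniteMeasure α']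
    (hmass : α Set.univ = α' Set.univ) :
    ∃ (s : Measure (E × E)) (ν ν' : Measure E), s (MM E)ᶜ = 0 ∧ α = s.map Prod.fst + ν ∧
      α' = s.map Prod.snd + ν' ∧
      ∀ η : ENNReal, η ≠ 0 → ∃ I, MeasurableSet I ∧ IsUpperSet I ∧
        ν Set.univ + α' I ≤ α I + η := by
  classical
  rcases isEmpty_or_nonempty E with hE | ⟨⟨x0⟩⟩
  · refine ⟨0, α, α', by simp, by simp, by simp, fun η _ => ⟨∅, .empty, isUpperSet_empty, ?_⟩⟩
    rw [Set.univ_eq_empty_iff.2 hE]; simp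
  obtain ⟨d, hdt, hd1, hd2⟩ := upper_defect α α'
  set em : E → E × Bool := fun x => (x, false) with hem
  have hemm : Measurable em := by fun_prop
  set β : Measure (E × Bool) := α.map em + d • Measure.dirac (x0, true) with hβ
  set β' : Measure (E × Bool) := α'.map em + d • Measure.dirac (x0, true) with hβ'
  have fβ : IsFiniteMeasure β := ⟨by
    simp only [hβ, Measure.add_apply, Measure.smul_apply, smul_eq_mul, measure_univ, mul_one]
    exact ENNReal.add_lt_top.2 ⟨measure_lt_top _ _, hdt.lt_top⟩⟩
  have fβ' : IsFiniteMeasure β' := ⟨by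
    simp only [hβ', Measure.add_apply, Measure.smul_apply, smul_eq_mul, measure_univ, mul_one]
    exact ENNReal.add_lt_top.2 ⟨measure_lt_top _ _, hdt.lt_top⟩⟩
  set R : Set ((E × Bool) × (E × Bool)) :=
    {z | z.1.2 = true ∨ z.2.2 = true ∨ z.1.1 ≤ z.2.1} with hRdef
  have hR : IsClosed R := by
    refine IsClosed.union ?_ (IsClosed.union ?_ ?_)
    · exact isClosed_eq (by fun_prop) (by fun_prop)
    · exact isClosed_eq (by fun_prop) (by fun_prop)
    · exact isClosed_le (by fun_prop) (by fun_prop)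
  have hmβ : β Set.univ = β' Set.univ := by
    simp only [hβ, hβ', Measure.add_apply, Measure.map_apply hemm .univ, Set.preimage_univ, hmass]
  obtain ⟨γ, fγ, hγ1, hγ2, hγR⟩ := strassen β β' hmβ R hR (by
    intro K hK
    set RK := Prod.snd '' (R ∩ Prod.fst ⁻¹' K) with hRK
    have hRKm : MeasurableSet RK := (closed_section R hR K hK).measurableSet
    by_cases hKt : ∃ p ∈ K, p.2 = true
    · obtain ⟨p, hp, hpt⟩ := hKt
      have : RK = Set.univ := by
        refine Set.eq_univ_of_forall fun q => ⟨(p, q), ⟨Or.inl hpt, hp⟩, rfl⟩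
      rw [this, ← hmβ]
      exact measure_mono (Set.subset_univ _)
    rcases K.eq_empty_or_nonempty with rfl | ⟨q0, hq0⟩
    · simp
    have hK0c : IsCompact (Prod.fst '' K) := hK.image continuous_fst
    have hKm : MeasurableSet K := hK.isClosed.measurableSet
    have hU := up_closed _ hK0c
    set U := {y : E | ∃ x ∈ Prod.fst '' K, x ≤ y} with hUdef
    have hUu : IsUpperSet U := by
      rintro a b hab ⟨x, hx, hxa⟩
      exact ⟨x, hx, hxa.trans hab⟩
    have e1 : β K = α (em ⁻¹' K) := by
      simp only [hβ, Measure.add_apply, Measure.map_apply hemm hKm, Measure.smul_apply,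
        Measure.dirac_apply' _ hKm]
      have : (x0, true) ∉ K := fun h => hKt ⟨_, h, rfl⟩
      simp [this]
    have e2 : α' U + d ≤ β' RK := by
      simp only [hβ', Measure.add_apply, Measure.map_apply hemm hRKm, Measure.smul_apply,
        Measure.dirac_apply' _ hRKm]
      have : (x0, true) ∈ RK := ⟨(q0, (x0, true)), ⟨Or.inr (Or.inl rfl), hq0⟩, rfl⟩
      simp only [this, Set.indicator_of_mem, Pi.one_apply, smul_eq_mul, mul_one]
      gcongr
      rintro y ⟨_, ⟨p, hp, rfl⟩, hpy⟩
      exact ⟨(p, (y, false)), ⟨Or.inr (Or.inr hpy), hp⟩, rfl⟩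
    rw [e1]
    refine le_trans ?_ ((hd1 U hU.measurableSet hUu).trans e2)
    refine measure_mono fun x hx => ⟨x, ⟨_, hx, rfl⟩, le_rfl⟩)
  set FF : Set ((E × Bool) × (E × Bool)) := {z | z.1.2 = false ∧ z.2.2 = false} with hFF
  set FT : Set ((E × Bool) × (E × Bool)) := {z | z.1.2 = false ∧ z.2.2 = true} with hFT
  set TF : Set ((E × Bool) × (E × Bool)) := {z | z.1.2 = true ∧ z.2.2 = false} with hTF
  have m1 : MeasurableSet {z : (E × Bool) × (E × Bool) | z.1.2 = false} :=
    measurableSet_eq_fun (by fun_prop) (by fun_prop)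
  have m2 : MeasurableSet {z : (E × Bool) × (E × Bool) | z.2.2 = false} :=
    measurableSet_eq_fun (by fun_prop) (by fun_prop)
  have m3 : MeasurableSet {z : (E × Bool) × (E × Bool) | z.1.2 = true} :=
    measurableSet_eq_fun (by fun_prop) (by fun_prop)
  have m4 : MeasurableSet {z : (E × Bool) × (E × Bool) | z.2.2 = true} :=
    measurableSet_eq_fun (by fun_prop) (by fun_prop)
  have mFF : MeasurableSet FF := m1.inter m2
  have mFT : MeasurableSet FT := m1.inter m4
  have mTF : MeasurableSet TF := m3.inter m2
  have mm : Measurable (fun z : (E × Bool) × (E × Bool) => (z.1.1, z.2.1)) := by fun_prop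
  have mp1 : Measurable (fun z : (E × Bool) × (E × Bool) => z.1.1) := by fun_prop
  have mp2 : Measurable (fun z : (E × Bool) × (E × Bool) => z.2.1) := by fun_prop
  refine ⟨(γ.restrict FF).map (fun z => (z.1.1, z.2.1)), (γ.restrict FT).map (fun z => z.1.1),
    (γ.restrict TF).map (fun z => z.2.1), ?_, ?_, ?_, ?_⟩
  · rw [Measure.map_apply mm measurableSet_MM.compl, Measure.restrict_apply
      (mm measurableSet_MM.compl)]
    refine measure_mono_null ?_ hγR
    rintro ⟨⟨x, i⟩, ⟨y, j⟩⟩ ⟨h1, h2, h3⟩ h4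
    simp only at h2 h3
    subst h2 h3
    simp [hRdef] at h4
    exact h1 h4
  · ext A hA
    have hA' : MeasurableSet (A ×ˢ ({false} : Set Bool)) := hA.prod (measurableSet_singleton _)
    have : α A = β (A ×ˢ {false}) := by
      simp only [hβ, Measure.add_apply, Measure.map_apply hemm hA', Measure.smul_apply,
        Measure.dirac_apply' _ hA']
      simp [hem, Set.preimage]
    rw [this, ← hγ1, Measure.map_apply measurable_fst hA', Measure.add_apply,
      Measure.map_map measurable_fst mm, Measure.map_apply (measurable_fst.comp mm) hA,
      Measure.map_apply mp1 hA, Measure.restrict_apply (measurable_fst.comp mm hA),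
      Measure.restrict_apply (mp1 hA), ← measure_union _ ((mp1 hA).inter mFT)]
    · congr 1
      ext ⟨⟨x, i⟩, ⟨y, j⟩⟩
      cases i <;> cases j <;> simp [hFF, hFT]
    · rw [Set.disjoint_left]
      rintro ⟨⟨x, i⟩, ⟨y, j⟩⟩ ⟨_, h1⟩ ⟨_, h2⟩
      simp [hFF, hFT] at h1 h2
      simp [h1.2] at h2
  · ext A hA
    have hA' : MeasurableSet (A ×ˢ ({false} : Set Bool)) := hA.prod (measurableSet_singleton _)
    have : α' A = β' (A ×ˢ {false}) := by
      simp only [hβ', Measure.add_apply, Measure.map_apply hemm hA', Measure.smul_apply,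
        Measure.dirac_apply' _ hA']
      simp [hem, Set.preimage]
    rw [this, ← hγ2, Measure.map_apply measurable_snd hA', Measure.add_apply,
      Measure.map_map measurable_snd mm, Measure.map_apply (measurable_snd.comp mm) hA,
      Measure.map_apply mp2 hA, Measure.restrict_apply (measurable_snd.comp mm hA),
      Measure.restrict_apply (mp2 hA), ← measure_union _ ((mp2 hA).inter mTF)]
    · congr 1
      ext ⟨⟨x, i⟩, ⟨y, j⟩⟩
      cases i <;> cases j <;> simp [hFF, hTF]
    · rw [Set.disjoint_left]
      rintro ⟨⟨x, i⟩, ⟨y, j⟩⟩ ⟨_, h1⟩ ⟨_, h2⟩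
      simp [hFF, hTF] at h1 h2
      simp [h1.1] at h2
  · intro η hη
    obtain ⟨I, hI, hu, h⟩ := hd2 η hη
    refine ⟨I, hI, hu, le_trans ?_ h⟩
    gcongr
    rw [Measure.map_apply mp1 .univ, Set.preimage_univ, Measure.restrict_apply_univ]
    have hT : MeasurableSet ((Set.univ : Set E) ×ˢ ({true} : Set Bool)) :=
      MeasurableSet.univ.prod (measurableSet_singleton _)
    calc γ FT ≤ γ (Prod.snd ⁻¹' (Set.univ ×ˢ {true})) := measure_mono (by
            rintro ⟨⟨x, i⟩, ⟨y, j⟩⟩ ⟨h1, h2⟩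
            simpa using h2)
      _ = β' (Set.univ ×ˢ {true}) := by rw [← hγ2, Measure.map_apply measurable_snd hT]
      _ = d := by
        simp only [hβ', Measure.add_apply, Measure.map_apply hemm hT, Measure.smul_apply,
          Measure.dirac_apply' _ hT]
        simp [hem, Set.preimage]

lemma meas_MM_mono (t : Measure (E × E)) (ht : t (MM E)ᶜ = 0) (I : Set E)
    (hI : MeasurableSet I) (hu : IsUpperSet I) : t.map Prod.fst I ≤ t.map Prod.snd I := by
  rw [Measure.map_apply measurable_fst hI, Measure.map_apply measurable_snd hI]
  refine measure_mono_ae ?_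
  have : ∀ᵐ z ∂t, z ∈ MM E := by rw [ae_iff]; exact ht
  filter_upwards [this] with z hz h1
  exact hu hz h1

lemma nosub (s : Measure (E × E)) (ν ν' α α' : Measure E) [IsFiniteMeasure α]
    [IsFiniteMeasure α'] (hs : s (MM E)ᶜ = 0) (hα : α = s.map Prod.fst + ν)
    (hα' : α' = s.map Prod.snd + ν')
    (hopt : ∀ η : ENNReal, η ≠ 0 → ∃ I, MeasurableSet I ∧ IsUpperSet I ∧
        ν Set.univ + α' I ≤ α I + η)
    (t : Measure (E × E)) (ht : t (MM E)ᶜ = 0) (h1 : t.map Prod.fst ≤ ν)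
    (h2 : t.map Prod.snd ≤ ν') : t = 0 := by
  rw [← Measure.measure_univ_eq_zero]
  by_contra hη
  have hη2 : t Set.univ / 2 ≠ 0 := by simpa using hη
  obtain ⟨I, hI, hu, h⟩ := hopt _ hη2
  have fνu : ν Set.univ ≠ ⊤ := by
    have : ν Set.univ ≤ α Set.univ := by rw [hα]; simp
    exact (this.trans_lt (measure_lt_top _ _)).ne
  have fs : s.map Prod.snd I ≠ ⊤ := by
    have : s.map Prod.snd I ≤ α' I := by rw [hα']; simp
    exact (this.trans_lt (measure_lt_top _ _)).ne
  have ftu : t Set.univ ≠ ⊤ := by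
    have := h1 Set.univ
    rw [Measure.map_apply measurable_fst .univ, Set.preimage_univ] at this
    exact (this.trans_lt fνu.lt_top).ne
  have a1 : ν I + t.map Prod.fst Iᶜ ≤ ν Set.univ := by
    rw [← measure_add_measure_compl hI]; gcongr
  have a2 : t.map Prod.fst I ≤ ν' I := (meas_MM_mono t ht I hI hu).trans (h2 I)
  have a3 := meas_MM_mono s hs I hI hu
  have a4 : t.map Prod.fst I + t.map Prod.fst Iᶜ = t Set.univ := by
    rw [measure_add_measure_compl hI, Measure.map_apply measurable_fst .univ, Set.preimage_univ]
  have key : (ν Set.univ + s.map Prod.snd I) + t Set.univ ≤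
      (ν Set.univ + s.map Prod.snd I) + t Set.univ / 2 := by
    calc (ν Set.univ + s.map Prod.snd I) + t Set.univ
        = ν Set.univ + (s.map Prod.snd I + t.map Prod.fst I) + t.map Prod.fst Iᶜ := by
          rw [← a4]; ring
      _ ≤ ν Set.univ + α' I + t.map Prod.fst Iᶜ := by
          rw [hα', Measure.add_apply]; gcongr
      _ ≤ α I + t Set.univ / 2 + t.map Prod.fst Iᶜ := by gcongr
      _ = s.map Prod.fst I + (ν I + t.map Prod.fst Iᶜ) + t Set.univ / 2 := by
          rw [hα, Measure.add_apply]; ring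
      _ ≤ s.map Prod.snd I + ν Set.univ + t Set.univ / 2 := by gcongr
      _ = _ := by ring
  have := (ENNReal.add_le_add_iff_left (ENNReal.add_ne_top.2 ⟨fνu, fs⟩)).1 key
  exact absurd this (not_le.2 (ENNReal.half_lt_self hη ftu))

lemma cond_strassen (P : Kernel E E) [IsMarkovKernel P]
    (hP : ∀ x y, x ≤ y → ∀ I, MeasurableSet I → IsUpperSet I → P x I ≤ P y I)
    (π : Measure (E × E)) [IsFiniteMeasure π] (hπ : π (MM E)ᶜ = 0) :
    ∃ K : Kernel (E × E) (E × E), IsMarkovKernel K ∧ ∀ᵐ z ∂π, K z (MM E)ᶜ = 0 ∧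
      (K z).map Prod.fst = P z.1 ∧ (K z).map Prod.snd = P z.2 := by
  rcases isEmpty_or_nonempty E with hE | hE
  · exact ⟨Kernel.id, inferInstance, ae_of_all _ fun z => (hE.false z.1).elim⟩
  have hMae : ∀ᵐ z ∂π, z ∈ MM E := by rw [ae_iff]; exact hπ
  set P1 : Kernel (E × E) E := P.comap Prod.fst measurable_fst with hP1
  set P2 : Kernel (E × E) E := P.comap Prod.snd measurable_snd with hP2
  set R : Set (((E × E) × E) × ((E × E) × E)) := {w | w.1.1 = w.2.1 ∧ w.1.2 ≤ w.2.2} with hRd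
  have hR : IsClosed R :=
    (isClosed_eq (by fun_prop) (by fun_prop)).inter (isClosed_le (by fun_prop) (by fun_prop))
  obtain ⟨γ, fγ, hγ1, hγ2, hγR⟩ := strassen (π ⊗ₘ P1) (π ⊗ₘ P2) (by
      rw [Measure.compProd_apply .univ, Measure.compProd_apply .univ]; simp) R hR (by
    intro K hK
    have hKm : MeasurableSet K := hK.isClosed.measurableSet
    have hRKm := (closed_section R hR K hK).measurableSet
    rw [Measure.compProd_apply hKm, Measure.compProd_apply hRKm]
    refine lintegral_mono_ae ?_
    filter_upwards [hMae] with z hz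
    have hKz : IsCompact (Prod.mk z ⁻¹' K) := by
      have : Prod.mk z ⁻¹' K = Prod.snd '' (K ∩ Prod.fst ⁻¹' {z}) := by
        ext x; constructor
        · intro h; exact ⟨(z, x), ⟨h, rfl⟩, rfl⟩
        · rintro ⟨⟨a, b⟩, ⟨h, h'⟩, rfl⟩
          obtain rfl : a = z := h'
          exact h
      rw [this]
      exact (hK.inter_right (isClosed_singleton.preimage continuous_fst)).image continuous_snd
    have hU := up_closed _ hKz
    have hUu : IsUpperSet {y : E | ∃ x ∈ Prod.mk z ⁻¹' K, x ≤ y} := by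
      rintro a b hab ⟨x, hx, hxa⟩
      exact ⟨x, hx, hxa.trans hab⟩
    have h1 := hP z.1 z.2 hz _ hU.measurableSet hUu
    rw [hP1, hP2, Kernel.comap_apply, Kernel.comap_apply]
    refine (measure_mono fun x hx => ?_).trans (h1.trans (measure_mono ?_))
    · exact ⟨x, hx, le_rfl⟩
    · rintro y ⟨x, hx, hxy⟩
      exact ⟨((z, x), (z, y)), ⟨⟨rfl, hxy⟩, hx⟩, rfl⟩)
  have mf : Measurable (fun w : ((E × E) × E) × ((E × E) × E) => (w.1.1, (w.1.2, w.2.2))) := by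
    fun_prop
  set γ2 : Measure ((E × E) × (E × E)) := γ.map (fun w => (w.1.1, (w.1.2, w.2.2))) with hγ2d
  have hRae : ∀ᵐ w ∂γ, w ∈ R := by rw [ae_iff]; exact hγR
  have hfst : γ2.fst = π := by
    rw [Measure.fst, hγ2d, Measure.map_map measurable_fst mf]
    have : (Prod.fst ∘ fun w : ((E × E) × E) × ((E × E) × E) => (w.1.1, (w.1.2, w.2.2)))
        = Prod.fst ∘ Prod.fst := rfl
    rw [this, ← Measure.map_map measurable_fst measurable_fst, hγ1]
    exact Measure.fst_compProd π P1
  have hdis := γ2.disintegrate γ2.condKernel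
  rw [hfst] at hdis
  have g1 : π ⊗ₘ (γ2.condKernel.map Prod.fst) = π ⊗ₘ P1 := by
    rw [Measure.compProd_map measurable_fst, hdis, hγ2d, Measure.map_map (by fun_prop) mf, ← hγ1]
    rfl
  have g2 : π ⊗ₘ (γ2.condKernel.map Prod.snd) = π ⊗ₘ P2 := by
    rw [Measure.compProd_map measurable_snd, hdis, hγ2d, Measure.map_map (by fun_prop) mf, ← hγ2]
    refine Measure.map_congr ?_
    filter_upwards [hRae] with w hw
    exact Prod.ext hw.1 rfl
  have g3 : ∀ᵐ z ∂π, γ2.condKernel z (MM E)ᶜ = 0 := by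
    have h0 : γ2 (Set.univ ×ˢ (MM E)ᶜ) = 0 := by
      rw [hγ2d, Measure.map_apply mf (MeasurableSet.univ.prod measurableSet_MM.compl)]
      refine measure_mono_null ?_ hγR
      rintro w ⟨_, hw⟩ h
      exact hw h.2
    rw [← hdis, Measure.compProd_apply (MeasurableSet.univ.prod measurableSet_MM.compl)] at h0
    rw [lintegral_eq_zero_iff (Kernel.measurable_kernel_prodMk_left
      (MeasurableSet.univ.prod measurableSet_MM.compl))] at h0
    filter_upwards [h0] with z hz
    simpa using hz
  refine ⟨γ2.condKernel, inferInstance, ?_⟩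
  filter_upwards [g3, Kernel.ae_eq_of_compProd_eq g1, Kernel.ae_eq_of_compProd_eq g2]
    with z h1 h2 h3
  refine ⟨h1, ?_, ?_⟩
  · rw [← Kernel.map_apply _ measurable_fst, h2, hP1, Kernel.comap_apply]
  · rw [← Kernel.map_apply _ measurable_snd, h3, hP2, Kernel.comap_apply]
end

section
variable {E : Type*} [MeasurableSpace E]

instance kpow_markov (P : Kernel E E) [IsMarkovKernel P] (n : ℕ) : IsMarkovKernel (kpow P n) := by
  induction n with
  | zero => unfold kpow; infer_instance
  | succ n ih => unfold kpow; infer_instance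

lemma kpow_succ (P : Kernel E E) (n : ℕ) : kpow P (n + 1) = P.comp (kpow P n) := rfl

lemma kpow_zero (P : Kernel E E) : kpow P 0 = Kernel.id := rfl

lemma kpow_add (P : Kernel E E) (m n : ℕ) :
    kpow P (m + n) = (kpow P m).comp (kpow P n) := by
  induction m with
  | zero => rw [Nat.zero_add, kpow_zero, Kernel.id_comp]
  | succ m ih => rw [Nat.succ_add, kpow_succ, ih, kpow_succ, Kernel.comp_assoc]

lemma kpow_one (P : Kernel E E) : kpow P 1 = P := by
  rw [kpow_succ, kpow_zero, Kernel.comp_id]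

lemma kpow_add_apply (P : Kernel E E) (m n : ℕ) (x : E) (I : Set E) (hI : MeasurableSet I) :
    kpow P (m + n) x I = ∫⁻ z, kpow P m z I ∂(kpow P n x) := by
  rw [kpow_add, Kernel.comp_apply' _ _ _ hI]

lemma kpow_succ_apply (P : Kernel E E) (m : ℕ) (x : E) (I : Set E) (hI : MeasurableSet I) :
    kpow P (m + 1) x I = ∫⁻ z, kpow P m z I ∂(P x) := by
  rw [kpow_add_apply P m 1 x I hI, kpow_one]

lemma kpow_mono [PartialOrder E] (P : Kernel E E) [IsMarkovKernel P] (hmono : MonotoneKernel P)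
    (n : ℕ) : ∀ x y, x ≤ y → ∀ I, MeasurableSet I → IsUpperSet I → kpow P n x I ≤ kpow P n y I := by
  induction n with
  | zero =>
    intro x y hxy I hI hu
    rw [kpow_zero, Kernel.id_apply, Kernel.id_apply, Measure.dirac_apply' _ hI,
      Measure.dirac_apply' _ hI]
    by_cases hx : x ∈ I
    · simp [hx, hu hxy hx]
    · simp [hx]
  | succ n ih =>
    intro x y hxy I hI hu
    have hg : Measurable fun z => kpow P n z I := Kernel.measurable_coe _ hI
    have h := hmono (fun z => (kpow P n z I).toReal) hg.ennreal_toReal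
      (fun a b hab => ENNReal.toReal_mono (measure_ne_top _ _) (ih a b hab I hI hu))
      (fun z => ⟨ENNReal.toReal_nonneg, by
        rw [← ENNReal.toReal_one]
        exact ENNReal.toReal_mono ENNReal.one_ne_top prob_le_one⟩) hxy
    simp only at h
    rw [integral_toReal hg.aemeasurable (ae_of_all _ fun z => measure_lt_top _ _),
      integral_toReal hg.aemeasurable (ae_of_all _ fun z => measure_lt_top _ _),
      ← kpow_succ_apply P n x I hI, ← kpow_succ_apply P n y I hI,
      ENNReal.toReal_le_toReal (measure_ne_top _ _) (measure_ne_top _ _)] at h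
    exact h

lemma ker_mono [PartialOrder E] (P : Kernel E E) [IsMarkovKernel P] (hmono : MonotoneKernel P) :
    ∀ x y, x ≤ y → ∀ I, MeasurableSet I → IsUpperSet I → P x I ≤ P y I := by
  have := kpow_mono P hmono 1
  rwa [kpow_one] at this

lemma mcstep_set {Ω : Type*} [MeasurableSpace Ω] (μ : Measure Ω) [IsFiniteMeasure μ]
    (Q : ℕ → Kernel E E) [∀ n, IsMarkovKernel (Q n)] (Z : ℕ → Ω → E) (hZ : ∀ n, Measurable (Z n))
    (h : MCStep μ Q Z) (n : ℕ) (G : Set (Fin (n + 1) → E)) (hG : MeasurableSet G) :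
    (μ.restrict {ω | (fun i : Fin (n + 1) => Z i.1 ω) ∈ G}).map (Z (n + 1)) =
      ((μ.restrict {ω | (fun i : Fin (n + 1) => Z i.1 ω) ∈ G}).map (Z n)).bind (Q n) := by
  have hZv : Measurable fun ω => (fun i : Fin (n + 1) => Z i.1 ω) :=
    measurable_pi_lambda _ fun i => hZ _
  set D := {ω | (fun i : Fin (n + 1) => Z i.1 ω) ∈ G} with hD
  have hDm : MeasurableSet D := hZv hG
  ext A hA
  have h1 := h n A hA (G.indicator fun _ => 1) (measurable_const.indicator hG) (fun v => by
    by_cases hv : v ∈ G <;> simp [hv])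
  have hQm : Measurable fun z => Q n z A := Kernel.measurable_coe _ hA
  rw [Measure.map_apply (hZ _) hA, Measure.bind_apply hA (Q n).measurable.aemeasurable,
    lintegral_map hQm (hZ n), Measure.restrict_apply (hZ _ hA)]
  have e1 : ∫ ω, (G.indicator (fun _ => (1:ℝ)) fun i : Fin (n + 1) => Z i.1 ω) *
      A.indicator (fun _ => (1 : ℝ)) (Z (n + 1) ω) ∂μ
      = (μ (Z (n + 1) ⁻¹' A ∩ D)).toReal := by
    rw [← measureReal_def, ← integral_indicator_one ((hZ _ hA).inter hDm)]
    congr 1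
    ext ω
    by_cases h1 : ω ∈ D <;> by_cases h2 : Z (n + 1) ω ∈ A <;>
      simp_all [Set.indicator]
  have e2 : ∫ ω, (G.indicator (fun _ => (1:ℝ)) fun i : Fin (n + 1) => Z i.1 ω) *
      ((Q n) (Z n ω) A).toReal ∂μ = (∫⁻ ω, Q n (Z n ω) A ∂(μ.restrict D)).toReal := by
    have hQZ : Measurable fun ω => Q n (Z n ω) A := hQm.comp (hZ n)
    rw [← integral_toReal hQZ.aemeasurable (ae_of_all _ fun z => measure_lt_top _ _),
      ← integral_indicator hDm]
    congr 1
    ext ω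
    by_cases h1 : ω ∈ D <;> simp_all [Set.indicator]
  rw [e1, e2] at h1
  refine (ENNReal.toReal_eq_toReal_iff' (measure_ne_top _ _) ?_).1 h1
  have : ∫⁻ ω, Q n (Z n ω) A ∂(μ.restrict D) ≤ ∫⁻ ω, 1 ∂(μ.restrict D) :=
    lintegral_mono fun ω => prob_le_one
  refine (this.trans_lt ?_).ne
  simp

lemma ville {Ω : Type*} [MeasurableSpace Ω] (μ : Measure Ω) (P : Kernel E E) [IsMarkovKernel P]
    (x : E) (X : ℕ → Ω → E) (hX : IsMChain P x μ X) (F : ℕ → E → ENNReal)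
    (hFm : ∀ k, Measurable (F k)) (n1 : ℕ)
    (hF : ∀ k < n1, ∀ z, ∫⁻ y, F (k + 1) y ∂(P z) ≤ F k z) (r : ENNReal) :
    r * μ {ω | ∃ k ≤ n1, r ≤ F k (X k ω)} ≤ F 0 x := by
  obtain ⟨hμ, hXm, h0, hst⟩ := hX
  set D : ℕ → Set Ω := fun k => {ω | ∀ i ≤ k, F i (X i ω) < r} with hD
  have hDm : ∀ k, MeasurableSet (D k) := fun k => by
    have : D k = ⋂ i, ⋂ (_ : i ≤ k), {ω | F i (X i ω) < r} := by
      ext ω; simp [hD]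
    rw [this]
    exact .iInter fun i => .iInter fun _ =>
      measurableSet_lt ((hFm i).comp (hXm i)) measurable_const
  have hS : ∀ (k : ℕ) (ν : Measure Ω), r * ν {ω | F k (X k ω) < r}ᶜ +
      ∫⁻ ω in {ω | F k (X k ω) < r}, F k (X k ω) ∂ν ≤ ∫⁻ ω, F k (X k ω) ∂ν := by
    intro k ν
    have hm : MeasurableSet {ω | F k (X k ω) < r} :=
      measurableSet_lt ((hFm k).comp (hXm k)) measurable_const
    rw [← lintegral_add_compl (μ := ν) (fun ω => F k (X k ω)) hm, add_comm (r * _)]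
    gcongr
    rw [← setLIntegral_const]
    exact setLIntegral_mono' hm.compl fun ω hω => not_lt.1 hω
  have key : ∀ k ≤ n1, r * μ (D k)ᶜ + ∫⁻ ω in D k, F k (X k ω) ∂μ ≤ F 0 x := by
    intro k
    induction k with
    | zero =>
      intro _
      have e : D 0 = {ω | F 0 (X 0 ω) < r} := by ext ω; simp [hD]
      rw [e]
      refine (hS 0 μ).trans ?_
      have : ∫⁻ ω, F 0 (X 0 ω) ∂μ = ∫⁻ ω, F 0 x ∂μ := by
        refine lintegral_congr_ae ?_
        filter_upwards [h0] with ω h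
        rw [h]
      rw [this]; simp
    | succ k ih =>
      intro hk
      refine le_trans ?_ (ih (by omega))
      have hm : MeasurableSet {ω | F (k + 1) (X (k + 1) ω) < r} :=
        measurableSet_lt ((hFm _).comp (hXm _)) measurable_const
      have e : D (k + 1) = {ω | F (k + 1) (X (k + 1) ω) < r} ∩ D k := by
        ext ω
        simp only [hD, Set.mem_inter_iff, Set.mem_ofPred_eq]
        constructor
        · intro h; exact ⟨h _ le_rfl, fun i hi => h i (by omega)⟩
        · rintro ⟨h1, h2⟩ i hi
          rcases Nat.lt_or_ge i (k + 1) with h | h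
          · exact h2 i (by omega)
          · obtain rfl : i = k + 1 := by omega
            exact h1
      have s1 := hS (k + 1) (μ.restrict (D k))
      rw [Measure.restrict_restrict hm, ← e, Measure.restrict_apply hm.compl] at s1
      have e2 : (D (k + 1))ᶜ ⊆ (D k)ᶜ ∪ ({ω | F (k + 1) (X (k + 1) ω) < r}ᶜ ∩ D k) := by
        intro ω hω
        rw [e] at hω
        by_cases h : ω ∈ D k
        · exact Or.inr ⟨fun h' => hω ⟨h', h⟩, h⟩
        · exact Or.inl h
      have e3 : ∫⁻ ω in D k, F (k + 1) (X (k + 1) ω) ∂μ ≤ ∫⁻ ω in D k, F k (X k ω) ∂μ := by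
        have hG : MeasurableSet {v : Fin (k + 1) → E | ∀ i, F i.1 (v i) < r} := by
          have : {v : Fin (k + 1) → E | ∀ i, F i.1 (v i) < r} =
            ⋂ i : Fin (k + 1), {v | F i.1 (v i) < r} := by ext v; simp
          rw [this]
          exact .iInter fun i => measurableSet_lt ((hFm _).comp (measurable_pi_apply i))
            measurable_const
        have := mcstep_set μ (fun _ => P) X hXm hst k _ hG
        have eD : {ω | (fun i : Fin (k + 1) => X i.1 ω) ∈
            {v : Fin (k + 1) → E | ∀ i, F i.1 (v i) < r}} = D k := by
          ext ω
          simp only [hD, Set.mem_ofPred_eq]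
          exact ⟨fun h i hi => h ⟨i, by omega⟩, fun h i => h i.1 (by omega)⟩
        rw [eD] at this
        rw [← lintegral_map (hFm (k + 1)) (hXm (k + 1)), this,
          Measure.lintegral_bind P.measurable.aemeasurable (hFm _).aemeasurable,
          lintegral_map (by exact (hFm _).lintegral_kernel) (hXm k)]
        exact lintegral_mono fun ω => hF k (by omega) _
      calc r * μ (D (k + 1))ᶜ + ∫⁻ ω in D (k + 1), F (k + 1) (X (k + 1) ω) ∂μ
          ≤ r * (μ (D k)ᶜ + μ ({ω | F (k + 1) (X (k + 1) ω) < r}ᶜ ∩ D k))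
            + ∫⁻ ω in D (k + 1), F (k + 1) (X (k + 1) ω) ∂μ := by
            gcongr
            exact (measure_mono e2).trans (measure_union_le _ _)
        _ = r * μ (D k)ᶜ + (r * μ ({ω | F (k + 1) (X (k + 1) ω) < r}ᶜ ∩ D k)
            + ∫⁻ ω in D (k + 1), F (k + 1) (X (k + 1) ω) ∂μ) := by ring
        _ ≤ _ := by gcongr; exact s1.trans e3
  refine le_trans ?_ (key n1 le_rfl)
  refine le_trans ?_ le_self_add
  gcongr
  rintro ω ⟨k, hk, h⟩ h'
  exact absurd (h' k hk) (not_lt.2 h)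

lemma uniform_bound [PartialOrder E] (P : Kernel E E) [IsMarkovKernel P]
    (hmono : MonotoneKernel P)
    (C : Set E) (hCm : MeasurableSet C)
    (hach : Achievable P (C ×ˢ C))
    (A B : Set E) (hAm : MeasurableSet A) (hBm : MeasurableSet B)
    (hAB : ∀ a ∈ A, ∀ b ∈ B, a ≤ b)
    (ε : ENNReal) (hε : 0 < ε) (N : ℕ)
    (hSA : ∀ x ∈ C, ε ≤ kpow P N x A) (hSB : ∀ x ∈ C, ε ≤ kpow P N x B) :
    ∃ δ : ENNReal, δ ≠ 0 ∧ δ ≤ 1 ∧ ∀ x y, ∃ n0, ∀ n ≥ n0, ∀ I, MeasurableSet I → IsUpperSet I →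
      kpow P n x I + δ ≤ kpow P n y I + 1 := by
  set e := min ε 1 with he
  have he0 : e ≠ 0 := (lt_min hε one_pos).ne'
  have het : e ≠ ⊤ := (min_le_right ε 1).trans_lt ENNReal.one_lt_top |>.ne
  set r := e * 2⁻¹ with hr
  have hr0 : r ≠ 0 := by simp [hr, he0]
  have hrt : r ≠ ⊤ := by simp [hr, ENNReal.mul_eq_top, het]
  -- reachability bound
  have reach : ∀ (D : Set E), MeasurableSet D → ∀ (z : E), ε ≤ kpow P N z D →
      ∀ (m : ℕ) (J : Set E), MeasurableSet J → kpow P (m + N) z J < r →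
      ∃ a ∈ D, kpow P m a J < 2⁻¹ := by
    intro D hD z hz m J hJ hlt
    by_contra hcon
    push Not at hcon
    refine absurd hlt (not_lt.2 ?_)
    rw [kpow_add_apply P m N z J hJ]
    calc r ≤ 2⁻¹ * kpow P N z D := by
          rw [hr, mul_comm]; gcongr; exact (min_le_left _ _).trans hz
      _ = ∫⁻ a in D, 2⁻¹ ∂(kpow P N z) := by rw [setLIntegral_const]
      _ ≤ ∫⁻ a in D, kpow P m a J ∂(kpow P N z) := setLIntegral_mono' hD hcon
      _ ≤ _ := setLIntegral_le_lintegral _ _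
  refine ⟨r * 2⁻¹, by simp [hr0], ?_, fun x y => ?_⟩
  · calc r * 2⁻¹ ≤ 1 * 2⁻¹ * 2⁻¹ := by rw [hr]; gcongr; exact min_le_right _ _
      _ ≤ 1 * 1 * 1 := by gcongr <;> simp
      _ = 1 := by simp
  obtain ⟨Ω, mΩ, μ, X, Y, ⟨hX, hY, -⟩, hhit⟩ := hach x y
  have hμ := hX.1
  set H : ℕ → Set Ω := fun n => {ω | ∃ k ≤ n, X k ω ∈ C ∧ Y k ω ∈ C} with hH
  have hHmono : Monotone H := fun a b hab ω ⟨k, hk, h⟩ => ⟨k, hk.trans hab, h⟩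
  have hHU : μ (⋃ n, H n) = 1 := by
    rw [prob_compl_eq_zero_iff₀ ?_ |>.symm]
    · refine measure_mono_null ?_ (ae_iff.1 hhit)
      intro ω hω hcon
      obtain ⟨k, hk⟩ := hcon
      exact hω (Set.mem_iUnion.2 ⟨k, k, le_rfl, hk⟩)
    · refine (MeasurableSet.iUnion fun n => ?_).nullMeasurableSet
      have : H n = ⋃ k, ⋃ (_ : k ≤ n), (X k ⁻¹' C ∩ Y k ⁻¹' C) := by
        ext ω
        simp only [hH, Set.mem_iUnion, Set.mem_inter_iff, Set.mem_preimage, exists_prop,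
          Set.mem_ofPred_eq]
      rw [this]
      exact .iUnion fun k => .iUnion fun _ => (hX.2.1 k hCm).inter (hY.2.1 k hCm)
  obtain ⟨n1, hn1⟩ : ∃ n1, 2⁻¹ < μ (H n1) := by
    have h1 := tendsto_measure_iUnion_atTop (μ := μ) hHmono
    rw [hHU] at h1
    have h2 : ∀ᶠ n in atTop, (2⁻¹ : ENNReal) < μ (H n) :=
      h1.eventually (lt_mem_nhds (by simp))
    exact h2.exists
  refine ⟨n1 + N, fun n hn I hI hu => ?_⟩
  by_contra hcon
  rw [not_le] at hcon
  have hF : ∀ J, MeasurableSet J → ∀ k < n1, ∀ z,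
      ∫⁻ y, kpow P (n - (k + 1)) y J ∂(P z) ≤ kpow P (n - k) z J := by
    intro J hJ k hk z
    rw [← kpow_succ_apply P _ z J hJ]
    have : n - (k + 1) + 1 = n - k := by omega
    rw [this]
  have v1 := ville μ P x X hX (fun k z => kpow P (n - k) z Iᶜ)
    (fun k => Kernel.measurable_coe _ hI.compl) n1 (hF _ hI.compl) r
  have v2 := ville μ P y Y hY (fun k z => kpow P (n - k) z I)
    (fun k => Kernel.measurable_coe _ hI) n1 (hF _ hI) r
  simp only [Nat.sub_zero] at v1 v2
  have huv : kpow P n x Iᶜ + kpow P n y I < r * 2⁻¹ := by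
    have h1 : kpow P n x I + kpow P n x Iᶜ = 1 := prob_add_prob_compl hI
    have h2 : kpow P n y I + (kpow P n x I + kpow P n x Iᶜ) < kpow P n x I + r * 2⁻¹ := by
      rw [h1]; exact hcon
    have h3 : kpow P n x I + (kpow P n x Iᶜ + kpow P n y I) < kpow P n x I + r * 2⁻¹ := by
      convert h2 using 1; ring
    exact (ENNReal.add_lt_add_iff_left (measure_ne_top _ _)).1 h3
  set T1 := {ω | ∃ k ≤ n1, r ≤ kpow P (n - k) (X k ω) Iᶜ} with hT1
  set T2 := {ω | ∃ k ≤ n1, r ≤ kpow P (n - k) (Y k ω) I} with hT2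
  have hT : μ (T1 ∪ T2) < 2⁻¹ := by
    have : r * μ (T1 ∪ T2) < r * 2⁻¹ := by
      refine lt_of_le_of_lt ?_ huv
      calc r * μ (T1 ∪ T2) ≤ r * (μ T1 + μ T2) := by gcongr; exact measure_union_le _ _
        _ = r * μ T1 + r * μ T2 := by ring
        _ ≤ _ := add_le_add v1 v2
    exact (ENNReal.mul_lt_mul_iff_right hr0 hrt).1 this
  obtain ⟨ω, hω1, hω2⟩ : ∃ ω, ω ∈ H n1 ∧ ω ∉ T1 ∪ T2 := by
    by_contra h
    push Not at h
    exact absurd ((measure_mono h).trans_lt hT) (not_lt.2 hn1.le)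
  obtain ⟨k, hk, hXC, hYC⟩ := hω1
  rw [Set.mem_union, not_or] at hω2
  have a1 : kpow P (n - k) (X k ω) Iᶜ < r := by
    by_contra h; exact hω2.1 ⟨k, hk, not_lt.1 h⟩
  have a2 : kpow P (n - k) (Y k ω) I < r := by
    by_contra h; exact hω2.2 ⟨k, hk, not_lt.1 h⟩
  have hnk : n - k = (n - k - N) + N := by omega
  rw [hnk] at a1 a2
  obtain ⟨a, haA, ha⟩ := reach A hAm _ (hSA _ hXC) _ _ hI.compl a1
  obtain ⟨b, hbB, hb⟩ := reach B hBm _ (hSB _ hYC) _ _ hI a2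
  have h1 := kpow_mono P hmono (n - k - N) a b (hAB a haA b hbB) I hI hu
  have h2 : kpow P (n - k - N) a I + kpow P (n - k - N) a Iᶜ = 1 := prob_add_prob_compl hI
  have h3 : kpow P (n - k - N) a I + kpow P (n - k - N) a Iᶜ < 2⁻¹ + 2⁻¹ :=
    ENNReal.add_lt_add (h1.trans_lt hb) ha
  rw [h2, ENNReal.inv_two_add_inv_two] at h3
  exact lt_irrefl _ h3
end

/-- The greedy data: unmatched masses `nu`, `nu'` and matched pieces `s`. -/
structure GD {E : Type*} [MeasurableSpace E] [PartialOrder E] (P : Kernel E E) (x y : E) where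
  nu : ℕ → Measure E
  nu' : ℕ → Measure E
  s : ℕ → Measure (E × E)
  fnu : ∀ m, IsFiniteMeasure (nu m)
  fnu' : ∀ m, IsFiniteMeasure (nu' m)
  mass : ∀ m, nu m Set.univ = nu' m Set.univ
  zero_le : x ≤ y → nu 0 = 0 ∧ nu' 0 = 0
  zero_nle : ¬ x ≤ y → nu 0 = Measure.dirac x ∧ nu' 0 = Measure.dirac y
  hs : ∀ m, s m (MM E)ᶜ = 0
  step : ∀ m, (nu m).bind P = (s m).map Prod.fst + nu (m + 1)
  step' : ∀ m, (nu' m).bind P = (s m).map Prod.snd + nu' (m + 1)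
  opt : ∀ m, ∀ η : ENNReal, η ≠ 0 → ∃ I, MeasurableSet I ∧ IsUpperSet I ∧
        nu (m + 1) Set.univ + (nu' m).bind P I ≤ (nu m).bind P I + η

section
variable {E : Type*} [MetricSpace E] [PolishSpace E] [MeasurableSpace E] [BorelSpace E]
    [PartialOrder E] [OrderClosedTopology E]

lemma bind_univ {S T : Type*} [MeasurableSpace S] [MeasurableSpace T] (P : Kernel S T)
    [IsMarkovKernel P] (μ : Measure S) :
    μ.bind P Set.univ = μ Set.univ := by
  rw [Measure.bind_apply .univ P.measurable.aemeasurable]; simp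

lemma bind_finite {S T : Type*} [MeasurableSpace S] [MeasurableSpace T] (P : Kernel S T)
    [IsMarkovKernel P] (μ : Measure S) [IsFiniteMeasure μ] :
    IsFiniteMeasure (μ.bind P) := ⟨by rw [bind_univ]; exact measure_lt_top _ _⟩

lemma exists_GD (P : Kernel E E) [IsMarkovKernel P] (x y : E) : Nonempty (GD P x y) := by
  classical
  let St := {p : Measure E × Measure E // IsFiniteMeasure p.1 ∧ IsFiniteMeasure p.2 ∧
    p.1 Set.univ = p.2 Set.univ}
  have hstep : ∀ p : St, ∃ (s : Measure (E × E)) (q : St), s (MM E)ᶜ = 0 ∧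
      p.1.1.bind P = s.map Prod.fst + q.1.1 ∧ p.1.2.bind P = s.map Prod.snd + q.1.2 ∧
      ∀ η : ENNReal, η ≠ 0 → ∃ I, MeasurableSet I ∧ IsUpperSet I ∧
        q.1.1 Set.univ + p.1.2.bind P I ≤ p.1.1.bind P I + η := by
    rintro ⟨⟨a, b⟩, ha, hb, hab⟩
    simp only at ha hb hab
    have h1 := bind_finite P a
    have h2 := bind_finite P b
    have hm : a.bind P Set.univ = b.bind P Set.univ := by rw [bind_univ, bind_univ, hab]
    obtain ⟨s, ν, ν', e1, e2, e3, e4⟩ := greedy_step (a.bind P) (b.bind P) hm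
    have f1 : IsFiniteMeasure ν := ⟨lt_of_le_of_lt (by rw [e2]; simp)
      (measure_lt_top (a.bind P) Set.univ)⟩
    have f2 : IsFiniteMeasure ν' := ⟨lt_of_le_of_lt (by rw [e3]; simp)
      (measure_lt_top (b.bind P) Set.univ)⟩
    refine ⟨s, ⟨⟨ν, ν'⟩, f1, f2, ?_⟩, e1, e2, e3, e4⟩
    rw [e2, e3] at hm
    simp only [Measure.add_apply, Measure.map_apply measurable_fst .univ,
      Measure.map_apply measurable_snd .univ, Set.preimage_univ] at hm
    refine (ENNReal.add_right_inj ?_).1 hm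
    have : s Set.univ ≤ a.bind P Set.univ := by
      rw [e2]; simp [Measure.map_apply measurable_fst .univ]
    exact (this.trans_lt (measure_lt_top _ _)).ne
  choose s q h1 h2 h3 h4 using hstep
  let p0 : St := if x ≤ y then ⟨(0, 0), inferInstance, inferInstance, rfl⟩
    else ⟨(Measure.dirac x, Measure.dirac y), inferInstance, inferInstance, by simp⟩
  let p : ℕ → St := fun n => Nat.rec p0 (fun _ r => q r) n
  exact ⟨{
    nu := fun m => (p m).1.1
    nu' := fun m => (p m).1.2
    s := fun m => s (p m)
    fnu := fun m => (p m).2.1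
    fnu' := fun m => (p m).2.2.1
    mass := fun m => (p m).2.2.2
    zero_le := fun h => by
      change p0.1.1 = 0 ∧ p0.1.2 = 0
      simp [p0, h]
    zero_nle := fun h => by
      change p0.1.1 = _ ∧ p0.1.2 = _
      simp [p0, h]
    hs := fun m => h1 _
    step := fun m => h2 _
    step' := fun m => h3 _
    opt := fun m => h4 _ }⟩

lemma bind_mono {S T : Type*} [MeasurableSpace S] [MeasurableSpace T] (P : Kernel S T)
    {μ ν : Measure S} (h : μ ≤ ν) :
    μ.bind P ≤ ν.bind P := by
  refine Measure.le_iff.2 fun A hA => ?_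
  rw [Measure.bind_apply hA P.measurable.aemeasurable,
    Measure.bind_apply hA P.measurable.aemeasurable]
  exact lintegral_mono' h le_rfl

lemma bind_kpow_succ (P : Kernel E E) [IsMarkovKernel P] (μ : Measure E) (n : ℕ) :
    μ.bind (kpow P (n + 1)) = (μ.bind (kpow P n)).bind P := by
  rw [Measure.bind_bind (kpow P n).measurable.aemeasurable P.measurable.aemeasurable]
  rfl

lemma dom_seq (P : Kernel E E) [IsMarkovKernel P] (nu : ℕ → Measure E)
    (h : ∀ m, nu (m + 1) ≤ (nu m).bind P) (m n : ℕ) :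
    nu (m + n) ≤ (nu m).bind (kpow P n) := by
  induction n with
  | zero =>
    refine le_of_eq ?_
    rw [kpow_zero, Nat.add_zero]
    exact (Measure.bind_dirac).symm
  | succ n ih =>
    rw [bind_kpow_succ]
    exact (h _).trans (bind_mono P ih)

variable {P : Kernel E E} {x y : E}

lemma GD.le (g : GD P x y) (m : ℕ) : g.nu (m + 1) ≤ (g.nu m).bind P := by
  rw [g.step]; exact Measure.le_add_left le_rfl

lemma GD.le' (g : GD P x y) (m : ℕ) : g.nu' (m + 1) ≤ (g.nu' m).bind P := by
  rw [g.step']; exact Measure.le_add_left le_rfl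

lemma GD.anti [IsMarkovKernel P] (g : GD P x y) : Antitone fun m => g.nu m Set.univ :=
  antitone_nat_of_succ_le fun m => (g.le m Set.univ).trans (bind_univ P _).le

lemma GD.estimate [IsMarkovKernel P] (g : GD P x y) (m n : ℕ) (κ : ENNReal)
    (hκ : ∀ m, κ ≤ g.nu m Set.univ) (η : ENNReal) (hη : η ≠ 0) :
    ∃ I, MeasurableSet I ∧ IsUpperSet I ∧
      2 * κ + (g.nu' m).bind (kpow P (n + 1)) I ≤
        g.nu m Set.univ + (g.nu m).bind (kpow P (n + 1)) I + η := by
  have := g.fnu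
  have := g.fnu'
  obtain ⟨I, hI, hu, h⟩ := g.opt (m + n) η hη
  refine ⟨I, hI, hu, ?_⟩
  have d1 := bind_mono P (dom_seq P g.nu g.le m n)
  have d2 := bind_mono P (dom_seq P g.nu' g.le' m n)
  rw [← bind_kpow_succ] at d1 d2
  have f := bind_finite P (g.nu' (m + n))
  have c1 : (g.nu' m).bind (kpow P (n + 1)) I + g.nu (m + n) Set.univ ≤
      g.nu m Set.univ + (g.nu' (m + n)).bind P I := by
    have h1 : (g.nu' m).bind (kpow P (n + 1)) I + (g.nu' m).bind (kpow P (n + 1)) Iᶜ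
        = g.nu m Set.univ := by
      rw [measure_add_measure_compl hI, bind_univ, g.mass]
    have h2 : (g.nu' (m + n)).bind P I + (g.nu' (m + n)).bind P Iᶜ = g.nu (m + n) Set.univ := by
      rw [measure_add_measure_compl hI, bind_univ, g.mass]
    rw [← h1, ← h2]
    have := d2 Iᶜ
    calc _ = (g.nu' m).bind (kpow P (n + 1)) I + (g.nu' (m + n)).bind P Iᶜ
          + (g.nu' (m + n)).bind P I := by ring
      _ ≤ _ := by gcongr
  have hfin : (g.nu' (m + n)).bind P I ≠ ⊤ := measure_ne_top _ _
  refine (ENNReal.add_le_add_iff_right hfin).1 ?_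
  calc 2 * κ + (g.nu' m).bind (kpow P (n + 1)) I + (g.nu' (m + n)).bind P I
      = ((g.nu' m).bind (kpow P (n + 1)) I + κ) + (κ + (g.nu' (m + n)).bind P I) := by ring
    _ ≤ (g.nu m Set.univ + (g.nu' (m + n)).bind P I) +
          ((g.nu (m + n)).bind P I + η) := by
        refine add_le_add (le_trans ?_ c1) (le_trans ?_ h)
        · gcongr; exact hκ _
        · gcongr; exact hκ _
    _ ≤ (g.nu m Set.univ + (g.nu' (m + n)).bind P I) +
          ((g.nu m).bind (kpow P (n + 1)) I + η) := by gcongr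
    _ = _ := by ring

lemma GD.tendsto [IsMarkovKernel P] (g : GD P x y) (δ : ENNReal) (hδ0 : δ ≠ 0) (hδ1 : δ ≤ 1)
    (hub : ∀ x y, ∃ n0, ∀ n ≥ n0, ∀ I, MeasurableSet I → IsUpperSet I →
      kpow P n x I + δ ≤ kpow P n y I + 1) :
    Tendsto (fun m => g.nu m Set.univ) atTop (𝓝 0) := by
  have fi := g.fnu
  have fi' := g.fnu'
  have hδt : δ ≠ ⊤ := (hδ1.trans_lt ENNReal.one_lt_top).ne
  have hlim := tendsto_atTop_iInf g.anti
  set κ := ⨅ m, g.nu m Set.univ with hκd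
  have hκ : ∀ m, κ ≤ g.nu m Set.univ := fun m => iInf_le _ m
  have hκt : κ ≠ ⊤ := ((hκ 0).trans_lt (measure_lt_top _ _)).ne
  have main : ∀ m, 2 * κ * g.nu m Set.univ + δ * (g.nu m Set.univ) ^ 2 ≤
      2 * (g.nu m Set.univ) ^ 2 := by
    intro m
    set c := g.nu m Set.univ with hc
    have hct : c ≠ ⊤ := measure_ne_top _ _
    have hη : ∀ n : ℕ, ((n : ENNReal) + 1)⁻¹ ≠ 0 := fun n => by
      simp
    choose I hI hu hIe using fun n => g.estimate m n κ hκ _ (hη n)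
    set π := (g.nu m).prod (g.nu' m) with hπ
    set G : ℕ → Set (E × E) := fun n =>
      {z | kpow P (n + 1) z.1 (I n) + δ ≤ kpow P (n + 1) z.2 (I n) + 1} with hG
    have mk1 : ∀ n, Measurable fun z : E × E => kpow P (n + 1) z.1 (I n) := fun n =>
      (Kernel.measurable_coe _ (hI n)).comp measurable_fst
    have mk2 : ∀ n, Measurable fun z : E × E => kpow P (n + 1) z.2 (I n) := fun n =>
      (Kernel.measurable_coe _ (hI n)).comp measurable_snd
    have hGm : ∀ n, MeasurableSet (G n) := fun n =>
      measurableSet_le ((mk1 n).add measurable_const) ((mk2 n).add measurable_const)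
    have hπG : Tendsto (fun n => π (G n)ᶜ) atTop (𝓝 0) := by
      have := tendsto_measure_of_tendsto_indicator_of_isFiniteMeasure (L := atTop)
        (A := (∅ : Set (E × E))) (As := fun n => (G n)ᶜ) π (fun n => (hGm n).compl) (by
          intro z
          obtain ⟨n0, h0⟩ := hub z.1 z.2
          filter_upwards [eventually_ge_atTop n0] with n hn
          simp only [Set.mem_empty_iff_false, iff_false, Set.mem_compl_iff, not_not]
          exact h0 (n + 1) (by omega) _ (hI n) (hu n))
      simpa using this
    have c' : g.nu' m Set.univ = c := (g.mass m).symm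
    have est : ∀ n : ℕ, 2 * κ * c + δ * c ^ 2 ≤
        2 * c ^ 2 + (c * ((n : ENNReal) + 1)⁻¹ + δ * π (G n)ᶜ) := by
      intro n
      have hI1 : ∫⁻ z, kpow P (n + 1) z.1 (I n) ∂π = c * (g.nu m).bind (kpow P (n + 1)) (I n) := by
        rw [hπ, lintegral_prod _ (mk1 n).aemeasurable,
          Measure.bind_apply (hI n) (kpow P (n+1)).measurable.aemeasurable]
        simp only [lintegral_const, c']
        rw [lintegral_mul_const _ (Kernel.measurable_coe _ (hI n)), mul_comm]
      have hI2 : ∫⁻ z, kpow P (n + 1) z.2 (I n) ∂π = c * (g.nu' m).bind (kpow P (n + 1)) (I n) := by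
        rw [hπ, lintegral_prod _ (mk2 n).aemeasurable,
          Measure.bind_apply (hI n) (kpow P (n+1)).measurable.aemeasurable]
        simp only [lintegral_const]
        rw [mul_comm]
      have hπu : π Set.univ = c ^ 2 := by
        rw [hπ, ← Set.univ_prod_univ, Measure.prod_prod, c', sq]
      have e1 : ∫⁻ z, (kpow P (n + 1) z.1 (I n) + δ) ∂π ≤
          ∫⁻ z, (kpow P (n + 1) z.2 (I n) + 1 + (G n)ᶜ.indicator (fun _ => δ) z) ∂π := by
        refine lintegral_mono fun z => ?_
        by_cases hz : z ∈ G n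
        · simp only [Set.mem_compl_iff, hz, not_true, not_false_eq_true,
            Set.indicator_of_notMem, add_zero]
          exact hz
        · simp only [Set.mem_compl_iff, hz, not_false_eq_true, Set.indicator_of_mem]
          gcongr
          exact prob_le_one.trans le_add_self
      rw [lintegral_add_right _ measurable_const,
        lintegral_add_right _ (measurable_const.indicator (hGm n).compl),
        lintegral_add_right _ measurable_const, lintegral_indicator (hGm n).compl,
        setLIntegral_const, lintegral_const, lintegral_const, hπu, hI1, hI2, one_mul] at e1
      have e2 := hIe n
      have fb := bind_finite (kpow P (n + 1)) (g.nu' m)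
      have hfin : c * (g.nu' m).bind (kpow P (n + 1)) (I n) ≠ ⊤ :=
        ENNReal.mul_ne_top hct (measure_ne_top _ _)
      refine (ENNReal.add_le_add_iff_right hfin).1 ?_
      calc 2 * κ * c + δ * c ^ 2 + c * (g.nu' m).bind (kpow P (n + 1)) (I n)
          = c * (2 * κ + (g.nu' m).bind (kpow P (n + 1)) (I n)) + δ * c ^ 2 := by ring
        _ ≤ c * (c + (g.nu m).bind (kpow P (n + 1)) (I n) + ((n : ENNReal) + 1)⁻¹) + δ * c ^ 2 := by
            gcongr
        _ = c ^ 2 + c * ((n : ENNReal) + 1)⁻¹ +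
              (c * (g.nu m).bind (kpow P (n + 1)) (I n) + δ * c ^ 2) := by ring
        _ ≤ c ^ 2 + c * ((n : ENNReal) + 1)⁻¹ +
              (c * (g.nu' m).bind (kpow P (n + 1)) (I n) + c ^ 2 + δ * π (G n)ᶜ) := by
            gcongr
        _ = _ := by ring
    have hl : Tendsto (fun n : ℕ => 2 * c ^ 2 + (c * ((n : ENNReal) + 1)⁻¹ + δ * π (G n)ᶜ)) atTop
        (𝓝 (2 * c ^ 2 + (c * 0 + δ * 0))) := by
      have hinv : Tendsto (fun n : ℕ => ((n : ENNReal) + 1)⁻¹) atTop (𝓝 0) := by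
        have := (tendsto_add_atTop_iff_nat 1).2 ENNReal.tendsto_inv_nat_nhds_zero
        simpa using this
      exact tendsto_const_nhds.add ((ENNReal.Tendsto.const_mul hinv (Or.inr hct)).add
        (ENNReal.Tendsto.const_mul hπG (Or.inr hδt)))
    simpa using ge_of_tendsto' hl est
  have hfinal : 2 * κ * κ + δ * κ ^ 2 ≤ 2 * κ ^ 2 := by
    have l1 : Tendsto (fun m => 2 * κ * g.nu m Set.univ + δ * (g.nu m Set.univ) ^ 2) atTop
        (𝓝 (2 * κ * κ + δ * κ ^ 2)) :=
      (ENNReal.Tendsto.const_mul hlim (Or.inr (by finiteness))).add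
        (ENNReal.Tendsto.const_mul (ENNReal.Tendsto.pow hlim) (Or.inr hδt))
    have l2 : Tendsto (fun m => 2 * (g.nu m Set.univ) ^ 2) atTop (𝓝 (2 * κ ^ 2)) :=
        (ENNReal.Tendsto.const_mul (ENNReal.Tendsto.pow hlim) (Or.inr (by finiteness)))
    exact le_of_tendsto_of_tendsto' l1 l2 main
  have h0 : 2 * κ ^ 2 + δ * κ ^ 2 ≤ 2 * κ ^ 2 + 0 := by
    calc _ = 2 * κ * κ + δ * κ ^ 2 := by ring
      _ ≤ _ := hfinal.trans (by simp)
  have h1 := (ENNReal.add_le_add_iff_left (by finiteness)).1 h0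
  have h2 : κ = 0 := by simpa [hδ0] using h1
  rw [h2] at hlim
  exact hlim

lemma GD.nosub [IsMarkovKernel P] (g : GD P x y) (m : ℕ) (t : Measure (E × E))
    (ht : t (MM E)ᶜ = 0) (h1 : t.map Prod.fst ≤ g.nu m) (h2 : t.map Prod.snd ≤ g.nu' m) :
    t = 0 := by
  have := g.fnu
  have := g.fnu'
  cases m with
  | succ m =>
    have f1 := bind_finite P (g.nu m)
    have f2 := bind_finite P (g.nu' m)
    exact _root_.nosub (g.s m) (g.nu (m + 1)) (g.nu' (m + 1)) _ _ (g.hs m) (g.step m) (g.step' m)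
      (g.opt m) t ht h1 h2
  | zero =>
    have m1 : MeasurableSet ({x} : Set E) := measurableSet_singleton x
    have m2 : MeasurableSet ({y} : Set E) := measurableSet_singleton y
    rw [← Measure.measure_univ_eq_zero]
    by_cases hxy : x ≤ y
    · rw [(g.zero_le hxy).1] at h1
      have := h1 Set.univ
      rw [Measure.map_apply measurable_fst .univ] at this
      simpa using this
    · rw [(g.zero_nle hxy).1] at h1
      rw [(g.zero_nle hxy).2] at h2
      have a1 := h1 {x}ᶜ
      have a2 := h2 {y}ᶜ
      rw [Measure.map_apply measurable_fst m1.compl, Measure.dirac_apply' _ m1.compl] at a1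
      rw [Measure.map_apply measurable_snd m2.compl, Measure.dirac_apply' _ m2.compl] at a2
      simp only [Set.mem_compl_iff, Set.mem_singleton_iff, not_true, not_false_eq_true,
        Set.indicator_of_notMem, nonpos_iff_eq_zero] at a1 a2
      refine measure_mono_null ?_ (measure_union_null ht (measure_union_null a1 a2))
      rintro ⟨a, b⟩ -
      by_contra hcon
      simp only [Set.mem_union, not_or, Set.mem_compl_iff, not_not, Set.mem_preimage,
        Set.mem_singleton_iff] at hcon
      obtain ⟨h, rfl, rfl⟩ := hcon
      exact hxy h
end

section
variable {E : Type*} [MetricSpace E] [PolishSpace E] [MeasurableSpace E] [BorelSpace E]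

/-- Backward kernel. -/
lemma exists_back [Nonempty E] (P : Kernel E E) [IsMarkovKernel P] (ν : Measure E)
    [IsFiniteMeasure ν] :
    ∃ B : Kernel E E, IsMarkovKernel B ∧ (ν.bind P).bind B = ν ∧
      ∀ f h : E → ENNReal, Measurable f → Measurable h →
      ∫⁻ w, h w * ∫⁻ x, f x ∂(B w) ∂(ν.bind P) = ∫⁻ x, f x * ∫⁻ w, h w ∂(P x) ∂ν := by
  set R : Measure (E × E) := (ν ⊗ₘ P).map Prod.swap with hR
  have hfst : R.fst = ν.bind P := by
    rw [hR, Measure.fst_map_swap, Measure.snd_compProd]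
  have hd : (ν.bind P) ⊗ₘ R.condKernel = (ν ⊗ₘ P).map Prod.swap := by
    rw [← hfst]; exact R.disintegrate R.condKernel
  have fin := bind_finite P ν
  have key : ∀ f h : E → ENNReal, Measurable f → Measurable h →
      ∫⁻ w, h w * ∫⁻ x, f x ∂(R.condKernel w) ∂(ν.bind P) =
        ∫⁻ x, f x * ∫⁻ w, h w ∂(P x) ∂ν := by
    intro f h hf hh
    have h1 : ∫⁻ p, h p.1 * f p.2 ∂((ν.bind P) ⊗ₘ R.condKernel) =
        ∫⁻ p, h p.1 * f p.2 ∂((ν ⊗ₘ P).map Prod.swap) := by rw [hd]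
    rw [Measure.lintegral_compProd (by fun_prop), lintegral_map (by fun_prop) measurable_swap,
      Measure.lintegral_compProd (by simp only [Prod.fst_swap, Prod.snd_swap]; fun_prop)] at h1
    simp only [Prod.fst_swap, Prod.snd_swap] at h1
    rw [lintegral_congr fun w => (lintegral_const_mul (h w) hf).symm, h1]
    refine lintegral_congr fun x => ?_
    rw [lintegral_mul_const _ hh, mul_comm]
  refine ⟨R.condKernel, inferInstance, ?_, key⟩
  ext A hA
  have := key (A.indicator 1) 1 (measurable_one.indicator hA) measurable_one
  rw [Measure.bind_apply hA (Kernel.measurable _).aemeasurable]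
  simpa [lintegral_indicator_one hA] using this

lemma par_fst (B B' : Kernel E E) [IsMarkovKernel B] [IsMarkovKernel B'] (θ : Measure (E × E)) :
    (θ.bind (B ∥ₖ B')).map Prod.fst = (θ.map Prod.fst).bind B := by
  ext A hA
  rw [Measure.map_apply measurable_fst hA,
    Measure.bind_apply (measurable_fst hA) (Kernel.measurable _).aemeasurable,
    Measure.bind_apply hA (Kernel.measurable _).aemeasurable,
    lintegral_map (Kernel.measurable_coe _ hA) measurable_fst]
  refine lintegral_congr fun z => ?_
  have : (Prod.fst ⁻¹' A : Set (E × E)) = A ×ˢ Set.univ := by ext; simp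
  rw [this, Kernel.parallelComp_apply_prod]; simp

lemma par_snd (B B' : Kernel E E) [IsMarkovKernel B] [IsMarkovKernel B'] (θ : Measure (E × E)) :
    (θ.bind (B ∥ₖ B')).map Prod.snd = (θ.map Prod.snd).bind B' := by
  ext A hA
  rw [Measure.map_apply measurable_snd hA,
    Measure.bind_apply (measurable_snd hA) (Kernel.measurable _).aemeasurable,
    Measure.bind_apply hA (Kernel.measurable _).aemeasurable,
    lintegral_map (Kernel.measurable_coe _ hA) measurable_snd]
  refine lintegral_congr fun z => ?_
  have : (Prod.snd ⁻¹' A : Set (E × E)) = Set.univ ×ˢ A := by ext; simp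
  rw [this, Kernel.parallelComp_apply_prod]; simp

lemma bind_add' {S T : Type*} [MeasurableSpace S] [MeasurableSpace T] (P : Kernel S T)
    (μ ν : Measure S) : (μ + ν).bind P = μ.bind P + ν.bind P := Measure.comp_add

/-- Alive data. -/
structure AD [PartialOrder E] {P : Kernel E E} {x y : E} (g : GD P x y) where
  B : ℕ → Kernel E E
  B' : ℕ → Kernel E E
  ρ : ℕ → Measure (E × E)
  Qa : ℕ → Kernel (E × E) (E × E)
  mB : ∀ m, IsMarkovKernel (B m)
  mB' : ∀ m, IsMarkovKernel (B' m)
  mQ : ∀ m, IsMarkovKernel (Qa m)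
  hf : ∀ m, (ρ m).map Prod.fst = g.nu m
  hs : ∀ m, (ρ m).map Prod.snd = g.nu' m
  hM : ∀ m, ρ m (MM E) = 0
  hB : ∀ m, ∀ f h : E → ENNReal, Measurable f → Measurable h →
      ∫⁻ w, h w * ∫⁻ x, f x ∂(B m w) ∂((g.nu m).bind P) = ∫⁻ x, f x * ∫⁻ w, h w ∂(P x) ∂(g.nu m)
  hB' : ∀ m, ∀ f h : E → ENNReal, Measurable f → Measurable h →
      ∫⁻ w, h w * ∫⁻ x, f x ∂(B' m w) ∂((g.nu' m).bind P) =
        ∫⁻ x, f x * ∫⁻ w, h w ∂(P x) ∂(g.nu' m)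
  hQ : ∀ m, ∀ (f : E → ENNReal) (h : E × E → ENNReal), Measurable f → Measurable h →
      ∫⁻ z, f z.1 * ∫⁻ w, h w ∂(Qa m z) ∂(ρ m) =
        ∫⁻ w, h w * ∫⁻ x, f x ∂(B m w.1) ∂(g.s m + ρ (m + 1))
  hQ' : ∀ m, ∀ (f : E → ENNReal) (h : E × E → ENNReal), Measurable f → Measurable h →
      ∫⁻ z, f z.2 * ∫⁻ w, h w ∂(Qa m z) ∂(ρ m) =
        ∫⁻ w, h w * ∫⁻ x, f x ∂(B' m w.2) ∂(g.s m + ρ (m + 1))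

variable [PartialOrder E] [OrderClosedTopology E]

lemma exists_AD {P : Kernel E E} [IsMarkovKernel P] {x y : E} (g : GD P x y)
    (ht : Tendsto (fun m => g.nu m Set.univ) atTop (𝓝 0)) : Nonempty (AD g) := by
  have hne : Nonempty E := ⟨x⟩
  have fi := g.fnu
  have fi' := g.fnu'
  choose B mB eB hB using fun m => exists_back P (g.nu m)
  choose B' mB' eB' hB' using fun m => exists_back P (g.nu' m)
  let R : ℕ → ℕ → Measure (E × E) := fun j => Nat.rec (fun m => (g.s m).bind (B m ∥ₖ B' m))
    (fun _ r m => (r (m + 1)).bind (B m ∥ₖ B' m)) j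
  have R0 : ∀ m, R 0 m = (g.s m).bind (B m ∥ₖ B' m) := fun m => rfl
  have Rs : ∀ j m, R (j + 1) m = (R j (m + 1)).bind (B m ∥ₖ B' m) := fun j m => rfl
  let T : ℕ → ℕ → Measure (E × E) := fun j => Nat.rec (fun m => 0)
    (fun _ r m => (g.s m + r (m + 1)).bind (B m ∥ₖ B' m)) j
  have T0 : ∀ m, T 0 m = 0 := fun m => rfl
  have Ts : ∀ j m, T (j + 1) m = (g.s m + T j (m + 1)).bind (B m ∥ₖ B' m) := fun j m => rfl
  have TR : ∀ n m, T (n + 1) m = T n m + R n m := by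
    intro n
    induction n with
    | zero => intro m; rw [Ts, T0, T0, R0, add_zero, zero_add]
    | succ n ih =>
      intro m
      rw [Ts (n + 1), ih, ← add_assoc, bind_add', ← Ts, ← Rs]
  have TRs : ∀ n m A, T n m A = ∑ j ∈ Finset.range n, R j m A := by
    intro n m A
    induction n with
    | zero => simp [T0]
    | succ n ih => rw [TR, Measure.add_apply, ih, Finset.sum_range_succ]
  have Tf : ∀ n m, (T n m).map Prod.fst ≤ g.nu m := by
    intro n
    induction n with
    | zero => intro m; rw [T0]; simp [Measure.zero_le]
    | succ n ih =>
      intro m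
      calc (T (n + 1) m).map Prod.fst
          = ((g.s m).map Prod.fst + (T n (m + 1)).map Prod.fst).bind (B m) := by
            rw [Ts, par_fst, Measure.map_add _ _ measurable_fst]
        _ ≤ ((g.s m).map Prod.fst + g.nu (m + 1)).bind (B m) :=
            bind_mono _ (by gcongr; exact ih (m + 1))
        _ = g.nu m := by rw [← g.step, eB]
  have Tf' : ∀ n m, (T n m).map Prod.snd ≤ g.nu' m := by
    intro n
    induction n with
    | zero => intro m; rw [T0]; simp [Measure.zero_le]
    | succ n ih =>
      intro m
      calc (T (n + 1) m).map Prod.snd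
          = ((g.s m).map Prod.snd + (T n (m + 1)).map Prod.snd).bind (B' m) := by
            rw [Ts, par_snd, Measure.map_add _ _ measurable_snd]
        _ ≤ ((g.s m).map Prod.snd + g.nu' (m + 1)).bind (B' m) :=
            bind_mono _ (by gcongr; exact ih (m + 1))
        _ = g.nu' m := by rw [← g.step', eB']
  have smass : ∀ m, g.s m Set.univ + g.nu (m + 1) Set.univ = g.nu m Set.univ := by
    intro m
    have := congrArg (fun q : Measure E => q Set.univ) (g.step m)
    simp only [bind_univ, Measure.add_apply, Measure.map_apply measurable_fst .univ,
      Set.preimage_univ] at this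
    exact this.symm
  have Tm : ∀ n m, T n m Set.univ + g.nu (m + n) Set.univ = g.nu m Set.univ := by
    intro n
    induction n with
    | zero => intro m; rw [T0]; simp [Measure.zero_le]
    | succ n ih =>
      intro m
      rw [Ts, bind_univ, Measure.add_apply, add_assoc, show m + (n + 1) = m + 1 + n by omega, ih,
        smass]
  obtain ⟨ρ, hρ⟩ : ∃ ρ : ℕ → Measure (E × E), ∀ m, ρ m = Measure.sum fun j => R j m :=
    ⟨_, fun _ => rfl⟩
  have ρl : ∀ m A, MeasurableSet A → Tendsto (fun n => T n m A) atTop (𝓝 (ρ m A)) := by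
    intro m A hA
    simp only [TRs]
    rw [hρ, Measure.sum_apply _ hA]
    exact ENNReal.tendsto_nat_tsum _
  have ρle : ∀ m, (ρ m).map Prod.fst ≤ g.nu m := by
    intro m
    refine Measure.le_iff.2 fun A hA => ?_
    rw [Measure.map_apply measurable_fst hA]
    refine le_of_tendsto' (ρl m _ (measurable_fst hA)) fun n => ?_
    rw [← Measure.map_apply measurable_fst hA]; exact Tf n m A
  have ρle' : ∀ m, (ρ m).map Prod.snd ≤ g.nu' m := by
    intro m
    refine Measure.le_iff.2 fun A hA => ?_
    rw [Measure.map_apply measurable_snd hA]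
    refine le_of_tendsto' (ρl m _ (measurable_snd hA)) fun n => ?_
    rw [← Measure.map_apply measurable_snd hA]; exact Tf' n m A
  have ρm : ∀ m, ρ m Set.univ = g.nu m Set.univ := by
    intro m
    have h1 := (ρl m _ .univ).add (ht.comp (tendsto_add_atTop_nat m))
    rw [add_zero] at h1
    refine tendsto_nhds_unique h1 ?_
    refine tendsto_const_nhds.congr fun n => ?_
    simp only [Function.comp_apply]
    rw [add_comm n m, Tm]
  have fρ : ∀ m, IsFiniteMeasure (ρ m) := fun m => ⟨by rw [ρm]; exact measure_lt_top _ _⟩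
  have ρf : ∀ m, (ρ m).map Prod.fst = g.nu m := fun m =>
    Measure.eq_of_le_of_measure_univ_eq (ρle m)
      (by rw [Measure.map_apply measurable_fst .univ, Set.preimage_univ, ρm])
  have ρs : ∀ m, (ρ m).map Prod.snd = g.nu' m := fun m =>
    Measure.eq_of_le_of_measure_univ_eq (ρle' m)
      (by rw [Measure.map_apply measurable_snd .univ, Set.preimage_univ, ρm, g.mass])
  have ρM : ∀ m, ρ m (MM E) = 0 := by
    intro m
    have h := g.nosub m ((ρ m).restrict (MM E))
      (by rw [Measure.restrict_apply measurableSet_MM.compl]; simp)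
      (by rw [← ρf]; exact Measure.map_mono Measure.restrict_le_self measurable_fst)
      (by rw [← ρs]; exact Measure.map_mono Measure.restrict_le_self measurable_snd)
    exact Measure.restrict_eq_zero.1 h
  have ρrec : ∀ m, (g.s m + ρ (m + 1)).bind (B m ∥ₖ B' m) = ρ m := by
    intro m
    rw [bind_add', hρ, hρ, Measure.bind_sum _ _ (Kernel.measurable _).aemeasurable]
    ext A hA
    rw [Measure.add_apply, Measure.sum_apply _ hA, Measure.sum_apply _ hA,
      tsum_eq_zero_add' (f := fun j => R j m A) ENNReal.summable]
    rfl
  have fs : ∀ m, IsFiniteMeasure (g.s m) := fun m =>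
    ⟨lt_of_le_of_lt (by rw [← smass m]; exact le_self_add) (measure_lt_top (g.nu m) Set.univ)⟩
  let Θ : ℕ → Measure ((E × E) × (E × E)) := fun m =>
    ((g.s m + ρ (m + 1)) ⊗ₘ (B m ∥ₖ B' m)).map Prod.swap
  have Θf : ∀ m, (Θ m).fst = ρ m := by
    intro m
    rw [← ρrec m]
    change (((g.s m + ρ (m + 1)) ⊗ₘ (B m ∥ₖ B' m)).map Prod.swap).fst = _
    rw [Measure.fst_map_swap, Measure.snd_compProd]
  have fΘ : ∀ m, IsFiniteMeasure (Θ m) := fun m => by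
    change IsFiniteMeasure (((g.s m + ρ (m + 1)) ⊗ₘ (B m ∥ₖ B' m)).map Prod.swap)
    infer_instance
  have hd : ∀ m, ρ m ⊗ₘ (Θ m).condKernel =
      ((g.s m + ρ (m + 1)) ⊗ₘ (B m ∥ₖ B' m)).map Prod.swap := by
    intro m
    conv_lhs => rw [← Θf]
    exact (Θ m).disintegrate (Θ m).condKernel
  have gen : ∀ m, ∀ (F : E × E → ENNReal) (h : E × E → ENNReal), Measurable F → Measurable h →
      ∫⁻ z, F z * ∫⁻ w, h w ∂((Θ m).condKernel z) ∂(ρ m) =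
        ∫⁻ w, h w * ∫⁻ z, F z ∂((B m ∥ₖ B' m) w) ∂(g.s m + ρ (m + 1)) := by
    intro m F h hF hh
    have h1 : ∫⁻ p, F p.1 * h p.2 ∂(ρ m ⊗ₘ (Θ m).condKernel) =
        ∫⁻ p, F p.1 * h p.2 ∂(((g.s m + ρ (m + 1)) ⊗ₘ (B m ∥ₖ B' m)).map Prod.swap) := by rw [hd]
    rw [Measure.lintegral_compProd (by fun_prop), lintegral_map (by fun_prop) measurable_swap,
      Measure.lintegral_compProd (by simp only [Prod.fst_swap, Prod.snd_swap]; fun_prop)] at h1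
    simp only [Prod.fst_swap, Prod.snd_swap] at h1
    rw [lintegral_congr fun z => (lintegral_const_mul (F z) hh).symm, h1]
    refine lintegral_congr fun w => ?_
    rw [lintegral_mul_const _ hF, mul_comm]
  refine ⟨⟨B, B', ρ, fun m => (Θ m).condKernel, mB, mB', fun m => inferInstance, ρf, ρs, ρM,
    hB, hB', ?_, ?_⟩⟩
  · intro m f h hf hh
    rw [gen m (fun z => f z.1) h (hf.comp measurable_fst) hh]
    refine lintegral_congr fun w => ?_
    rw [Kernel.lintegral_parallelComp _ (g := fun z : E × E => f z.1) (hf.comp measurable_fst)]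
    simp
  · intro m f h hf hh
    rw [gen m (fun z => f z.2) h (hf.comp measurable_snd) hh]
    refine lintegral_congr fun w => ?_
    rw [Kernel.lintegral_parallelComp _ (g := fun z : E × E => f z.2) (hf.comp measurable_snd)]
    simp
end

/-- The past of the process up to time `n`. -/
def past {Ω S : Type*} (Z : ℕ → Ω → S) (n : ℕ) (ω : Ω) : Fin (n + 1) → S := fun i => Z i.1 ω

lemma measurable_past {Ω S : Type*} [MeasurableSpace Ω] [MeasurableSpace S] {Z : ℕ → Ω → S}
    (hZ : ∀ n, Measurable (Z n)) (n : ℕ) : Measurable (past Z n) :=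
  measurable_pi_lambda _ fun i => hZ i.1

lemma exists_chain {S : Type*} [MeasurableSpace S] [StandardBorelSpace S] (z0 : S)
    (Q : ℕ → Kernel S S) [∀ n, IsMarkovKernel (Q n)] :
    ∃ (μ : Measure (ℕ → ℝ)) (Z : ℕ → (ℕ → ℝ) → S), IsProbabilityMeasure μ ∧
      (∀ n, Measurable (Z n)) ∧ μ.map (Z 0) = Measure.dirac z0 ∧
      ∀ n D, MeasurableSet D → (μ.restrict (past Z n ⁻¹' D)).map (Z (n + 1)) =
        ((μ.restrict (past Z n ⁻¹' D)).map (Z n)).bind (Q n) := by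
  have hne : Nonempty S := ⟨z0⟩
  let κ : (n : ℕ) → Kernel (Π i : Finset.Iic n, (fun _ : ℕ => S) i) ((fun _ : ℕ => S) (n + 1)) :=
    fun n => (Q n).comap (fun v => v ⟨n, Finset.mem_Iic.2 le_rfl⟩) (measurable_pi_apply _)
  have hκ : ∀ n, IsMarkovKernel (κ n) := fun n => by
    change IsMarkovKernel ((Q n).comap _ _); infer_instance
  let v0 : Π i : Finset.Iic 0, (fun _ : ℕ => S) i := fun _ => z0
  let μS : Measure (ℕ → S) := Kernel.traj (X := fun _ => S) κ 0 v0
  have hμS : IsProbabilityMeasure μS := by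
    change IsProbabilityMeasure (Kernel.traj (X := fun _ => S) κ 0 v0); infer_instance
  let C : ℕ → (ℕ → S) → S := fun n w => w n
  have hC : ∀ n, Measurable (C n) := fun n => measurable_pi_apply n
  have h0 : μS.map (C 0) = Measure.dirac z0 := by
    have h1 := Kernel.traj_map_frestrictLe_apply (X := fun _ => S) (κ := κ) 0 0 v0
    rw [Kernel.partialTraj_self, Kernel.id_apply] at h1
    have h2 : C 0 = (fun v : (Π i : Finset.Iic 0, (fun _ : ℕ => S) i) =>
        v ⟨0, Finset.mem_Iic.2 le_rfl⟩) ∘ Preorder.frestrictLe (π := fun _ => S) 0 := rfl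
    have hev : Measurable (fun v : (Π i : Finset.Iic 0, (fun _ : ℕ => S) i) =>
        v ⟨0, Finset.mem_Iic.2 le_rfl⟩) := measurable_pi_apply _
    rw [h2]
    refine (Measure.map_map (μ := μS) hev (Preorder.measurable_frestrictLe 0)).symm.trans ?_
    refine (congrArg (Measure.map _) h1).trans ?_
    exact Measure.map_dirac' hev _
  have hstep : ∀ n D, MeasurableSet D → (μS.restrict (past C n ⁻¹' D)).map (C (n + 1)) =
        ((μS.restrict (past C n ⁻¹' D)).map (C n)).bind (Q n) := by
    intro n D hD
    ext A hA
    let r : (Π i : Finset.Iic n, (fun _ : ℕ => S) i) → (Fin (n + 1) → S) :=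
      fun v i => v ⟨i.1, Finset.mem_Iic.2 (Nat.lt_succ_iff.1 i.2)⟩
    have hr : Measurable r := measurable_pi_lambda _ fun i => measurable_pi_apply _
    have hpast : past C n = r ∘ Preorder.frestrictLe (π := fun _ => S) n := rfl
    have key := Kernel.partialTraj_compProd_eq_map_traj (X := fun _ => S) (κ := κ)
      (Nat.zero_le n) (x₀ := v0)
    have k2 := congrArg (fun q => q ((r ⁻¹' D) ×ˢ A)) key
    simp only at k2
    rw [Measure.compProd_apply_prod (hr hD) hA, ← Kernel.traj_map_frestrictLe_apply,
      setLIntegral_map (hr hD) (Kernel.measurable_coe _ hA) (Preorder.measurable_frestrictLe n),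
      Measure.map_apply ((Preorder.measurable_frestrictLe n).prodMk (measurable_pi_apply _))
        ((hr hD).prod hA)] at k2
    have hp : Measurable (past C n) := measurable_past hC n
    rw [Measure.map_apply (hC _) hA, Measure.restrict_apply (hC _ hA),
      Measure.bind_apply hA (Kernel.measurable _).aemeasurable,
      lintegral_map (Kernel.measurable_coe _ hA) (hC _)]
    rw [Set.inter_comm]
    exact k2.symm
  obtain ⟨e, he⟩ := exists_measurableEmbedding_real S
  obtain ⟨g, hg, hge⟩ := he.exists_measurable_extend (g := (id : S → S)) measurable_id fun _ => hne
  let em : (ℕ → S) → (ℕ → ℝ) := fun w n => e (w n)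
  have hem : Measurable em :=
    measurable_pi_lambda _ fun n => he.measurable.comp (measurable_pi_apply n)
  let Z : ℕ → (ℕ → ℝ) → S := fun n ω => g (ω n)
  have hZ : ∀ n, Measurable (Z n) := fun n => hg.comp (measurable_pi_apply n)
  have hZC : ∀ n, Z n ∘ em = C n := fun n => by
    funext w
    exact congrFun hge (w n)
  have hpC : ∀ n, past Z n ∘ em = past C n := fun n => by
    funext w i
    exact congrFun hge (w i)
  refine ⟨μS.map em, Z, Measure.isProbabilityMeasure_map hem.aemeasurable, hZ, ?_, ?_⟩
  · rw [Measure.map_map (hZ 0) hem, hZC, h0]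
  · intro n D hD
    rw [Measure.restrict_map hem (measurable_past hZ n hD), Measure.map_map (hZ _) hem,
      Measure.map_map (hZ _) hem, hZC, hZC, ← Set.preimage_comp, hpC]
    exact hstep n D hD

lemma mcstep_of_sets {Ω S : Type*} [MeasurableSpace Ω] [MeasurableSpace S] (μ : Measure Ω)
    [IsProbabilityMeasure μ] (Q : ℕ → Kernel S S) [∀ n, IsMarkovKernel (Q n)] (Z : ℕ → Ω → S)
    (hZ : ∀ n, Measurable (Z n))
    (h : ∀ n A D, MeasurableSet A → MeasurableSet D → μ (past Z n ⁻¹' D ∩ Z (n + 1) ⁻¹' A) =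
      ∫⁻ ω in past Z n ⁻¹' D, Q n (Z n ω) A ∂μ) : MCStep μ Q Z := by
  intro n A hA φ hφ hφ1
  have hp := measurable_past hZ n
  have hq : Measurable fun ω => Q n (Z n ω) A := (Kernel.measurable_coe _ hA).comp (hZ n)
  have hL : (μ.restrict (Z (n + 1) ⁻¹' A)).map (past Z n) =
      (μ.withDensity (fun ω => Q n (Z n ω) A)).map (past Z n) := by
    ext D hD
    rw [Measure.map_apply hp hD, Measure.map_apply hp hD, Measure.restrict_apply (hp hD),
      withDensity_apply _ (hp hD), h n A D hA hD]
  have hφm : ∀ ν : Measure (Fin (n + 1) → S), AEStronglyMeasurable φ ν := fun ν =>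
    hφ.aestronglyMeasurable
  have e1 : ∫ ω, φ (past Z n ω) * A.indicator (fun _ => (1 : ℝ)) (Z (n + 1) ω) ∂μ =
      ∫ v, φ v ∂((μ.restrict (Z (n + 1) ⁻¹' A)).map (past Z n)) := by
    rw [integral_map hp.aemeasurable (hφm _), ← integral_indicator (hZ _ hA)]
    refine integral_congr_ae (Eventually.of_forall fun ω => ?_)
    by_cases hω : Z (n + 1) ω ∈ A
    · simp [Set.indicator, hω]
    · simp [Set.indicator, hω]
  have e2 : ∫ ω, φ (past Z n ω) * ((Q n) (Z n ω) A).toReal ∂μ =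
      ∫ v, φ v ∂((μ.withDensity (fun ω => Q n (Z n ω) A)).map (past Z n)) := by
    rw [integral_map hp.aemeasurable (hφm _), integral_withDensity_eq_integral_toReal_smul hq
      (Eventually.of_forall fun ω => measure_lt_top _ _)]
    refine integral_congr_ae (Eventually.of_forall fun ω => ?_)
    simp [mul_comm]
  exact e1.trans (hL ▸ e2.symm)

lemma mcstep_of_rect {Ω S : Type*} [MeasurableSpace Ω] [MeasurableSpace S] (μ : Measure Ω)
    [IsProbabilityMeasure μ] (Q : ℕ → Kernel S S) [∀ n, IsMarkovKernel (Q n)] (Z : ℕ → Ω → S)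
    (hZ : ∀ n, Measurable (Z n))
    (h : ∀ n A, MeasurableSet A → ∀ T : ℕ → Set S, (∀ i, MeasurableSet (T i)) →
      μ ({ω | ∀ i ≤ n, Z i ω ∈ T i} ∩ Z (n + 1) ⁻¹' A) =
      ∫⁻ ω in {ω | ∀ i ≤ n, Z i ω ∈ T i}, Q n (Z n ω) A ∂μ) : MCStep μ Q Z := by
  refine mcstep_of_sets μ Q Z hZ fun n A D hA hD => ?_
  have hp := measurable_past hZ n
  have hq : Measurable fun ω => Q n (Z n ω) A := (Kernel.measurable_coe _ hA).comp (hZ n)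
  have rect : ∀ T : Fin (n + 1) → Set S, (∀ i, MeasurableSet (T i)) →
      μ (past Z n ⁻¹' (Set.univ.pi T) ∩ Z (n + 1) ⁻¹' A) =
        ∫⁻ ω in past Z n ⁻¹' (Set.univ.pi T), Q n (Z n ω) A ∂μ := by
    intro T hT
    have := h n A hA (fun i => if hi : i < n + 1 then T ⟨i, hi⟩ else Set.univ)
      (fun i => by by_cases hi : i < n + 1 <;> simp [hi, hT])
    have hset : {ω | ∀ i ≤ n, Z i ω ∈ (if hi : i < n + 1 then T ⟨i, hi⟩ else Set.univ)} =
        past Z n ⁻¹' (Set.univ.pi T) := by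
      ext ω
      simp only [Set.mem_ofPred_eq, Set.mem_preimage, Set.mem_pi, Set.mem_univ, true_implies, past]
      constructor
      · intro hh i
        have := hh i.1 (Nat.lt_succ_iff.1 i.2)
        rw [dif_pos i.2] at this
        exact this
      · intro hh i hi
        rw [dif_pos (Nat.lt_succ_iff.2 hi)]
        exact hh ⟨i, Nat.lt_succ_iff.2 hi⟩
    rw [hset] at this
    exact this
  have hL : (μ.restrict (Z (n + 1) ⁻¹' A)).map (past Z n) =
      (μ.withDensity (fun ω => Q n (Z n ω) A)).map (past Z n) := by
    have ev : ∀ T : Fin (n + 1) → Set S, (∀ i, MeasurableSet (T i)) →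
      ((μ.restrict (Z (n + 1) ⁻¹' A)).map (past Z n)) (Set.univ.pi T) =
      ((μ.withDensity (fun ω => Q n (Z n ω) A)).map (past Z n)) (Set.univ.pi T) := by
      intro T hT
      have hD := MeasurableSet.univ_pi hT
      rw [Measure.map_apply hp hD, Measure.map_apply hp hD, Measure.restrict_apply (hp hD),
        withDensity_apply _ (hp hD), rect T hT]
    refine ext_of_generate_finite _ generateFrom_pi.symm isPiSystem_pi ?_ ?_
    · rintro _ ⟨T, hT, rfl⟩
      exact ev T fun i => hT i (Set.mem_univ i)
    · simpa using ev (fun _ => Set.univ) fun _ => .univ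
  have := congrArg (fun q => q D) hL
  rwa [Measure.map_apply hp hD, Measure.map_apply hp hD, Measure.restrict_apply (hp hD),
      withDensity_apply _ (hp hD)] at this

section
variable {E : Type*} [MetricSpace E] [PolishSpace E] [MeasurableSpace E] [BorelSpace E]
  [PartialOrder E] [OrderClosedTopology E]

lemma coord_chain {Ω : Type*} [MeasurableSpace Ω] (P : Kernel E E) [IsMarkovKernel P]
    (μ : Measure Ω) [IsProbabilityMeasure μ] (Z : ℕ → Ω → E × E) (hZ : ∀ n, Measurable (Z n))
    (Q : ℕ → Kernel (E × E) (E × E)) [∀ n, IsMarkovKernel (Q n)]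
    (hstep : ∀ n D, MeasurableSet D → (μ.restrict (past Z n ⁻¹' D)).map (Z (n + 1)) =
        ((μ.restrict (past Z n ⁻¹' D)).map (Z n)).bind (Q n))
    (c : E × E → E) (hc : Measurable c)
    (H1 : ∀ m, ∀ᵐ z ∂(μ.map (Z m)), z ∈ MM E → Q m z (MM E)ᶜ = 0 ∧ (Q m z).map c = P (c z))
    (ρ s : ℕ → Measure (E × E)) (ν : ℕ → Measure E) (B : ℕ → Kernel E E)
    (mB : ∀ m, IsMarkovKernel (B m))
    (H0 : (μ.map (Z 0)).restrict (MM E)ᶜ = ρ 0)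
    (hρM : ∀ m, ρ m (MM E) = 0) (hsM : ∀ m, s m (MM E)ᶜ = 0)
    (hcρ : ∀ m, (ρ m).map c = ν m)
    (hθ : ∀ m, (s m + ρ (m + 1)).map c = (ν m).bind P)
    (hQ : ∀ m, ∀ (f : E → ENNReal) (h : E × E → ENNReal), Measurable f → Measurable h →
      ∫⁻ z, f (c z) * ∫⁻ w, h w ∂(Q m z) ∂(ρ m) =
        ∫⁻ w, h w * ∫⁻ x, f x ∂(B m (c w)) ∂(s m + ρ (m + 1)))
    (hB : ∀ m, ∀ f h : E → ENNReal, Measurable f → Measurable h →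
      ∫⁻ w, h w * ∫⁻ x, f x ∂(B m w) ∂((ν m).bind P) = ∫⁻ x, f x * ∫⁻ w, h w ∂(P x) ∂(ν m)) :
    MCStep μ (fun _ => P) (fun n ω => c (Z n ω)) ∧
      ∀ m, μ (Z m ⁻¹' (MM E)ᶜ) ≤ ρ m Set.univ := by
  have mM : MeasurableSet (MM E) := measurableSet_MM
  have mG : ∀ m (T : ℕ → Set E), (∀ i, MeasurableSet (T i)) →
      ∃ D : Set (Fin (m + 1) → E × E), MeasurableSet D ∧
        {ω | ∀ i ≤ m, c (Z i ω) ∈ T i} = past Z m ⁻¹' D := by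
    intro m T hT
    refine ⟨⋂ i : Fin (m + 1), (fun v => c (v i)) ⁻¹' (T i), MeasurableSet.iInter fun i =>
      (hc.comp (measurable_pi_apply i)) (hT i), ?_⟩
    ext ω
    simp only [Set.mem_ofPred_eq, Set.mem_preimage, Set.mem_iInter, past]
    exact ⟨fun h i => h i.1 (Nat.lt_succ_iff.1 i.2), fun h i hi => h ⟨i, Nat.lt_succ_iff.2 hi⟩⟩
  have Λle : ∀ m (G : Set Ω), (μ.restrict G).map (Z m) ≤ μ.map (Z m) := fun m G =>
    Measure.map_mono Measure.restrict_le_self (hZ m)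
  have good : ∀ m (T : ℕ → Set E), (∀ i, MeasurableSet (T i)) →
      ∃ φ : E → ENNReal, Measurable φ ∧ (∀ x, φ x ≤ 1) ∧
        ((μ.restrict {ω | ∀ i ≤ m, c (Z i ω) ∈ T i}).map (Z m)).restrict (MM E)ᶜ =
          (ρ m).withDensity (fun z => φ (c z)) := by
    intro m T hT
    induction m with
    | zero =>
      refine ⟨(T 0).indicator 1, measurable_one.indicator (hT 0),
        fun x => Set.indicator_le_self' (by simp) x, ?_⟩
      have e : {ω | ∀ i ≤ 0, c (Z i ω) ∈ T i} = Z 0 ⁻¹' (c ⁻¹' T 0) := by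
        ext ω; simp
      rw [e, ← Measure.restrict_map (hZ 0) (hc (hT 0)), Measure.restrict_comm mM.compl, H0]
      have e2 : (fun z => (T 0).indicator (1 : E → ENNReal) (c z)) = (c ⁻¹' T 0).indicator 1 := by
        ext z; simp only [Set.indicator, Set.mem_preimage]; rfl
      rw [e2, withDensity_indicator_one (hc (hT 0))]
    | succ m ih =>
      obtain ⟨φ, hφ, hφ1, hφe⟩ := ih
      obtain ⟨D, hD, hDe⟩ := mG m T hT
      set G := {ω | ∀ i ≤ m, c (Z i ω) ∈ T i} with hG
      have mGm : MeasurableSet G := by rw [hDe]; exact measurable_past hZ m hD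
      have hst : (μ.restrict G).map (Z (m + 1)) = ((μ.restrict G).map (Z m)).bind (Q m) := by
        rw [hDe]; exact hstep m D hD
      have hψ : Measurable fun w => ∫⁻ x, φ x ∂(B m w) := hφ.lintegral_kernel
      refine ⟨(T (m + 1)).indicator fun w => ∫⁻ x, φ x ∂(B m w), hψ.indicator (hT _), ?_, ?_⟩
      · intro x
        refine (Set.indicator_le_self' (by simp) x).trans ?_
        calc _ ≤ ∫⁻ _, 1 ∂(B m x) := lintegral_mono hφ1
          _ = 1 := by simp
      · have e : {ω | ∀ i ≤ m + 1, c (Z i ω) ∈ T i} = Z (m + 1) ⁻¹' (c ⁻¹' T (m + 1)) ∩ G := by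
          ext ω
          simp only [hG, Set.mem_ofPred_eq, Set.mem_inter_iff, Set.mem_preimage]
          constructor
          · exact fun h => ⟨h _ le_rfl, fun i hi => h i (by omega)⟩
          · rintro ⟨h1, h2⟩ i hi
            rcases Nat.lt_or_ge m i with h | h
            · obtain rfl : i = m + 1 := by omega
              exact h1
            · exact h2 i h
        rw [e, ← Measure.restrict_restrict (hZ _ (hc (hT _))),
          ← Measure.restrict_map (hZ _) (hc (hT _)), hst]
        set Λ := (μ.restrict G).map (Z m) with hΛ
        ext A hA
        have mU : MeasurableSet (A ∩ (MM E)ᶜ ∩ c ⁻¹' T (m + 1)) :=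
          (hA.inter mM.compl).inter (hc (hT _))
        rw [Measure.restrict_apply hA, Measure.restrict_apply (hA.inter mM.compl),
          Measure.bind_apply mU (Kernel.measurable _).aemeasurable, withDensity_apply _ hA]
        set U := A ∩ (MM E)ᶜ ∩ c ⁻¹' T (m + 1) with hU
        have i1 : ∫⁻ z in MM E, Q m z U ∂Λ = 0 := by
          rw [← lintegral_zero (μ := Λ.restrict (MM E))]
          refine setLIntegral_congr_fun_ae mM ?_
          filter_upwards [(Λle m G).absolutelyContinuous.ae_le (H1 m)] with z hz hzM
          exact measure_mono_null (fun w hw => hw.1.2) (hz hzM).1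
        have i2 : ∫⁻ z in (MM E)ᶜ, Q m z U ∂Λ =
            ∫⁻ w, U.indicator 1 w * ∫⁻ x, φ x ∂(B m (c w)) ∂(s m + ρ (m + 1)) := by
          rw [hφe, lintegral_withDensity_eq_lintegral_mul _ (f := fun z => φ (c z)) (hφ.comp hc)
            (Kernel.measurable_coe _ mU), ← hQ m φ _ hφ (measurable_one.indicator mU)]
          refine lintegral_congr fun z => ?_
          simp [lintegral_indicator_one mU]
        rw [← lintegral_add_compl _ mM, i1, zero_add, i2, lintegral_add_measure]
        have j1 : ∫⁻ w, U.indicator 1 w * ∫⁻ x, φ x ∂(B m (c w)) ∂(s m) = 0 := by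
          rw [← lintegral_zero (μ := s m)]
          refine lintegral_congr_ae ?_
          have : ∀ᵐ w ∂(s m), w ∈ MM E := hsM m
          filter_upwards [this] with w hw
          rw [Set.indicator_of_notMem (fun h => h.1.2 hw), zero_mul]
        rw [j1, zero_add, ← lintegral_indicator hA]
        refine lintegral_congr_ae ?_
        have : ∀ᵐ w ∂(ρ (m + 1)), w ∉ MM E := measure_eq_zero_iff_ae_notMem.1 (hρM _)
        filter_upwards [this] with w hw
        by_cases h1 : w ∈ A
        · by_cases h2 : c w ∈ T (m + 1)
          · have : w ∈ U := ⟨⟨h1, hw⟩, h2⟩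
            simp [h1, h2, this]
          · have : w ∉ U := fun h => h2 h.2
            simp [h1, h2, this]
        · have : w ∉ U := fun h => h1 h.1.1
          simp [h1, this]
  refine ⟨mcstep_of_rect μ _ _ (fun n => hc.comp (hZ n)) ?_, ?_⟩
  · intro n A hA T hT
    obtain ⟨φ, hφ, hφ1, hφe⟩ := good n T hT
    obtain ⟨D, hD, hDe⟩ := mG n T hT
    set G := {ω | ∀ i ≤ n, c (Z i ω) ∈ T i} with hG
    have mGm : MeasurableSet G := by rw [hDe]; exact measurable_past hZ n hD
    have hst : (μ.restrict G).map (Z (n + 1)) = ((μ.restrict G).map (Z n)).bind (Q n) := by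
      rw [hDe]; exact hstep n D hD
    have e1 : μ (G ∩ (fun ω => c (Z (n + 1) ω)) ⁻¹' A) =
        (μ.restrict G).map (Z (n + 1)) (c ⁻¹' A) := by
      rw [Measure.map_apply (hZ _) (hc hA), Measure.restrict_apply (hZ _ (hc hA)), Set.inter_comm]
      rfl
    have e2 : ∫⁻ ω in G, P (c (Z n ω)) A ∂μ = ∫⁻ z, P (c z) A ∂((μ.restrict G).map (Z n)) := by
      rw [lintegral_map (f := fun z => P (c z) A) ((Kernel.measurable_coe _ hA).comp hc) (hZ n)]
    rw [e1, e2, hst, Measure.bind_apply (hc hA) (Kernel.measurable _).aemeasurable]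
    set Λ := (μ.restrict G).map (Z n) with hΛ
    rw [← lintegral_add_compl _ mM, ← lintegral_add_compl (fun z => P (c z) A) mM]
    congr 1
    · refine setLIntegral_congr_fun_ae mM ?_
      filter_upwards [(Λle n G).absolutelyContinuous.ae_le (H1 n)] with z hz hzM
      rw [← (hz hzM).2, Measure.map_apply hc hA]
    · have mP : Measurable fun z => P (c z) A := (Kernel.measurable_coe _ hA).comp hc
      rw [hφe, lintegral_withDensity_eq_lintegral_mul _ (f := fun z => φ (c z)) (hφ.comp hc)
            (Kernel.measurable_coe _ (hc hA)),
          lintegral_withDensity_eq_lintegral_mul _ (f := fun z => φ (c z)) (hφ.comp hc) mP]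
      have k1 := hQ n φ ((c ⁻¹' A).indicator 1) hφ (measurable_one.indicator (hc hA))
      have k2 := hB n φ (A.indicator 1) hφ (measurable_one.indicator hA)
      simp only [lintegral_indicator_one (hc hA)] at k1
      simp only [lintegral_indicator_one hA] at k2
      have k3 : ∫⁻ w, (c ⁻¹' A).indicator 1 w * ∫⁻ x, φ x ∂(B n (c w)) ∂(s n + ρ (n + 1)) =
          ∫⁻ w, A.indicator 1 w * ∫⁻ x, φ x ∂(B n w) ∂((ν n).bind P) := by
        rw [← hθ, lintegral_map (f := fun w => A.indicator 1 w * ∫⁻ x, φ x ∂(B n w))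
          ((measurable_one.indicator hA).mul hφ.lintegral_kernel) hc]
        rfl
      have k4 : ∫⁻ x, φ x * P x A ∂(ν n) = ∫⁻ z, φ (c z) * P (c z) A ∂(ρ n) := by
        rw [← hcρ, lintegral_map (f := fun x => φ x * P x A) (hφ.mul (Kernel.measurable_coe _ hA)) hc]
      exact k1.trans (k3.trans (k2.trans k4))
  · intro m
    obtain ⟨φ, hφ, hφ1, hφe⟩ := good m (fun _ => Set.univ) (fun _ => .univ)
    have := congrArg (fun q => q Set.univ) hφe
    simp only [Set.mem_univ, implies_true, Set.ofPred_true, Measure.restrict_univ] at this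
    rw [Measure.restrict_apply .univ, Set.univ_inter, Measure.map_apply (hZ m) mM.compl,
      withDensity_apply _ .univ, Measure.restrict_univ] at this
    rw [this]
    calc _ ≤ ∫⁻ _, 1 ∂(ρ m) := lintegral_mono fun z => hφ1 _
      _ = _ := by simp
end

/-- Lemma 3.6: if `C × C` is achievable and there are Borel sets `A ⪯ B`,
`ε > 0` and `N ≥ 1` with `P⁽ᴺ⁾(x, A) ≥ ε` and `P⁽ᴺ⁾(x, B) ≥ ε` for all `x ∈ C`, then the
set `M = {(x,y) : x ⪯ y}` is achievable. -/
theorem stmt13 {E : Type*} [MetricSpace E] [PolishSpace E] [MeasurableSpace E] [BorelSpace E]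
    [PartialOrder E] [OrderClosedTopology E]
    (P : Kernel E E) [IsMarkovKernel P] (hmono : MonotoneKernel P)
    (C : Set E) (hCm : MeasurableSet C)
    (hach : Achievable P (C ×ˢ C))
    (A B : Set E) (hAm : MeasurableSet A) (hBm : MeasurableSet B)
    (hAB : ∀ a ∈ A, ∀ b ∈ B, a ≤ b)
    (ε : ENNReal) (hε : 0 < ε) (N : ℕ) (hN : 1 ≤ N)
    (hSA : ∀ x ∈ C, ε ≤ kpow P N x A) (hSB : ∀ x ∈ C, ε ≤ kpow P N x B) :
    Achievable P {p : E × E | p.1 ≤ p.2} := by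
  classical
  have hP := ker_mono P hmono
  obtain ⟨δ, hδ0, hδ1, hub⟩ :=
    uniform_bound P hmono C hCm hach A B hAm hBm hAB ε hε N hSA hSB
  intro x y
  obtain ⟨g⟩ := exists_GD P x y
  have ht := g.tendsto δ hδ0 hδ1 hub
  obtain ⟨a⟩ := exists_AD g ht
  have mM : MeasurableSet (MM E) := measurableSet_MM
  have fnu := g.fnu
  have fnu' := g.fnu'
  have mQa := a.mQ
  have hK : ∀ l : {μ : Measure (E × E) // IsProbabilityMeasure μ},
      ∃ K : Kernel (E × E) (E × E), IsMarkovKernel K ∧ ∀ᵐ z ∂(l.1.restrict (MM E)),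
        K z (MM E)ᶜ = 0 ∧ (K z).map Prod.fst = P z.1 ∧ (K z).map Prod.snd = P z.2 := by
    rintro ⟨l, hl⟩
    exact cond_strassen P hP (l.restrict (MM E))
      (by rw [Measure.restrict_apply mM.compl]; simp)
  choose K mK hK using hK
  let Qf : ℕ → {μ : Measure (E × E) // IsProbabilityMeasure μ} → Kernel (E × E) (E × E) :=
    fun m l => Kernel.piecewise mM (K l) (a.Qa m)
  have mQf : ∀ m l, IsMarkovKernel (Qf m l) := fun m l => by
    change IsMarkovKernel (Kernel.piecewise mM (K l) (a.Qa m)); infer_instance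
  let L : ℕ → {μ : Measure (E × E) // IsProbabilityMeasure μ} := fun m =>
    Nat.rec ⟨Measure.dirac (x, y), inferInstance⟩ (fun m l => ⟨l.1.bind (Qf m l), by
      have := l.2
      exact ⟨by rw [bind_univ]; exact measure_univ⟩⟩) m
  have L0 : (L 0).1 = Measure.dirac (x, y) := rfl
  have Ls : ∀ m, (L (m + 1)).1 = (L m).1.bind (Qf m (L m)) := fun m => rfl
  obtain ⟨Q, hQd⟩ : ∃ Q : ℕ → Kernel (E × E) (E × E), ∀ m, Q m = Qf m (L m) := ⟨_, fun _ => rfl⟩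
  have mQ : ∀ m, IsMarkovKernel (Q m) := fun m => by rw [hQd]; exact mQf _ _
  have QM : ∀ m z, z ∈ MM E → Q m z = K (L m) z := fun m z hz => by
    rw [hQd]; simp only [Qf, Kernel.piecewise_apply, if_pos hz]
  have QN : ∀ m z, z ∉ MM E → Q m z = a.Qa m z := fun m z hz => by
    rw [hQd]; simp only [Qf, Kernel.piecewise_apply, if_neg hz]
  obtain ⟨μ, Z, hμ, hZ, hZ0, hstep⟩ := exists_chain (x, y) Q
  have hL : ∀ m, μ.map (Z m) = (L m).1 := by
    intro m
    induction m with
    | zero => rw [hZ0, L0]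
    | succ m ih =>
      have := hstep m Set.univ .univ
      simp only [Set.preimage_univ, Measure.restrict_univ] at this
      rw [this, ih, Ls, hQd]
  have H1 : ∀ m, ∀ᵐ z ∂(μ.map (Z m)), z ∈ MM E → Q m z (MM E)ᶜ = 0 ∧
      (Q m z).map Prod.fst = P z.1 ∧ (Q m z).map Prod.snd = P z.2 := by
    intro m
    rw [hL]
    filter_upwards [(ae_restrict_iff' mM).1 (hK (L m))] with z hz hzM
    rw [QM m z hzM]
    exact hz hzM
  have H0 : (μ.map (Z 0)).restrict (MM E)ᶜ = a.ρ 0 := by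
    rw [hZ0]
    by_cases hxy : x ≤ y
    · have h1 : a.ρ 0 = 0 := by
        rw [← Measure.measure_univ_eq_zero]
        have := a.hf 0
        rw [(g.zero_le hxy).1] at this
        have := congrArg (fun q => q Set.univ) this
        simpa [Measure.map_apply measurable_fst .univ] using this
      rw [h1, Measure.restrict_eq_zero, Measure.dirac_apply' _ mM.compl]
      have : (x, y) ∈ MM E := hxy
      simp [this]
    · have hn : (x, y) ∉ MM E := hxy
      have r1 : (Measure.dirac (x, y)).restrict (MM E)ᶜ = Measure.dirac (x, y) := by
        rw [MeasureTheory.restrict_dirac' mM.compl, if_pos]; exact hn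
      have mx : MeasurableSet ({x} : Set E) := measurableSet_singleton x
      have my : MeasurableSet ({y} : Set E) := measurableSet_singleton y
      have f1 := a.hf 0
      have f2 := a.hs 0
      rw [(g.zero_nle hxy).1] at f1
      rw [(g.zero_nle hxy).2] at f2
      have a1 : a.ρ 0 (Prod.fst ⁻¹' {x}ᶜ) = 0 := by
        rw [← Measure.map_apply measurable_fst mx.compl, f1, Measure.dirac_apply' _ mx.compl]; simp
      have a2 : a.ρ 0 (Prod.snd ⁻¹' {y}ᶜ) = 0 := by
        rw [← Measure.map_apply measurable_snd my.compl, f2, Measure.dirac_apply' _ my.compl]; simp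
      have a3 : a.ρ 0 Set.univ = 1 := by
        rw [← Set.preimage_univ (f := Prod.fst), ← Measure.map_apply measurable_fst .univ, f1]
        simp
      have ae1 : ∀ᵐ z ∂(a.ρ 0), z = (x, y) := by
        have b1 := measure_eq_zero_iff_ae_notMem.1 a1
        have b2 := measure_eq_zero_iff_ae_notMem.1 a2
        filter_upwards [b1, b2] with z h1 h2
        simp only [Set.mem_preimage, Set.mem_compl_iff, Set.mem_singleton_iff, not_not] at h1 h2
        exact Prod.ext h1 h2
      rw [r1]
      ext S hS
      rw [Measure.dirac_apply' _ hS]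
      by_cases hS' : (x, y) ∈ S
      · rw [Set.indicator_of_mem hS']
        have : a.ρ 0 S = a.ρ 0 Set.univ := by
          refine measure_congr ?_
          filter_upwards [ae1] with z hz
          rw [hz]
          exact propext ⟨fun _ => trivial, fun _ => hS'⟩
        rw [this, a3]; rfl
      · rw [Set.indicator_of_notMem hS']
        symm
        rw [measure_eq_zero_iff_ae_notMem]
        filter_upwards [ae1] with z hz
        rw [hz]; exact hS'
  have hQa : ∀ m, ∀ (F h : E × E → ENNReal),
      ∫⁻ z, F z * ∫⁻ w, h w ∂(Q m z) ∂(a.ρ m) = ∫⁻ z, F z * ∫⁻ w, h w ∂(a.Qa m z) ∂(a.ρ m) := by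
    intro m F h
    refine lintegral_congr_ae ?_
    filter_upwards [measure_eq_zero_iff_ae_notMem.1 (a.hM m)] with z hz
    rw [QN m z hz]
  have c1 := coord_chain P μ Z hZ Q hstep Prod.fst measurable_fst
    (fun m => (H1 m).mono fun z hz hzM => ⟨(hz hzM).1, (hz hzM).2.1⟩) a.ρ g.s g.nu a.B a.mB H0
    a.hM g.hs a.hf (fun m => by rw [Measure.map_add _ _ measurable_fst, a.hf, g.step])
    (fun m f h hf hh => by rw [hQa m (fun z => f z.1)]; exact a.hQ m f h hf hh) a.hB
  have c2 := coord_chain P μ Z hZ Q hstep Prod.snd measurable_snd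
    (fun m => (H1 m).mono fun z hz hzM => ⟨(hz hzM).1, (hz hzM).2.2⟩) a.ρ g.s g.nu' a.B' a.mB' H0
    a.hM g.hs a.hs (fun m => by rw [Measure.map_add _ _ measurable_snd, a.hs, g.step'])
    (fun m f h hf hh => by rw [hQa m (fun z => f z.2)]; exact a.hQ' m f h hf hh) a.hB'
  have hZ0' : ∀ᵐ ω ∂μ, Z 0 ω = (x, y) := by
    have : ∀ᵐ z ∂(μ.map (Z 0)), z = (x, y) := by
      rw [hZ0]
      exact (ae_dirac_iff (p := fun z => z = (x, y)) (measurableSet_singleton (x, y))).2 rfl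
    exact ae_of_ae_map (hZ 0).aemeasurable this
  refine ⟨ℕ → ℝ, inferInstance, μ, fun n ω => (Z n ω).1, fun n ω => (Z n ω).2,
    ⟨⟨hμ, fun n => measurable_fst.comp (hZ n), hZ0'.mono fun ω h => congrArg Prod.fst h, c1.1⟩,
     ⟨hμ, fun n => measurable_snd.comp (hZ n), hZ0'.mono fun ω h => congrArg Prod.snd h, c2.1⟩,
     Q, mQ, ?_⟩, ?_⟩
  · refine mcstep_of_sets μ Q _ hZ fun n S D hS hD => ?_
    have h := congrArg (fun q => q S) (hstep n D hD)
    rw [Measure.map_apply (hZ _) hS, Measure.restrict_apply (hZ _ hS),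
      Measure.bind_apply hS (Kernel.measurable _).aemeasurable,
      lintegral_map (Kernel.measurable_coe _ hS) (hZ n), Set.inter_comm] at h
    exact h
  · have hz : μ {ω | ¬ ∃ n, Z n ω ∈ MM E} = 0 := by
      refine le_antisymm (ge_of_tendsto' ht fun m => ?_) zero_le
      calc μ {ω | ¬ ∃ n, Z n ω ∈ MM E} ≤ μ (Z m ⁻¹' (MM E)ᶜ) :=
          measure_mono (fun ω hω h => (hω : ¬ ∃ n, Z n ω ∈ MM E) ⟨m, h⟩)
        _ ≤ a.ρ m Set.univ := c1.2 m
        _ = g.nu m Set.univ := by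
          rw [← a.hf, Measure.map_apply measurable_fst .univ, Set.preimage_univ]
    exact hz
end

section
/- Let E be an ordered Polish space satisfying condition (BMC), and let P be a monotone Markov kernel on E. Assume condition (PR): there exist two points x₀ ⪯ y₀ such that the hitting times ν⁻ = min{n ≥ 1 : Xₙ^{x₀} ⪰ x₀} and ν⁺ = min{n ≥ 1 : Xₙ^{y₀} ⪯ y₀} have finite expectations. Then the Markov chain admits at least one stationary distribution. -/
open MeasureTheory ProbabilityTheory Filter Topology

/-- laws of the chain killed on hitting `U` -/
noncomputable def qmeas {E : Type*} [MeasurableSpace E] (P : Kernel E E) (U : Set E) (x : E) :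
    ℕ → Measure E
  | 0 => Measure.dirac x
  | n + 1 => ((qmeas P U x n).bind P).restrict Uᶜ

open scoped NNReal ENNReal

/-- resolvent of the killed chain -/
noncomputable def tmeas {E : Type*} [MeasurableSpace E] (P : Kernel E E) (U : Set E) (x : E)
    (s : ℝ≥0) : Measure E := Measure.sum fun j => s ^ j • qmeas P U x j

lemma tmeas_apply {E : Type*} [MeasurableSpace E] (P : Kernel E E) (U : Set E) (x : E)
    (s : ℝ≥0) {A : Set E} (hA : MeasurableSet A) :
    tmeas P U x s A = ∑' j, (s : ℝ≥0∞) ^ j * qmeas P U x j A := by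
  rw [tmeas, Measure.sum_apply _ hA]
  refine tsum_congr fun j => ?_
  rw [Measure.smul_apply, ENNReal.smul_def, smul_eq_mul, ENNReal.coe_pow]

lemma tmeas_bind {E : Type*} [MeasurableSpace E] (P : Kernel E E) (U : Set E) (x : E)
    (s : ℝ≥0) {A : Set E} (hA : MeasurableSet A) :
    (tmeas P U x s).bind P A = ∑' j, (s : ℝ≥0∞) ^ j * (qmeas P U x j).bind P A := by
  rw [Measure.bind_apply hA P.measurable.aemeasurable, tmeas, lintegral_sum_measure]
  refine tsum_congr fun j => ?_
  rw [Measure.bind_apply hA P.measurable.aemeasurable]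
  rw [lintegral_smul_measure, ENNReal.smul_def, smul_eq_mul, ENNReal.coe_pow]

lemma tmeas_eq {E : Type*} [MeasurableSpace E] (P : Kernel E E) {U : Set E} (hU : MeasurableSet U)
    (x : E) (s : ℝ≥0) {A : Set E} (hA : MeasurableSet A) :
    Measure.dirac x A + s * (tmeas P U x s).bind P A
      = tmeas P U x s A + s * (tmeas P U x s).bind P (A ∩ U) := by
  rw [tmeas_apply P U x s hA, tsum_eq_zero_add' ENNReal.summable]
  have h1 : ∑' j, (s : ℝ≥0∞) ^ (j + 1) * qmeas P U x (j + 1) A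
      = s * (tmeas P U x s).bind P (A ∩ Uᶜ) := by
    rw [tmeas_bind P U x s (hA.inter hU.compl), ← ENNReal.tsum_mul_left]
    refine tsum_congr fun j => ?_
    rw [qmeas, Measure.restrict_apply hA, pow_succ]
    ring
  rw [h1, pow_zero, one_mul, add_assoc, ← mul_add, add_comm ((tmeas P U x s).bind P (A ∩ Uᶜ)),
    ← Set.sdiff_eq, measure_inter_add_sdiff _ hU]
  rfl

lemma qmeas_finite {E : Type*} [MeasurableSpace E] (P : Kernel E E) [IsMarkovKernel P] (U : Set E)
    (x : E) (j : ℕ) : IsFiniteMeasure (qmeas P U x j) := by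
  induction j with
  | zero => rw [qmeas]; infer_instance
  | succ n ih => rw [qmeas]; infer_instance

lemma resolvent_meas {E : Type*} [MeasurableSpace E] (P : Kernel E E) [IsMarkovKernel P]
    {U : Set E} (hU : MeasurableSet U) (x : E) (hfin : ∑' j, qmeas P U x j Set.univ ≠ ∞) :
    ∃ m : ℝ≥0 → Measure E, (∀ s ≤ 1, IsProbabilityMeasure (m s)) ∧
      (∀ s ≤ 1, ∀ I, MeasurableSet I →
        (x ∈ I → (1 - s) + s * ((m s).bind P).real I ≤ (m s).real I) ∧
        (x ∈ I → U ⊆ I → (m s).real I = (1 - s) + s * ((m s).bind P).real I) ∧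
        (x ∉ I → (m s).real I ≤ s * ((m s).bind P).real I) ∧
        (x ∉ I → Disjoint I U → (m s).real I = s * ((m s).bind P).real I)) ∧
      (∀ s : ℕ → ℝ≥0, (∀ n, s n ≤ 1) → Tendsto s atTop (𝓝 1) → ∀ A, MeasurableSet A →
        Tendsto (fun n => (m (s n)).real A) atTop (𝓝 ((m 1).real A))) := by
  have hq := qmeas_finite P U x
  have htop : ∀ s ≤ 1, tmeas P U x s Set.univ ≠ ∞ := by
    intro s hs
    rw [tmeas_apply _ _ _ _ MeasurableSet.univ]
    refine ne_top_of_le_ne_top hfin (ENNReal.tsum_le_tsum fun j => ?_)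
    have : (s : ℝ≥0∞) ^ j ≤ 1 := pow_le_one₀ zero_le (by exact_mod_cast hs)
    calc _ ≤ 1 * qmeas P U x j Set.univ := by gcongr
      _ = _ := one_mul _
  have hfinT : ∀ s ≤ 1, IsFiniteMeasure (tmeas P U x s) := fun s hs => ⟨(htop s hs).lt_top⟩
  have hge : ∀ s, 1 ≤ tmeas P U x s Set.univ := by
    intro s
    rw [tmeas_apply _ _ _ _ MeasurableSet.univ]
    refine le_trans ?_ (ENNReal.le_tsum 0)
    simp [qmeas]
  let m : ℝ≥0 → Measure E := fun s => (tmeas P U x s Set.univ)⁻¹ • tmeas P U x s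
  have hmreal : ∀ s A, (m s).real A = (tmeas P U x s).real A / (tmeas P U x s).real Set.univ := by
    intro s A
    simp [m, measureReal_def, div_eq_inv_mul]
  have hbreal : ∀ s A, MeasurableSet A → ((m s).bind P).real A
      = ((tmeas P U x s).bind P).real A / (tmeas P U x s).real Set.univ := by
    intro s A hA
    simp only [m, measureReal_def]
    rw [Measure.bind_apply hA P.measurable.aemeasurable,
      Measure.bind_apply hA P.measurable.aemeasurable, lintegral_smul_measure]
    simp [div_eq_inv_mul]
  refine ⟨m, ?_, ?_, ?_⟩
  · intro s hs
    refine ⟨?_⟩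
    simp only [m, Measure.smul_apply, smul_eq_mul]
    exact ENNReal.inv_mul_cancel (by have := hge s; positivity) (htop s hs)
  · intro s hs I hI
    have := hfinT s hs
    have eqr : ∀ A, MeasurableSet A → (Measure.dirac x).real A
        + s * ((tmeas P U x s).bind P).real A
        = (tmeas P U x s).real A + s * ((tmeas P U x s).bind P).real (A ∩ U) := by
      intro A hA
      have h := congrArg ENNReal.toReal (tmeas_eq P hU x s hA)
      rw [ENNReal.toReal_add (by finiteness) (by finiteness),
        ENNReal.toReal_add (by finiteness) (by finiteness)] at h
      simpa [measureReal_def] using h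
    rw [hmreal, hbreal _ _ hI]
    set c := (tmeas P U x s).real Set.univ with hc
    have hc0 : 0 < c := by
      have := ENNReal.toReal_mono (htop s hs) (hge s)
      simp only [ENNReal.toReal_one] at this
      rw [hc, measureReal_def]; linarith
    have hcb : ((tmeas P U x s).bind P).real Set.univ = c := by
      rw [hc, measureReal_def, measureReal_def,
        Measure.bind_apply MeasurableSet.univ P.measurable.aemeasurable]
      simp
    have e1 := eqr I hI
    have e2 := eqr Set.univ MeasurableSet.univ
    rw [← hc, hcb, Set.univ_inter] at e2
    have hmono : ((tmeas P U x s).bind P).real (I ∩ U) ≤ ((tmeas P U x s).bind P).real U :=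
      measureReal_mono Set.inter_subset_right
    have hmono' := mul_le_mul_of_nonneg_left hmono s.2
    have hpos : 0 ≤ s * ((tmeas P U x s).bind P).real (I ∩ U) :=
      mul_nonneg s.2 measureReal_nonneg
    have hdu : (Measure.dirac x).real (Set.univ : Set E) = 1 := by simp
    have hform : ∀ a b : ℝ, a + s * (b / c) = (a * c + s * b) / c := by
      intro a b; field_simp
    have hd1 : x ∈ I → (Measure.dirac x).real I = 1 := by
      intro h; simp [measureReal_def, h]
    have hd0 : x ∉ I → (Measure.dirac x).real I = 0 := by
      intro h; simp [measureReal_def, Measure.dirac_apply' _ hI, h]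
    rw [hdu] at e2
    change (1:ℝ) + s * c = c + s * _ at e2
    refine ⟨fun hx => ?_, fun hx hUI => ?_, fun hx => ?_, fun hx hd => ?_⟩
    · rw [hform, div_le_div_iff_of_pos_right hc0]
      have := hd1 hx
      change s * _ ≤ (s:ℝ) * _ at hmono'
      linarith
    · rw [hform, div_left_inj' hc0.ne']
      have := hd1 hx
      rw [Set.inter_eq_right.mpr hUI] at e1
      linarith
    · rw [← mul_div_assoc, div_le_div_iff_of_pos_right hc0]
      have := hd0 hx
      linarith
    · rw [← mul_div_assoc, div_left_inj' hc0.ne']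
      have := hd0 hx
      rw [hd.inter_eq] at e1
      simp at e1
      linarith
  · intro s hs1 hs A hA
    have hT : ∀ A, MeasurableSet A → Tendsto (fun n => (tmeas P U x (s n)).real A) atTop
        (𝓝 ((tmeas P U x 1).real A)) := by
      intro A hA
      have hrep : ∀ r : ℝ≥0, (tmeas P U x r).real A = ∑' j, (r:ℝ) ^ j * (qmeas P U x j).real A := by
        intro r
        rw [measureReal_def, tmeas_apply _ _ _ _ hA, ENNReal.tsum_toReal_eq (by intro j; finiteness)]
        simp [measureReal_def]
      simp_rw [hrep]
      refine tendsto_tsum_of_dominated_convergence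
        (bound := fun j => (qmeas P U x j).real Set.univ) ?_ ?_ ?_
      · exact ENNReal.summable_toReal hfin
      · intro j
        have : Tendsto (fun n => ((s n : ℝ)) ^ j) atTop (𝓝 ((1:ℝ≥0):ℝ ) ) := by
          have h := (NNReal.tendsto_coe.mpr hs).pow j
          simpa using h
        simpa using this.mul_const ((qmeas P U x j).real A)
      · refine Eventually.of_forall fun n j => ?_
        rw [Real.norm_of_nonneg (by positivity)]
        calc _ ≤ 1 * (qmeas P U x j).real Set.univ := by
              gcongr
              · exact pow_le_one₀ (s n).2 (by exact_mod_cast hs1 n)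
              · finiteness
              · exact Set.subset_univ _
          _ = _ := one_mul _
    simp_rw [hmreal]
    refine (hT A hA).div (hT _ MeasurableSet.univ) ?_
    have := ENNReal.toReal_mono (htop 1 le_rfl) (hge 1)
    simp only [ENNReal.toReal_one] at this
    rw [measureReal_def]; linarith

lemma qmeas_chain {E Ω : Type*} [MeasurableSpace E] [MeasurableSpace Ω] (P : Kernel E E)
    [IsMarkovKernel P] {U : Set E} (hU : MeasurableSet U) (x : E) (μ : Measure Ω) (X : ℕ → Ω → E)
    (h : IsMChain P x μ X) (j : ℕ) {A : Set E} (hA : MeasurableSet A) :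
    qmeas P U x j A = μ ({ω | ∀ i, 1 ≤ i → i ≤ j → X i ω ∉ U} ∩ X j ⁻¹' A) := by
  obtain ⟨hμ, hX, h0, hstep⟩ := h
  have hSm : ∀ j, MeasurableSet {ω | ∀ i, 1 ≤ i → i ≤ j → X i ω ∉ U} := by
    intro j
    have : {ω | ∀ i, 1 ≤ i → i ≤ j → X i ω ∉ U}
        = ⋂ i, ⋂ (_ : 1 ≤ i), ⋂ (_ : i ≤ j), X i ⁻¹' Uᶜ := by
      ext; simp
    rw [this]
    exact MeasurableSet.iInter fun i => MeasurableSet.iInter fun _ =>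
      MeasurableSet.iInter fun _ => hX i hU.compl
  induction j generalizing A with
  | zero =>
    have h1 : {ω | ∀ i, 1 ≤ i → i ≤ 0 → X i ω ∉ U} ∩ X 0 ⁻¹' A = X 0 ⁻¹' A := by
      ext ω; simp only [Set.mem_inter_iff, and_iff_right_iff_imp]
      intro _ i h1 h2; omega
    rw [h1, ← Measure.map_apply (hX 0) hA, Measure.map_congr (g := fun _ => x) h0]
    simp [qmeas]
  | succ j ih =>
    set S := {ω | ∀ i, 1 ≤ i → i ≤ j → X i ω ∉ U} with hS
    have hq : qmeas P U x j = (μ.restrict S).map (X j) := by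
      ext B hB
      rw [ih hB, Measure.map_apply (hX j) hB, Measure.restrict_apply (hX j hB), Set.inter_comm]
    set B := A ∩ Uᶜ with hB
    have hBm : MeasurableSet B := hA.inter hU.compl
    rw [qmeas, Measure.restrict_apply hA, Measure.bind_apply hBm P.measurable.aemeasurable, hq,
      lintegral_map (P.measurable_coe hBm) (hX j)]
    have hset : {ω | ∀ i, 1 ≤ i → i ≤ j + 1 → X i ω ∉ U} ∩ X (j + 1) ⁻¹' A
        = S ∩ X (j + 1) ⁻¹' B := by
      ext ω
      constructor
      · rintro ⟨h1, h2⟩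
        exact ⟨fun i hi hij => h1 i hi (by omega), h2, h1 (j+1) (by omega) le_rfl⟩
      · rintro ⟨h1, h2, h3⟩
        refine ⟨fun i hi hij => ?_, h2⟩
        rcases Nat.lt_or_ge j i with h4 | h4
        · have : i = j + 1 := by omega
          subst this; exact h3
        · exact h1 i hi h4
    rw [hset]
    let D : Set (Fin (j + 1) → E) := {v | ∀ i : Fin (j + 1), 1 ≤ i.1 → v i ∉ U}
    have hD : MeasurableSet D := by
      have : D = ⋂ i : Fin (j+1), ⋂ (_ : 1 ≤ i.1), (fun v : Fin (j + 1) → E => v i) ⁻¹' Uᶜ := by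
        ext; simp [D]
      rw [this]
      exact MeasurableSet.iInter fun i => MeasurableSet.iInter fun _ =>
        measurable_pi_apply i hU.compl
    have hφ := hstep j B hBm (D.indicator fun _ => (1:ℝ)) (measurable_const.indicator hD)
      (by intro v; by_cases hv : v ∈ D <;> simp [hv])
    have hind : ∀ ω, D.indicator (fun _ => (1:ℝ)) (fun i : Fin (j+1) => X i.1 ω)
        = S.indicator (fun _ => (1:ℝ)) ω := by
      intro ω
      have : (fun i : Fin (j+1) => X i.1 ω) ∈ D ↔ ω ∈ S := by
        constructor
        · intro h i h1 h2; exact h ⟨i, by omega⟩ h1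
        · intro h i h1; exact h i.1 h1 (by omega)
      by_cases hω : ω ∈ S
      · rw [Set.indicator_of_mem hω, Set.indicator_of_mem (this.mpr hω)]
      · rw [Set.indicator_of_notMem hω, Set.indicator_of_notMem (fun h => hω (this.mp h))]
    simp_rw [hind] at hφ
    have hl : (fun ω => S.indicator (fun _ => (1:ℝ)) ω * B.indicator (fun _ => (1:ℝ)) (X (j+1) ω))
        = (S ∩ X (j + 1) ⁻¹' B).indicator 1 := by
      ext ω
      by_cases h1 : ω ∈ S <;> by_cases h2 : X (j+1) ω ∈ B <;> simp [h1, h2]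
    have hr : (fun ω => S.indicator (fun _ => (1:ℝ)) ω * ((P (X j ω)) B).toReal)
        = S.indicator (fun ω => ((P (X j ω)) B).toReal) := by
      ext ω
      by_cases h1 : ω ∈ S <;> simp [h1]
    rw [hl, hr, integral_indicator_one ((hSm j).inter (hX _ hBm)), integral_indicator (hSm j),
      integral_toReal (f := fun ω => P (X j ω) B) ((P.measurable_coe hBm).comp (hX j)).aemeasurable
        (Eventually.of_forall fun ω => measure_lt_top _ _), measureReal_def] at hφ
    refine ((ENNReal.toReal_eq_toReal_iff' (measure_ne_top _ _) ?_).mp hφ).symm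
    refine ne_top_of_le_ne_top (measure_ne_top (μ.restrict S) Set.univ) ?_
    calc _ ≤ ∫⁻ ω in S, 1 ∂μ := lintegral_mono fun ω => prob_le_one
      _ = _ := by simp

lemma qmeas_summable {E Ω : Type*} [MeasurableSpace E] [MeasurableSpace Ω] (P : Kernel E E)
    [IsMarkovKernel P] {U : Set E} (hU : MeasurableSet U) (x : E) (μ : Measure Ω) (X : ℕ → Ω → E)
    (h : IsMChain P x μ X) (hae : ∀ᵐ ω ∂μ, ∃ n, 1 ≤ n ∧ X n ω ∈ U)
    (hint : Integrable (fun ω => ((sInf {n : ℕ | 1 ≤ n ∧ X n ω ∈ U} : ℕ) : ℝ)) μ) :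
    ∑' j, qmeas P U x j Set.univ ≠ ∞ := by
  have hX := h.2.1
  have hSm : ∀ j, MeasurableSet {ω | ∀ i, 1 ≤ i → i ≤ j → X i ω ∉ U} := by
    intro j
    have : {ω | ∀ i, 1 ≤ i → i ≤ j → X i ω ∉ U}
        = ⋂ i, ⋂ (_ : 1 ≤ i), ⋂ (_ : i ≤ j), X i ⁻¹' Uᶜ := by
      ext; simp
    rw [this]
    exact MeasurableSet.iInter fun i => MeasurableSet.iInter fun _ =>
      MeasurableSet.iInter fun _ => hX i hU.compl
  have h1 : ∀ j, qmeas P U x j Set.univ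
      = ∫⁻ ω, {ω | ∀ i, 1 ≤ i → i ≤ j → X i ω ∉ U}.indicator 1 ω ∂μ := by
    intro j
    rw [qmeas_chain P hU x μ X h j MeasurableSet.univ, lintegral_indicator_one (hSm j)]
    simp
  simp_rw [h1]
  rw [← lintegral_tsum fun j => (measurable_one.indicator (hSm j)).aemeasurable]
  refine ne_top_of_le_ne_top hint.2.ne (lintegral_mono_ae ?_)
  filter_upwards [hae] with ω hω
  set N := sInf {n : ℕ | 1 ≤ n ∧ X n ω ∈ U} with hN
  have hmem : N ∈ {n : ℕ | 1 ≤ n ∧ X n ω ∈ U} := Nat.sInf_mem hω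
  rw [tsum_eq_sum (s := Finset.range N)]
  · calc _ ≤ ∑ j ∈ Finset.range N, (1 : ℝ≥0∞) := by
          refine Finset.sum_le_sum fun j _ => Set.indicator_le_self' (by simp) _
      _ = N := by simp
      _ ≤ _ := by simp
  · intro j hj
    refine Set.indicator_of_notMem (fun hmem' => ?_) _
    exact hmem' N hmem.1 (by simpa using hj) hmem.2

lemma le_of_measureReal_le {E : Type*} [MeasurableSpace E] {μ ν : Measure E} [IsFiniteMeasure μ]
    [IsFiniteMeasure ν] {A : Set E} (h : μ.real A ≤ ν.real A) : μ A ≤ ν A :=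
  (ENNReal.toReal_le_toReal (measure_ne_top _ _) (measure_ne_top _ _)).mp h

lemma kernel_mono_set {E : Type*} [MeasurableSpace E] [Preorder E] {P : Kernel E E}
    [IsMarkovKernel P] (hmono : MonotoneKernel P) {I : Set E} (hI : MeasurableSet I)
    (hIu : IsUpperSet I) : Monotone fun x => (P x).real I := by
  have h := hmono (I.indicator fun _ => (1:ℝ)) (measurable_const.indicator hI) ?_ ?_
  · have e : (fun x => ∫ y, I.indicator (fun _ => (1:ℝ)) y ∂(P x)) = fun x => (P x).real I := by
      ext x
      rw [integral_indicator hI]; simp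
    rwa [e] at h
  · intro a b hab
    by_cases ha : a ∈ I
    · simp [ha, hIu hab ha]
    · simp only [Set.indicator_of_notMem ha]
      exact Set.indicator_nonneg (fun _ _ => zero_le_one) _
  · intro x; by_cases hx : x ∈ I <;> simp [hx]

lemma lintegral_stoch {E : Type*} [MeasurableSpace E] [Preorder E] {μ ν : Measure E} {d : ℝ≥0∞}
    (h : ∀ I : Set E, MeasurableSet I → IsUpperSet I → μ I ≤ ν I + d) (f : E → ℝ)
    (hf : Measurable f) (hfm : Monotone f) (h0 : ∀ x, 0 ≤ f x) (h1 : ∀ x, f x ≤ 1) :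
    ∫⁻ x, ENNReal.ofReal (f x) ∂μ ≤ ∫⁻ x, ENNReal.ofReal (f x) ∂ν + d := by
  rw [lintegral_eq_lintegral_meas_lt μ (Eventually.of_forall h0) hf.aemeasurable,
    lintegral_eq_lintegral_meas_lt ν (Eventually.of_forall h0) hf.aemeasurable]
  calc _ ≤ ∫⁻ t in Set.Ioi (0:ℝ), (ν {a | t < f a} + (Set.Ioo (0:ℝ) 1).indicator (fun _ => d) t) := by
        refine setLIntegral_mono' measurableSet_Ioi fun t ht => ?_
        by_cases ht1 : t < 1
        · rw [Set.indicator_of_mem (Set.mem_Ioo.mpr ⟨ht, ht1⟩)]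
          refine h _ (measurableSet_lt measurable_const hf) fun a b hab ha => ?_
          exact lt_of_lt_of_le ha (hfm hab)
        · have : {a | t < f a} = ∅ := by
            ext a
            simp only [Set.mem_ofPred_eq, Set.mem_empty_iff_false, iff_false, not_lt]
            linarith [h1 a]
          simp [this]
    _ = (∫⁻ t in Set.Ioi (0:ℝ), ν {a | t < f a})
        + ∫⁻ t in Set.Ioi (0:ℝ), (Set.Ioo (0:ℝ) 1).indicator (fun _ => d) t := by
        rw [lintegral_add_right _ (measurable_const.indicator measurableSet_Ioo)]
    _ ≤ _ := by
        gcongr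
        rw [lintegral_indicator measurableSet_Ioo]
        calc _ ≤ d * volume (Set.Ioo (0:ℝ) 1) := by
              rw [lintegral_const, Measure.restrict_apply MeasurableSet.univ, Set.univ_inter]
              exact mul_le_mul_right (Measure.restrict_le_self _) d
          _ = d := by simp

lemma bind_stoch {E : Type*} [MeasurableSpace E] [Preorder E] {P : Kernel E E}
    [IsMarkovKernel P] (hmono : MonotoneKernel P) {μ ν : Measure E} {d : ℝ≥0∞}
    (h : ∀ I : Set E, MeasurableSet I → IsUpperSet I → μ I ≤ ν I + d)
    {I : Set E} (hI : MeasurableSet I) (hIu : IsUpperSet I) :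
    μ.bind P I ≤ ν.bind P I + d := by
  rw [Measure.bind_apply hI P.measurable.aemeasurable,
      Measure.bind_apply hI P.measurable.aemeasurable]
  have := lintegral_stoch h (fun x => (P x).real I) (P.measurable_coe hI).ennreal_toReal
    (kernel_mono_set hmono hI hIu) (fun x => measureReal_nonneg) (fun x => measureReal_le_one)
  simpa using this

lemma StochDom.bind {E : Type*} [MeasurableSpace E] [Preorder E] {P : Kernel E E}
    [IsMarkovKernel P] (hmono : MonotoneKernel P) {μ ν : Measure E}
    (h : StochDom μ ν) : StochDom (μ.bind P) (ν.bind P) := by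
  intro I hI hIu
  simpa using bind_stoch (d := 0) hmono (by simpa using (show ∀ I, MeasurableSet I → IsUpperSet I → μ I ≤ ν I from h)) hI hIu

lemma step_one {E : Type*} [MetricSpace E] [PolishSpace E] [MeasurableSpace E] [BorelSpace E]
    [PartialOrder E] [OrderClosedTopology E]
    (P : Kernel E E) [IsMarkovKernel P] (hmono : MonotoneKernel P)
    (hpr : PRCond P) :
    ∃ m₁ m₂ : Measure E, IsProbabilityMeasure m₁ ∧ IsProbabilityMeasure m₂ ∧
      StochDom m₁ (m₁.bind P) ∧ StochDom (m₂.bind P) m₂ ∧ StochDom m₁ m₂ := by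
  obtain ⟨x, y, hxy, ⟨Ω, _, μ, X, hX, hXae, hXint⟩, ⟨Ω', _, μ', X', hX', hXae', hXint'⟩⟩ := hpr
  obtain ⟨m, hmp, hm, hmt⟩ := resolvent_meas P (U := Set.Ici x) measurableSet_Ici x
    (qmeas_summable P measurableSet_Ici x μ X hX hXae hXint)
  obtain ⟨m', hmp', hm', hmt'⟩ := resolvent_meas P (U := Set.Iic y) measurableSet_Iic y
    (qmeas_summable P measurableSet_Iic y μ' X' hX' hXae' hXint')
  have p1 := hmp 1 le_rfl
  have p2 := hmp' 1 le_rfl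
  have dis : ∀ I : Set E, IsUpperSet I → y ∉ I → Disjoint I (Set.Iic y) := by
    intro I hI hy
    rw [Set.disjoint_left]
    intro a ha hay
    exact hy (hI hay ha)
  refine ⟨m 1, m' 1, p1, p2, ?_, ?_, ?_⟩
  · intro I hI hIu
    refine le_of_measureReal_le ?_
    obtain ⟨-, h2, h3, -⟩ := hm 1 le_rfl I hI
    by_cases hx : x ∈ I
    · rw [h2 hx (fun z hz => hIu hz hx)]; simp
    · simpa using h3 hx
  · intro I hI hIu
    refine le_of_measureReal_le ?_
    obtain ⟨h1, -, -, h4⟩ := hm' 1 le_rfl I hI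
    by_cases hx : y ∈ I
    · simpa using h1 hx
    · rw [h4 hx (dis I hIu hx)]; simp
  · have key : ∀ s : ℝ≥0, s < 1 → ∀ I, MeasurableSet I → IsUpperSet I →
        (m s).real I ≤ (m' s).real I := by
      intro s hs
      have q1 := hmp s hs.le
      have q2 := hmp' s hs.le
      have it : ∀ n : ℕ, ∀ I, MeasurableSet I → IsUpperSet I →
          (m s).real I ≤ (m' s).real I + (s:ℝ) ^ n := by
        intro n
        induction n with
        | zero =>
          intro I _ _
          have : (m s).real I ≤ 1 := measureReal_le_one
          have : 0 ≤ (m' s).real I := measureReal_nonneg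
          simp; linarith
        | succ n ih =>
          intro I hI hIu
          have hb : ((m s).bind P).real I ≤ ((m' s).bind P).real I + (s:ℝ) ^ n := by
            have := bind_stoch (d := (s:ℝ≥0∞) ^ n) hmono (μ := m s) (ν := m' s) ?_ hI hIu
            · have := ENNReal.toReal_mono (by finiteness) this
              rw [ENNReal.toReal_add (by finiteness) (by finiteness)] at this
              simpa [measureReal_def] using this
            · intro J hJ hJu
              have := ENNReal.ofReal_le_ofReal (ih J hJ hJu)
              rw [ENNReal.ofReal_add measureReal_nonneg (by positivity), ofReal_measureReal,
                ofReal_measureReal, ENNReal.ofReal_pow s.coe_nonneg, ENNReal.ofReal_coe_nnreal] at this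
              exact this
          have hb' := mul_le_mul_of_nonneg_left hb s.2
          change (s:ℝ) * _ ≤ s * _ at hb'
          obtain ⟨-, h2, h3, -⟩ := hm s hs.le I hI
          obtain ⟨h1', -, -, h4'⟩ := hm' s hs.le I hI
          have hs' : (s:ℝ) < 1 := by exact_mod_cast hs
          rw [pow_succ]
          by_cases hx : x ∈ I
          · have := h2 hx (fun z hz => hIu hz hx)
            have := h1' (hIu hxy hx)
            linarith
          · have := h3 hx
            by_cases hy : y ∈ I
            · have := h1' hy
              linarith
            · have := h4' hy (dis I hIu hy)
              linarith
      intro I hI hIu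
      have hs' : (s:ℝ) < 1 := by exact_mod_cast hs
      have lim : Tendsto (fun n : ℕ => (m' s).real I + (s:ℝ) ^ n) atTop (𝓝 ((m' s).real I + 0)) :=
        tendsto_const_nhds.add (tendsto_pow_atTop_nhds_zero_of_lt_one s.2 hs')
      rw [add_zero] at lim
      exact ge_of_tendsto' lim fun n => it n I hI hIu
    intro I hI hIu
    refine le_of_measureReal_le ?_
    obtain ⟨s, -, hs1, hst⟩ := exists_seq_strictMono_tendsto' (zero_lt_one (α := ℝ≥0))
    have hs1' : ∀ n, s n ≤ 1 := fun n => (hs1 n).2.le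
    exact le_of_tendsto_of_tendsto' (hmt s hs1' hst I hI) (hmt' s hs1' hst I hI)
      fun n => key _ (hs1 n).2 I hI hIu

lemma upper_sep {E : Type*} [MetricSpace E] [PolishSpace E] [MeasurableSpace E] [BorelSpace E]
    [PartialOrder E] [OrderClosedTopology E] {V B : Set E} (hV : MeasurableSet V)
    (hB : AnalyticSet B) (hBl : IsLowerSet B) (hd : Disjoint V B) :
    ∃ C : Set E, MeasurableSet C ∧ IsUpperSet C ∧ V ⊆ C ∧ Disjoint C B := by
  have step : ∀ C : {C : Set E // MeasurableSet C ∧ Disjoint C B},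
      ∃ C' : {C : Set E // MeasurableSet C ∧ Disjoint C B}, (upperClosure C.1 : Set E) ⊆ C'.1 := by
    rintro ⟨C, hC, hCB⟩
    have hup : AnalyticSet (upperClosure C : Set E) := by
      have h1 : (upperClosure C : Set E) = Prod.snd '' ({p : E × E | p.1 ≤ p.2} ∩ Prod.fst ⁻¹' C) := by
        ext z; simp only [coe_upperClosure, Set.mem_iUnion, Set.mem_Ici, Set.mem_image,
          Set.mem_inter_iff, Set.mem_ofPred_eq, Set.mem_preimage, Prod.exists]
        constructor
        · rintro ⟨a, ha, h⟩; exact ⟨a, z, ⟨h, ha⟩, rfl⟩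
        · rintro ⟨a, b, ⟨h, ha⟩, rfl⟩; exact ⟨a, ha, h⟩
      rw [h1]
      refine AnalyticSet.image_of_continuous ?_ continuous_snd
      exact ((isClosed_le continuous_fst continuous_snd).measurableSet.inter
        (measurable_fst hC)).analyticSet
    have hdis : Disjoint (upperClosure C : Set E) B := by
      rw [Set.disjoint_left]
      intro z hz hzB
      obtain ⟨a, ha, haz⟩ := mem_upperClosure.mp hz
      exact Set.disjoint_left.mp hCB ha (hBl haz hzB)
    obtain ⟨u, hu1, hu2, hu3⟩ := hup.measurablySeparable hB hdis
    exact ⟨⟨u, hu3, hu2.symm⟩, hu1⟩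
  choose next hnext using step
  let S : ℕ → {C : Set E // MeasurableSet C ∧ Disjoint C B} := fun n => next^[n] ⟨V, hV, hd⟩
  refine ⟨⋃ n, (S n).1, MeasurableSet.iUnion fun n => (S n).2.1, ?_, ?_, ?_⟩
  · intro a b hab ha
    obtain ⟨n, hn⟩ := Set.mem_iUnion.mp ha
    refine Set.mem_iUnion.mpr ⟨n + 1, ?_⟩
    have : S (n + 1) = next (S n) := Function.iterate_succ_apply' _ _ _
    rw [this]
    exact hnext _ (mem_upperClosure.mpr ⟨a, hn, hab⟩)
  · exact Set.subset_iUnion (fun n => (S n).1) 0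
  · exact Set.disjoint_iUnion_left.mpr fun n => (S n).2.2

lemma exists_sep_family (E : Type*) [MetricSpace E] [PolishSpace E] [MeasurableSpace E]
    [BorelSpace E] [PartialOrder E] [OrderClosedTopology E] :
    ∃ U : ℕ → Set E, (∀ k, MeasurableSet (U k)) ∧ (∀ k, IsUpperSet (U k)) ∧
      ∀ x y, (∀ k, x ∈ U k → y ∈ U k) → x ≤ y := by
  classical
  let b := TopologicalSpace.countableBasis E
  have hb := TopologicalSpace.isBasis_countableBasis E
  have key : ∀ V W : Set E, ∃ C : Set E, MeasurableSet C ∧ IsUpperSet C ∧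
      (V ∈ b → W ∈ b → (∀ v ∈ V, ∀ w ∈ W, ¬ v ≤ w) → V ⊆ C ∧ Disjoint C W) := by
    intro V W
    by_cases h : V ∈ b ∧ W ∈ b ∧ (∀ v ∈ V, ∀ w ∈ W, ¬ v ≤ w)
    · obtain ⟨hV, hW, h⟩ := h
      have hVm := (hb.isOpen hV).measurableSet
      have hWm := (hb.isOpen hW).measurableSet
      have hlow : AnalyticSet (lowerClosure W : Set E) := by
        have h1 : (lowerClosure W : Set E) =
            Prod.fst '' ({p : E × E | p.1 ≤ p.2} ∩ Prod.snd ⁻¹' W) := by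
          ext z; simp only [coe_lowerClosure, Set.mem_iUnion, Set.mem_Iic, Set.mem_image,
            Set.mem_inter_iff, Set.mem_ofPred_eq, Set.mem_preimage, Prod.exists]
          constructor
          · rintro ⟨a, ha, h⟩; exact ⟨z, a, ⟨h, ha⟩, rfl⟩
          · rintro ⟨a, b, ⟨h, ha⟩, rfl⟩; exact ⟨b, ha, h⟩
        rw [h1]
        refine AnalyticSet.image_of_continuous ?_ continuous_fst
        exact ((isClosed_le continuous_fst continuous_snd).measurableSet.inter
          (measurable_snd hWm)).analyticSet
      have hdis : Disjoint V (lowerClosure W : Set E) := by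
        rw [Set.disjoint_left]
        intro z hz hzB
        obtain ⟨a, ha, haz⟩ := mem_lowerClosure.mp hzB
        exact h z hz a ha haz
      obtain ⟨C, h1, h2, h3, h4⟩ := upper_sep hVm hlow (lowerClosure W).lower hdis
      exact ⟨C, h1, h2, fun _ _ _ => ⟨h3, h4.mono_right subset_lowerClosure⟩⟩
    · exact ⟨∅, MeasurableSet.empty, isUpperSet_empty, fun h1 h2 h3 => absurd ⟨h1, h2, h3⟩ h⟩
  choose C hCm hCu hC using key
  have hcount : ((fun p : Set E × Set E => C p.1 p.2) '' (b ×ˢ b) ∪ {∅}).Countable :=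
    (((TopologicalSpace.countable_countableBasis E).prod
      (TopologicalSpace.countable_countableBasis E)).image _).union (Set.countable_singleton _)
  obtain ⟨U, hU⟩ := hcount.exists_eq_range ⟨∅, Or.inr rfl⟩
  have hmem : ∀ k, MeasurableSet (U k) ∧ IsUpperSet (U k) := by
    intro k
    have : U k ∈ ((fun p : Set E × Set E => C p.1 p.2) '' (b ×ˢ b) ∪ {∅}) := hU ▸ ⟨k, rfl⟩
    rcases this with ⟨p, -, hp⟩ | h
    · rw [← hp]; exact ⟨hCm _ _, hCu _ _⟩
    · rw [h]; exact ⟨MeasurableSet.empty, isUpperSet_empty⟩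
  refine ⟨U, fun k => (hmem k).1, fun k => (hmem k).2, fun x y hxy => ?_⟩
  by_contra hn
  have hopen : IsOpen {p : E × E | ¬ p.1 ≤ p.2} :=
    (isClosed_le continuous_fst continuous_snd).isOpen_compl
  obtain ⟨u, v, hu, hv, hxu, hyv, huv⟩ := isOpen_prod_iff.mp hopen x y hn
  obtain ⟨V, hVb, hxV, hVu⟩ := hb.exists_subset_of_mem_open hxu hu
  obtain ⟨W, hWb, hyW, hWv⟩ := hb.exists_subset_of_mem_open hyv hv
  have h := hC V W hVb hWb (fun a ha c hc => huv (Set.mk_mem_prod (hVu ha) (hWv hc)))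
  have : C V W ∈ Set.range U := hU ▸ Or.inl ⟨(V, W), ⟨hVb, hWb⟩, rfl⟩
  obtain ⟨k, hk⟩ := this
  have h1 := hxy k (hk ▸ h.1 hxV)
  rw [hk] at h1
  exact Set.disjoint_left.mp h.2 h1 hyW

/-- value function of the dynamic programme -/
noncomputable def dpV {F : Type*} [Fintype F] [PartialOrder F] (f : ℕ → F → ℝ) : ℕ → F → ℝ
  | 0 => fun x => ⨆ w : Set.Iic x, f 0 w
  | n + 1 => fun x => ⨆ w : Set.Iic x, (dpV f n w + f (n + 1) w)

lemma iSup_Iic_mono {F : Type*} [Fintype F] [PartialOrder F] (g : F → ℝ) :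
    Monotone fun x : F => ⨆ w : Set.Iic x, g w := by
  intro x y hxy
  have : Nonempty (Set.Iic x) := ⟨⟨x, le_refl x⟩⟩
  refine ciSup_le fun w => ?_
  exact le_ciSup (f := fun w : Set.Iic y => g w) (Set.finite_range _).bddAbove ⟨w.1, le_trans w.2 hxy⟩

lemma le_iSup_Iic {F : Type*} [Fintype F] [PartialOrder F] (g : F → ℝ) (x : F) :
    g x ≤ ⨆ w : Set.Iic x, g w :=
  le_ciSup (f := fun w : Set.Iic x => g w) (Set.finite_range _).bddAbove ⟨x, le_refl x⟩

lemma iSup_Iic_attained {F : Type*} [Fintype F] [PartialOrder F] (g : F → ℝ) (x : F) :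
    ∃ w, w ≤ x ∧ (⨆ w : Set.Iic x, g w) = g w := by
  have : Nonempty (Set.Iic x) := ⟨⟨x, le_refl x⟩⟩
  obtain ⟨w, hw⟩ := exists_eq_ciSup_of_finite (f := fun w : Set.Iic x => g w)
  exact ⟨w.1, w.2, hw.symm⟩

lemma dpV_mono {F : Type*} [Fintype F] [PartialOrder F] (f : ℕ → F → ℝ) (n : ℕ) :
    Monotone (dpV f n) := by
  cases n with
  | zero => exact iSup_Iic_mono (f 0)
  | succ n => exact iSup_Iic_mono (fun w => dpV f n w + f (n + 1) w)

lemma dpV_chain {F : Type*} [Fintype F] [PartialOrder F] (f : ℕ → F → ℝ) (n : ℕ) (x : F) :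
    ∃ c : ℕ → F, (∀ i j, i ≤ j → j ≤ n → c i ≤ c j) ∧ c n ≤ x ∧
      dpV f n x = ∑ i ∈ Finset.range (n + 1), f i (c i) := by
  induction n generalizing x with
  | zero =>
    obtain ⟨w, hw, h⟩ := iSup_Iic_attained (f 0) x
    exact ⟨fun _ => w, fun _ _ _ _ => le_rfl, hw, by simpa [dpV] using h⟩
  | succ n ih =>
    obtain ⟨w, hw, h⟩ := iSup_Iic_attained (fun w => dpV f n w + f (n + 1) w) x
    obtain ⟨c, hc, hcw, he⟩ := ih w
    refine ⟨fun i => if i ≤ n then c i else w, ?_, by simpa using hw, ?_⟩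
    · intro i j hij hj
      by_cases h1 : j ≤ n
      · simp [h1, hij.trans h1, hc i j hij h1]
      · by_cases h2 : i ≤ n
        · simp [h1, h2, (hc i n h2 le_rfl).trans hcw]
        · simp [h1, h2]
    · rw [Finset.sum_range_succ]
      change (⨆ w : Set.Iic x, (dpV f n w + f (n + 1) w)) = _
      rw [h, he]
      congr 1
      · refine Finset.sum_congr rfl fun i hi => ?_
        have : i ≤ n := by simpa [Nat.lt_succ_iff] using hi
        simp [this]
      · simp

lemma dpV_bound {F : Type*} [Fintype F] [PartialOrder F] (f p : ℕ → F → ℝ)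
    (hp : ∀ i x, 0 ≤ p i x)
    (hm : ∀ i (h : F → ℝ), Monotone h → ∑ x, p i x * h x ≤ ∑ x, p (i + 1) x * h x) (n : ℕ) :
    ∑ i ∈ Finset.range (n + 1), ∑ x, p i x * f i x ≤ ∑ x, p n x * dpV f n x := by
  induction n with
  | zero =>
    simp only [zero_add, Finset.range_one, Finset.sum_singleton]
    exact Finset.sum_le_sum fun x _ => mul_le_mul_of_nonneg_left (le_iSup_Iic (f 0) x) (hp _ _)
  | succ n ih =>
    rw [Finset.sum_range_succ]
    calc _ ≤ ∑ x, p (n+1) x * dpV f n x + ∑ x, p (n+1) x * f (n+1) x := by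
          gcongr
          exact ih.trans (hm n _ (dpV_mono f n))
      _ = ∑ x, p (n+1) x * (dpV f n x + f (n+1) x) := by
          rw [← Finset.sum_add_distrib]; simp [mul_add]
      _ ≤ _ := Finset.sum_le_sum fun x _ => mul_le_mul_of_nonneg_left
          (le_iSup_Iic (fun w => dpV f n w + f (n + 1) w) x) (hp _ _)

lemma finite_strassen {F : Type*} [Fintype F] [PartialOrder F] (p : ℕ → F → ℝ)
    (hp : ∀ i, p i ∈ stdSimplex ℝ F)
    (hm : ∀ i (h : F → ℝ), Monotone h → ∑ x, p i x * h x ≤ ∑ x, p (i + 1) x * h x) (n : ℕ)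
    [Fintype {c : Fin (n + 1) → F // Monotone c}] :
    ∃ w ∈ stdSimplex ℝ {c : Fin (n + 1) → F // Monotone c},
      ∀ (i : Fin (n + 1)) (h : F → ℝ), ∑ c, w c * h (c.1 i) = ∑ x, p i x * h x := by
  classical
  let L : ({c : Fin (n + 1) → F // Monotone c} → ℝ) →ₗ[ℝ] (Fin (n + 1) → F → ℝ) :=
    { toFun := fun w i x => ∑ c, if c.1 i = x then w c else 0
      map_add' := by
        intro a b; ext i x; simp only [Pi.add_apply, ← Finset.sum_add_distrib]
        refine Finset.sum_congr rfl fun c _ => ?_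
        split_ifs <;> simp
      map_smul' := by
        intro a b; ext i x; simp [Finset.mul_sum] }
  have hLc : Continuous L := L.continuous_of_finiteDimensional
  have hcomp : IsCompact (L '' stdSimplex ℝ _) := (isCompact_stdSimplex ℝ _).image hLc
  have hconv : Convex ℝ (L '' stdSimplex ℝ _) := (convex_stdSimplex ℝ _).linear_image L
  by_cases hin : (fun i : Fin (n + 1) => p i) ∈ L '' stdSimplex ℝ _
  · obtain ⟨w, hw, hLw⟩ := hin
    refine ⟨w, hw, fun i h => ?_⟩
    have : ∀ x, p i x = ∑ c, if c.1 i = x then w c else 0 := fun x =>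
      (congrFun (congrFun hLw i) x).symm
    simp_rw [this, Finset.sum_mul]
    rw [Finset.sum_comm]
    simp [ite_mul]
  · exfalso
    obtain ⟨f, u, hf1, hf2⟩ := geometric_hahn_banach_closed_point hconv hcomp.isClosed hin
    let f' : ℕ → F → ℝ := fun i x =>
      if hi : i < n + 1 then f (Pi.single (⟨i, hi⟩ : Fin (n+1)) (Pi.single x 1)) else 0
    have hrep : ∀ v : Fin (n + 1) → F → ℝ, f v = ∑ i : Fin (n + 1), ∑ x, v i x * f' i x := by
      intro v
      have hv : v = ∑ i : Fin (n + 1), ∑ x, v i x • Pi.single i (Pi.single x (1:ℝ)) := by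
        ext i x
        simp [Finset.sum_apply, Pi.single_apply, ite_apply]
        
      conv_lhs => rw [hv]
      simp only [map_sum, map_smul, smul_eq_mul]
      refine Finset.sum_congr rfl fun i _ => Finset.sum_congr rfl fun x _ => ?_
      simp only [f', dif_pos i.2]
    have hb := dpV_bound f' p (fun i x => (hp i).1 x) hm n
    rw [Finset.sum_range, ← hrep (fun i => p i)] at hb
    have hle : ∀ x, dpV f' n x ≤ u := by
      intro x
      obtain ⟨c, hc, -, he⟩ := dpV_chain f' n x
      let c' : {c : Fin (n + 1) → F // Monotone c} :=
        ⟨fun i => c i, fun i j hij => hc i j hij (Nat.lt_succ_iff.mp j.2)⟩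
      have h1 := hf1 _ ⟨Pi.single c' 1, single_mem_stdSimplex ℝ c', rfl⟩
      rw [hrep] at h1
      refine le_of_eq_of_le ?_ h1.le
      rw [he, Finset.sum_range]
      refine Finset.sum_congr rfl fun i _ => ?_
      simp [L, Pi.single_apply, c', Finset.sum_ite]
    have : ∑ x, p n x * dpV f' n x ≤ u := by
      calc _ ≤ ∑ x, p n x * u := Finset.sum_le_sum fun x _ =>
            mul_le_mul_of_nonneg_left (hle x) ((hp n).1 x)
        _ = u := by rw [← Finset.sum_mul, (hp n).2, one_mul]
    linarith

lemma StochDom.integral_le {F : Type*} [Fintype F] [PartialOrder F] [MeasurableSpace F]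
    [DiscreteMeasurableSpace F] {μ ν : Measure F} [IsProbabilityMeasure μ] [IsProbabilityMeasure ν]
    (h : StochDom μ ν) (f : F → ℝ) (hf : Monotone f) : ∫ x, f x ∂μ ≤ ∫ x, f x ∂ν := by
  obtain ⟨M, hM⟩ : ∃ M, ∀ x, |f x| ≤ M := by
    obtain ⟨M, hM⟩ := (Set.finite_range fun x => |f x|).bddAbove
    exact ⟨M, fun x => hM ⟨x, rfl⟩⟩
  set C := max M 0 + 1 with hC
  have hC0 : 0 < C := by positivity
  have hMC : ∀ x, |f x| ≤ C := fun x => (hM x).trans (by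
    have := le_max_left M 0; linarith)
  have hle := lintegral_stoch (d := 0) (μ := μ) (ν := ν)
    (by simpa using (show ∀ I, MeasurableSet I → IsUpperSet I → μ I ≤ ν I from h))
    (fun x => (f x + C) / (2 * C)) (by fun_prop)
    (fun a b hab => by have := hf hab; dsimp only; gcongr)
    (fun x => by have := (abs_le.mp (hMC x)).1; apply div_nonneg <;> linarith)
    (fun x => by have := (abs_le.mp (hMC x)).2; rw [div_le_one (by positivity)]; linarith)
  rw [add_zero] at hle
  have h0 : ∀ x, 0 ≤ (f x + C) / (2 * C) :=
    fun x => by have := (abs_le.mp (hMC x)).1; apply div_nonneg <;> linarith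
  rw [← ofReal_integral_eq_lintegral_ofReal .of_finite (Eventually.of_forall h0),
    ← ofReal_integral_eq_lintegral_ofReal .of_finite (Eventually.of_forall h0),
    ENNReal.ofReal_le_ofReal_iff (integral_nonneg h0), integral_div, integral_div,
    div_le_div_iff_of_pos_right (by positivity)] at hle
  have e : ∀ (κ : Measure F) [IsProbabilityMeasure κ],
      ∫ x, (f x + C) ∂κ = ∫ x, f x ∂κ + C := by
    intro κ _
    rw [integral_add .of_finite .of_finite, integral_const]; simp
  rw [e μ, e ν] at hle
  linarith

lemma finite_strassen_measure {F : Type*} [Fintype F] [PartialOrder F] [MeasurableSpace F]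
    [DiscreteMeasurableSpace F] (η : ℕ → Measure F) (hη : ∀ i, IsProbabilityMeasure (η i))
    (hm : ∀ i, StochDom (η i) (η (i + 1))) (n : ℕ) :
    ∃ Γ : Measure (Fin (n + 1) → F), IsProbabilityMeasure Γ ∧ (∀ᵐ c ∂Γ, Monotone c) ∧
      ∀ i : Fin (n + 1), Γ.map (fun c => c i) = η i := by
  classical
  obtain ⟨w, hw, h⟩ := finite_strassen (fun i x => (η i).real {x})
    (fun i => ⟨fun x => measureReal_nonneg, by simp⟩)
    (fun i f hf => by
      have := (hm i).integral_le f hf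
      rw [integral_fintype .of_finite, integral_fintype .of_finite] at this
      simpa using this) n
  let Γ : Measure (Fin (n + 1) → F) := ∑ c, ENNReal.ofReal (w c) • Measure.dirac c.1
  have happ : ∀ S : Set (Fin (n + 1) → F), Γ S = ∑ c, ENNReal.ofReal (w c) * S.indicator 1 c.1 := by
    intro S
    simp [Γ, Measure.finsetSum_apply, Measure.dirac_apply' _ (MeasurableSet.of_discrete (s := S))]
  refine ⟨Γ, ⟨?_⟩, ?_, ?_⟩
  · rw [happ]
    simp only [Set.indicator_univ, Pi.one_apply, mul_one]
    rw [← ENNReal.ofReal_sum_of_nonneg fun c _ => hw.1 c, hw.2, ENNReal.ofReal_one]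
  · rw [ae_iff, happ]
    refine Finset.sum_eq_zero fun c _ => ?_
    rw [Set.indicator_of_notMem, mul_zero]
    simpa using c.2
  · intro i
    ext A hA
    rw [Measure.map_apply (measurable_of_finite _) hA, happ]
    have h1 := h i (A.indicator 1)
    have h2 : ∑ x, (η i).real {x} * A.indicator 1 x = (η i).real A := by
      rw [← integral_indicator_one hA, integral_fintype .of_finite]
      simp
    rw [h2] at h1
    rw [← ofReal_measureReal (μ := η i), ← h1,
      ENNReal.ofReal_sum_of_nonneg fun c _ => mul_nonneg (hw.1 c) (Set.indicator_nonneg (by simp) _)]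
    refine Finset.sum_congr rfl fun c _ => ?_
    rw [ENNReal.ofReal_mul (hw.1 c)]
    by_cases hc : c.1 i ∈ A <;> simp [hc]

/-- cylinder sets -/
def cyl (F : Finset ℕ) : Set (ℕ → Bool) := {z | ∀ k ∈ F, z k = true}

lemma cyl_clopen (F : Finset ℕ) : IsClopen (cyl F) := by
  have : cyl F = ⋂ k ∈ F, (fun z : ℕ → Bool => z k) ⁻¹' {true} := by ext; simp [cyl]
  rw [this]
  exact isClopen_biInter_finset fun k _ => (isClopen_discrete _).preimage (continuous_apply k)

lemma cantor_ext {μ ν : Measure (ℕ → Bool)} [IsProbabilityMeasure μ] [IsProbabilityMeasure ν]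
    (h : ∀ F, μ (cyl F) = ν (cyl F)) : μ = ν := by
  classical
  refine ext_of_generate_finite (Set.range cyl) ?_ ?_ ?_ (by simp)
  · apply le_antisymm
    · refine iSup_le fun k => ?_
      rw [← measurable_iff_comap_le]
      refine @measurable_to_bool _ (MeasurableSpace.generateFrom (Set.range cyl)) _ ?_
      refine MeasurableSpace.measurableSet_generateFrom ⟨{k}, ?_⟩
      ext; simp [cyl]
    · refine MeasurableSpace.generateFrom_le ?_
      rintro _ ⟨F, rfl⟩
      exact (cyl_clopen F).isOpen.measurableSet
  · rintro _ ⟨F, rfl⟩ _ ⟨G, rfl⟩ _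
    refine ⟨F ∪ G, ?_⟩
    ext z; simp only [cyl, Finset.mem_union, Set.mem_ofPred_eq, Set.mem_inter_iff]
    constructor
    · intro h; exact ⟨fun k hk => h k (Or.inl hk), fun k hk => h k (Or.inr hk)⟩
    · rintro ⟨h1, h2⟩ k (hk | hk)
      exacts [h1 k hk, h2 k hk]
  · rintro _ ⟨F, rfl⟩
    exact h F

lemma StochDom.map {E F : Type*} [MeasurableSpace E] [MeasurableSpace F] [Preorder E] [Preorder F]
    {μ ν : Measure E} (h : StochDom μ ν) {f : E → F} (hf : Measurable f) (hm : Monotone f) :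
    StochDom (μ.map f) (ν.map f) := by
  intro I hI hIu
  rw [Measure.map_apply hf hI, Measure.map_apply hf hI]
  exact h _ (hf hI) (hIu.preimage hm)

lemma StochDom.refl {E : Type*} [MeasurableSpace E] [Preorder E] (μ : Measure E) : StochDom μ μ :=
  fun _ _ _ => le_rfl

lemma StochDom.trans {E : Type*} [MeasurableSpace E] [Preorder E] {μ ν ρ : Measure E}
    (h : StochDom μ ν) (h' : StochDom ν ρ) : StochDom μ ρ :=
  fun I hI hu => (h I hI hu).trans (h' I hI hu)

/-- index at level `n` -/
def lvl (n : ℕ) : Option ℕ → Fin (n + 1)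
  | some i => ⟨min i n, by omega⟩
  | none => Fin.last n

/-- padding by `false` -/
def pad (n : ℕ) (v : Fin n → Bool) : ℕ → Bool := fun k => if h : k < n then v ⟨k, h⟩ else false

lemma cantor_strassen {E : Type*} [MeasurableSpace E] [Preorder E] (u : E → ℕ → Bool)
    (hu : Measurable u) (hum : Monotone u) (M : Option ℕ → Measure E)
    (hM : ∀ o, IsProbabilityMeasure (M o)) (h1 : ∀ i, StochDom (M (some i)) (M (some (i + 1))))
    (h2 : ∀ i, StochDom (M (some i)) (M none)) :
    ∃ Γ : Measure (Option ℕ → ℕ → Bool), IsProbabilityMeasure Γ ∧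
      (∀ o, Γ.map (fun z => z o) = (M o).map u) ∧
      ∀ᵐ z ∂Γ, ∀ i, z (some i) ≤ z (some (i + 1)) ∧ z (some i) ≤ z none := by
  have hun : ∀ n, Measurable fun x => fun k : Fin n => u x k := fun n => by fun_prop
  have hunm : ∀ n, Monotone fun x => fun k : Fin n => u x k := fun n a b hab k => hum hab k
  let N : ℕ → ℕ → Measure E := fun n i => if i < n then M (some i) else M none
  have hN : ∀ n i, IsProbabilityMeasure (N n i) := by
    intro n i; simp only [N]; split_ifs <;> infer_instance
  have hNm : ∀ n i, StochDom (N n i) (N n (i + 1)) := by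
    intro n i; simp only [N]
    split_ifs
    · exact h1 i
    · exact h2 i
    · omega
    · exact StochDom.refl _
  have lev : ∀ n, ∃ Γ : ProbabilityMeasure (Option ℕ → ℕ → Bool),
      (∀ o, (Γ : Measure (Option ℕ → ℕ → Bool)).map (fun z : Option ℕ → ℕ → Bool => z o)
        = (N n (lvl n o)).map (fun x => pad n fun k : Fin n => u x k)) ∧
      ∀ o o', lvl n o ≤ lvl n o' → ∀ᵐ z ∂(Γ : Measure (Option ℕ → ℕ → Bool)), z o ≤ z o' := by
    intro n
    obtain ⟨G, hG, hGm, hGi⟩ := finite_strassen_measure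
      (fun i => (N n i).map fun x => fun k : Fin n => u x k)
      (fun i => Measure.isProbabilityMeasure_map (hun n).aemeasurable)
      (fun i => (hNm n i).map (hun n) (hunm n)) n
    let J : (Fin (n + 1) → Fin n → Bool) → Option ℕ → ℕ → Bool := fun c o => pad n (c (lvl n o))
    have hJ : Measurable J := measurable_of_finite _
    have hp : IsProbabilityMeasure (G.map J) := Measure.isProbabilityMeasure_map hJ.aemeasurable
    refine ⟨⟨G.map J, hp⟩, ?_, ?_⟩
    · intro o
      change (G.map J).map (fun z => z o) = _
      rw [Measure.map_map (measurable_pi_apply o) hJ]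
      have : (fun z : Option ℕ → ℕ → Bool => z o) ∘ J = pad n ∘ fun c => c (lvl n o) := rfl
      rw [this, ← Measure.map_map (measurable_of_finite _) (measurable_of_finite _), hGi,
        Measure.map_map (measurable_of_finite _) (hun n)]
      rfl
    · intro o o' hoo
      change ∀ᵐ z ∂(G.map J), _
      have hms : MeasurableSet {z : Option ℕ → ℕ → Bool | z o ≤ z o'} :=
        by
        have : {z : Option ℕ → ℕ → Bool | z o ≤ z o'} =
            ⋂ k, {z : Option ℕ → ℕ → Bool | z o k ≤ z o' k} := by
          ext z; simp [Pi.le_def]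
        rw [this]
        refine MeasurableSet.iInter fun k => ?_
        have hme : Measurable fun z : Option ℕ → ℕ → Bool => (z o k, z o' k) := by fun_prop
        exact hme (MeasurableSet.of_discrete (s := {p : Bool × Bool | p.1 ≤ p.2}))
      rw [ae_map_iff hJ.aemeasurable hms]
      filter_upwards [hGm] with c hc k
      simp only [J, pad]
      split_ifs with hk
      · exact hc hoo _
      · exact le_rfl
  choose Γs hΓ1 hΓ2 using lev
  obtain ⟨Γ, -, hΓ⟩ := isCompact_univ.ultrafilter_le_nhds ((hyperfilter ℕ).map Γs) (by simp)
  have hlim : Tendsto Γs (hyperfilter ℕ) (𝓝 Γ) := hΓ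
  have hcl : ∀ (C : Set (Option ℕ → ℕ → Bool)) (a : ℝ≥0∞), IsClopen C →
      (∀ᶠ n in atTop, (Γs n : Measure (Option ℕ → ℕ → Bool)) C = a) → (Γ : Measure (Option ℕ → ℕ → Bool)) C = a := by
    intro C a hC ha
    have t1 := ProbabilityMeasure.tendsto_measure_of_null_frontier_of_tendsto' hlim (E := C)
      (by simp [hC.frontier_eq])
    have t2 : Tendsto (fun n => (Γs n : Measure (Option ℕ → ℕ → Bool)) C) (hyperfilter ℕ) (𝓝 a) :=
      (tendsto_const_nhds.congr' (ha.mono fun n hn => hn.symm)).mono_left Nat.hyperfilter_le_atTop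
    exact tendsto_nhds_unique t1 t2
  have hord : ∀ o o', (∀ n, lvl n o ≤ lvl n o') → ∀ᵐ z ∂(Γ : Measure (Option ℕ → ℕ → Bool)), z o ≤ z o' := by
    intro o o' hoo
    have : ∀ k, ∀ᵐ z ∂(Γ : Measure (Option ℕ → ℕ → Bool)), z o k ≤ z o' k := by
      intro k
      have hcont : Continuous fun z : Option ℕ → ℕ → Bool => (z o k, z o' k) := by fun_prop
      have hC : IsClopen {z : Option ℕ → ℕ → Bool | ¬ z o k ≤ z o' k} :=
        (isClopen_discrete {p : Bool × Bool | ¬ p.1 ≤ p.2}).preimage hcont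
      rw [ae_iff]
      refine hcl _ 0 hC (Eventually.of_forall fun n => ?_)
      rw [← ae_iff]
      filter_upwards [hΓ2 n o o' (hoo n)] with z hz using hz k
    filter_upwards [ae_all_iff.mpr this] with z hz k using hz k
  refine ⟨Γ, inferInstance, ?_, ?_⟩
  · intro o
    have := Measure.isProbabilityMeasure_map (μ := (Γ : Measure (Option ℕ → ℕ → Bool)))
      (measurable_pi_apply o).aemeasurable
    have := Measure.isProbabilityMeasure_map (μ := M o) hu.aemeasurable
    refine cantor_ext fun F => ?_
    have hFm : MeasurableSet (cyl F) := (cyl_clopen F).isOpen.measurableSet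
    rw [Measure.map_apply (measurable_pi_apply o) hFm, Measure.map_apply hu hFm]
    refine hcl _ _ ((cyl_clopen F).preimage (continuous_apply o)) ?_
    have hev : ∀ᶠ n in atTop, N n (lvl n o) = M o := by
      cases o with
      | none => exact Eventually.of_forall fun n => by simp [N, lvl]
      | some i =>
        filter_upwards [eventually_gt_atTop i] with n hn
        have : min i n = i := by omega
        simp [N, lvl, this, hn]
    filter_upwards [hev, eventually_gt_atTop (F.sup id)] with n hn hF
    have hmeas : Measurable fun x => pad n fun k : Fin n => u x k :=
      (measurable_of_finite (pad n)).comp (hun n)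
    rw [← Measure.map_apply (measurable_pi_apply o) hFm, hΓ1, hn, Measure.map_apply hmeas hFm]
    congr 1
    ext x
    simp only [Set.mem_preimage, cyl, Set.mem_ofPred_eq]
    refine forall₂_congr fun k hk => ?_
    have : k < n := lt_of_le_of_lt (Finset.le_sup (f := id) hk) hF
    simp [pad, this]
  · rw [ae_all_iff]
    intro i
    filter_upwards [hord (some i) (some (i+1)) (fun n => by simp [lvl]),
      hord (some i) none (fun n => Fin.le_last _)] with z hz hz' using ⟨hz, hz'⟩

lemma exists_embed (E : Type*) [MetricSpace E] [PolishSpace E] [MeasurableSpace E]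
    [BorelSpace E] [PartialOrder E] [OrderClosedTopology E] [Nonempty E] :
    ∃ (u : E → ℕ → Bool) (ψ : (ℕ → Bool) → E), MeasurableEmbedding u ∧ Monotone u ∧
      Measurable ψ ∧ (∀ x, ψ (u x) = x) ∧ ∀ x y, u x ≤ u y → x ≤ y := by
  classical
  obtain ⟨U, hUm, hUu, hU⟩ := exists_sep_family E
  let u : E → ℕ → Bool := fun x k => decide (x ∈ U k)
  have hm : Measurable u := by
    refine measurable_pi_iff.mpr fun k => measurable_to_bool ?_
    have : (fun x => u x k) ⁻¹' {true} = U k := by ext x; simp [u]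
    rw [this]; exact hUm k
  have hmo : Monotone u := by
    intro x y hxy k
    simp only [u]
    by_cases hx : x ∈ U k
    · simp [hx, hUu k hxy hx]
    · simp [hx]
  have hle : ∀ x y, u x ≤ u y → x ≤ y := by
    intro x y h
    refine hU x y fun k hx => ?_
    have := h k
    simp only [u, hx, decide_true] at this
    by_contra hy
    simp only [hy, decide_false] at this
    exact absurd (this rfl) Bool.false_ne_true
  have hinj : Function.Injective u := fun x y h => le_antisymm (hle _ _ h.le) (hle _ _ h.ge)
  have he := hm.measurableEmbedding hinj
  obtain ⟨ψ, hψ, hψu⟩ := he.exists_measurable_extend (g := id) measurable_id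
    (fun _ => inferInstance)
  exact ⟨u, ψ, he, hmo, hψ, fun x => congrFun hψu x, hle⟩

lemma StochDom.of_ae_le {E Ω : Type*} [MeasurableSpace E] [Preorder E] [MeasurableSpace Ω]
    {Γ : Measure Ω} {f g : Ω → E} (hf : Measurable f) (hg : Measurable g)
    (h : ∀ᵐ z ∂Γ, f z ≤ g z) : StochDom (Γ.map f) (Γ.map g) := by
  intro I hI hIu
  rw [Measure.map_apply hf hI, Measure.map_apply hg hI]
  refine measure_mono_ae ?_
  filter_upwards [h] with z hz hzI using hIu hz hzI

open scoped BoundedContinuousFunction in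
lemma limit_lemma {E : Type*} [MetricSpace E] [PolishSpace E] [MeasurableSpace E]
    [BorelSpace E] [PartialOrder E] [OrderClosedTopology E] (hbmc : BMC E)
    (μ : ℕ → Measure E) (hμ : ∀ i, IsProbabilityMeasure (μ i))
    (hinc : ∀ i, StochDom (μ i) (μ (i + 1))) (ρ : Measure E) (hρ : IsProbabilityMeasure ρ)
    (hle : ∀ i, StochDom (μ i) ρ) :
    ∃ π : Measure E, IsProbabilityMeasure π ∧ (∀ i, StochDom (μ i) π) ∧ StochDom π ρ ∧
      ∀ f : E →ᵇ ℝ, Tendsto (fun n => ∫ x, f x ∂(μ n)) atTop (𝓝 (∫ x, f x ∂π)) := by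
  have : Nonempty E := ρ.nonempty_of_neZero
  obtain ⟨u, ψ, he, hmo, hψ, hψu, hu⟩ := exists_embed E
  let M : Option ℕ → Measure E := fun o => o.elim ρ μ
  have hM : ∀ o, IsProbabilityMeasure (M o) := by
    rintro (_ | i)
    exacts [hρ, hμ i]
  obtain ⟨Γ, hΓ, hmarg, hord⟩ := cantor_strassen u he.measurable hmo M hM hinc hle
  let Y : Option ℕ → (Option ℕ → ℕ → Bool) → E := fun o z => ψ (z o)
  have hY : ∀ o, Measurable (Y o) := fun o => hψ.comp (measurable_pi_apply o)
  have hlaw : ∀ o, Γ.map (Y o) = M o := by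
    intro o
    have : Y o = ψ ∘ fun z => z o := rfl
    rw [this, ← Measure.map_map hψ (measurable_pi_apply o), hmarg, Measure.map_map hψ he.measurable]
    have : ψ ∘ u = id := funext hψu
    rw [this, Measure.map_id]
  have hran : ∀ᵐ z ∂Γ, ∀ o, z o ∈ Set.range u := by
    rw [ae_all_iff]
    intro o
    have : ∀ᵐ w ∂(Γ.map fun z => z o), w ∈ Set.range u := by
      rw [hmarg]
      refine (ae_map_iff he.measurable.aemeasurable he.measurableSet_range).mpr ?_
      exact Eventually.of_forall fun x => ⟨x, rfl⟩
    exact ae_of_ae_map (measurable_pi_apply o).aemeasurable this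
  have hYo : ∀ᵐ z ∂Γ, (∀ i, Y (some i) z ≤ Y (some (i + 1)) z) ∧
      ∀ i, Y (some i) z ≤ Y none z := by
    filter_upwards [hran, hord] with z hz ho
    have key : ∀ o o', z o ≤ z o' → Y o z ≤ Y o' z := by
      intro o o' h
      obtain ⟨x, hx⟩ := hz o
      obtain ⟨y, hy⟩ := hz o'
      simp only [Y]
      rw [← hx, ← hy, hψu, hψu]
      apply hu; rw [hx, hy]; exact h
    exact ⟨fun i => key _ _ (ho i).1, fun i => key _ _ (ho i).2⟩
  obtain ⟨Z, hZ, hZl⟩ := measurable_limit_of_tendsto_metrizable_ae (μ := Γ) (L := atTop)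
    (f := fun i : ℕ => Y (some i)) (fun i => (hY _).aemeasurable) (by
      filter_upwards [hYo] with z hz
      exact hbmc _ _ (monotone_nat_of_le_succ hz.1) hz.2)
  refine ⟨Γ.map Z, Measure.isProbabilityMeasure_map hZ.aemeasurable, ?_, ?_, ?_⟩
  · intro i
    have : μ i = Γ.map (Y (some i)) := (hlaw (some i)).symm
    rw [this]
    refine StochDom.of_ae_le (hY _) hZ ?_
    filter_upwards [hYo, hZl] with z hz hl
    exact (monotone_nat_of_le_succ hz.1).ge_of_tendsto hl i
  · have : ρ = Γ.map (Y none) := (hlaw none).symm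
    rw [this]
    refine StochDom.of_ae_le hZ (hY _) ?_
    filter_upwards [hYo, hZl] with z hz hl
    exact le_of_tendsto' hl hz.2
  · intro f
    have h1 : ∀ n, ∫ x, f x ∂(μ n) = ∫ z, f (Y (some n) z) ∂Γ := by
      intro n
      have : μ n = Γ.map (Y (some n)) := (hlaw (some n)).symm
      rw [this, integral_map (hY _).aemeasurable f.continuous.aestronglyMeasurable]
    simp_rw [h1]
    rw [integral_map hZ.aemeasurable f.continuous.aestronglyMeasurable]
    refine tendsto_integral_of_dominated_convergence (fun _ => ‖f‖)
      (fun n => (f.continuous.measurable.comp (hY _)).aestronglyMeasurable) (integrable_const _)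
      (fun n => Eventually.of_forall fun z => f.norm_coe_le_norm _) ?_
    filter_upwards [hZl] with z hl
    exact (f.continuous.tendsto _).comp hl

lemma exists_det_family (E : Type*) [MetricSpace E] [PolishSpace E] [MeasurableSpace E]
    [BorelSpace E] [PartialOrder E] [OrderClosedTopology E] [Nonempty E] :
    ∃ V : ℕ → Set E, (∀ n, MeasurableSet (V n)) ∧ (∀ n, IsUpperSet (V n)) ∧
      ∀ (μ ν : Measure E), IsProbabilityMeasure μ → IsProbabilityMeasure ν →
        (∀ n, μ (V n) = ν (V n)) → μ = ν := by
  obtain ⟨u, ψ, he, hmo, hψ, hψu, -⟩ := exists_embed E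
  obtain ⟨e, hsurj⟩ := exists_surjective_nat (Finset ℕ)
  have hcm : ∀ F, MeasurableSet (cyl F) := fun F => (cyl_clopen F).isOpen.measurableSet
  refine ⟨fun n => u ⁻¹' cyl (e n), fun n => he.measurable (hcm _),
    fun n x y hxy hx k hk => ?_, fun μ ν hμ hν h => ?_⟩
  · have h1 : u x k = true := hx k hk
    have h2 := hmo hxy k
    rw [h1] at h2
    exact top_le_iff.mp h2
  · have := Measure.isProbabilityMeasure_map (μ := μ) he.measurable.aemeasurable
    have := Measure.isProbabilityMeasure_map (μ := ν) he.measurable.aemeasurable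
    have hmap : μ.map u = ν.map u := by
      refine cantor_ext fun F => ?_
      rw [Measure.map_apply he.measurable (hcm F), Measure.map_apply he.measurable (hcm F)]
      obtain ⟨n, rfl⟩ := hsurj F
      exact h n
    have hid : ψ ∘ u = id := funext hψu
    have : (μ.map u).map ψ = (ν.map u).map ψ := by rw [hmap]
    rwa [Measure.map_map hψ he.measurable, Measure.map_map hψ he.measurable, hid, Measure.map_id,
      Measure.map_id] at this

/-- strictly monotone functional -/
noncomputable def Phi {E : Type*} [MeasurableSpace E] (V : ℕ → Set E) (μ : Measure E) : ℝ :=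
  ∑' n, (1 / 2 : ℝ) ^ n * μ.real (V n)

lemma Phi_summable {E : Type*} [MeasurableSpace E] (V : ℕ → Set E) (μ : Measure E)
    [IsProbabilityMeasure μ] : Summable fun n => (1 / 2 : ℝ) ^ n * μ.real (V n) :=
  summable_geometric_two.of_nonneg_of_le (fun n => by positivity)
    (fun n => mul_le_of_le_one_right (by positivity) measureReal_le_one)

lemma Phi_le_two {E : Type*} [MeasurableSpace E] (V : ℕ → Set E) (μ : Measure E)
    [IsProbabilityMeasure μ] : Phi V μ ≤ 2 := by
  rw [← tsum_geometric_two]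
  exact (Phi_summable V μ).tsum_le_tsum
    (fun n => mul_le_of_le_one_right (by positivity) measureReal_le_one) summable_geometric_two

lemma Phi_mono {E : Type*} [MeasurableSpace E] [Preorder E] {V : ℕ → Set E}
    (hV : ∀ n, MeasurableSet (V n)) (hVu : ∀ n, IsUpperSet (V n)) {μ ν : Measure E}
    [IsProbabilityMeasure μ] [IsProbabilityMeasure ν] (h : StochDom μ ν) : Phi V μ ≤ Phi V ν := by
  refine (Phi_summable V μ).tsum_le_tsum (fun n => ?_) (Phi_summable V ν)
  have : μ.real (V n) ≤ ν.real (V n) := ENNReal.toReal_mono (by simp) (h _ (hV n) (hVu n))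
  gcongr

lemma Phi_eq {E : Type*} [MeasurableSpace E] [Preorder E] {V : ℕ → Set E}
    (hV : ∀ n, MeasurableSet (V n)) (hVu : ∀ n, IsUpperSet (V n)) {μ ν : Measure E}
    [IsProbabilityMeasure μ] [IsProbabilityMeasure ν] (h : StochDom μ ν) (hle : Phi V ν ≤ Phi V μ)
    (n : ℕ) : μ (V n) = ν (V n) := by
  by_contra hne
  have hr : ∀ k, μ.real (V k) ≤ ν.real (V k) := fun k =>
    ENNReal.toReal_mono (by simp) (h _ (hV k) (hVu k))
  have hlt : μ (V n) < ν (V n) := lt_of_le_of_ne (h _ (hV n) (hVu n)) hne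
  have hlt' : μ.real (V n) < ν.real (V n) := (ENNReal.toReal_lt_toReal (by simp) (by simp)).mpr hlt
  refine absurd hle (not_le.mpr ?_)
  refine Summable.tsum_lt_tsum (i := n) (fun k => ?_) ?_ (Phi_summable V μ) (Phi_summable V ν)
  · have := hr k
    dsimp only
    gcongr
  · gcongr

lemma main_exists {E : Type*} [MetricSpace E] [PolishSpace E] [MeasurableSpace E] [BorelSpace E]
    [PartialOrder E] [OrderClosedTopology E]
    (hbmc : BMC E)
    (P : Kernel E E) [IsMarkovKernel P] (hmono : MonotoneKernel P)
    (hpr : PRCond P) :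
    ∃ π : Measure E, IsProbabilityMeasure π ∧ π.bind P = π := by
  obtain ⟨m₁, m₂, hm₁, hm₂, h1, h2, h12⟩ := step_one P hmono hpr
  have : Nonempty E := m₁.nonempty_of_neZero
  have hbp : ∀ μ : Measure E, IsProbabilityMeasure μ → IsProbabilityMeasure (μ.bind P) :=
    fun μ _ => inferInstance
  obtain ⟨V, hV, hVu, hdet⟩ := exists_det_family E
  let T := {μ : Measure E // IsProbabilityMeasure μ ∧ StochDom μ (μ.bind P) ∧ StochDom μ m₂}
  have step : ∀ (n : ℕ) (t : T), ∃ t' : T, StochDom t.1 t'.1 ∧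
      ∀ s : T, StochDom t.1 s.1 → Phi V s.1 ≤ Phi V t'.1 + 1 / ((n : ℝ) + 1) := by
    intro n t
    let A : Set ℝ := (fun s : T => Phi V s.1) '' {s | StochDom t.1 s.1}
    have hA : A.Nonempty := ⟨_, t, StochDom.refl _, rfl⟩
    have hb : BddAbove A := ⟨2, by
      rintro _ ⟨s, -, rfl⟩
      have := s.2.1
      exact Phi_le_two V s.1⟩
    have hpos : (0 : ℝ) < 1 / ((n : ℝ) + 1) := by positivity
    obtain ⟨_, ⟨t', ht', rfl⟩, hlt⟩ := exists_lt_of_lt_csSup hA (sub_lt_self (sSup A) hpos)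
    refine ⟨t', ht', fun s hs => ?_⟩
    have := le_csSup hb ⟨s, hs, rfl⟩
    dsimp only at this hlt
    linarith
  choose g hg1 hg2 using step
  let μ : ℕ → T := fun n => Nat.rec ⟨m₁, hm₁, h1, h12⟩ (fun n t => g n t) n
  have hsucc : ∀ n, μ (n + 1) = g n (μ n) := fun n => rfl
  have hinc : ∀ n, StochDom (μ n).1 (μ (n + 1)).1 := fun n => by rw [hsucc]; exact hg1 n _
  obtain ⟨π, hπ, hlo, hup, hw⟩ := limit_lemma hbmc (fun n => (μ n).1) (fun n => (μ n).2.1) hinc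
    m₂ hm₂ (fun n => (μ n).2.2.2)
  have hπP := hbp π hπ
  obtain ⟨π', hπ', -, hup', hw'⟩ := limit_lemma hbmc (fun n => (μ n).1) (fun n => (μ n).2.1) hinc
    (π.bind P) hπP (fun n => (μ n).2.2.1.trans ((hlo n).bind hmono))
  have heq : π' = π := ext_of_forall_integral_eq_of_IsFiniteMeasure fun f =>
    tendsto_nhds_unique (hw' f) (hw f)
  rw [heq] at hup'
  let s : T := ⟨π.bind P, hπP, hup'.bind hmono, (hup.bind hmono).trans h2⟩
  have hle : ∀ n : ℕ, Phi V (π.bind P) ≤ Phi V π + 1 / ((n : ℝ) + 1) := by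
    intro n
    have a := hg2 n (μ n) s ((hlo n).trans hup')
    have := (μ (n + 1)).2.1
    have b : Phi V (μ (n + 1)).1 ≤ Phi V π := Phi_mono hV hVu (hlo (n + 1))
    rw [hsucc] at b
    exact a.trans (by linarith)
  have hle' : Phi V (π.bind P) ≤ Phi V π := by
    have := tendsto_one_div_add_atTop_nhds_zero_nat (𝕜 := ℝ)
    have := this.const_add (Phi V π)
    rw [add_zero] at this
    exact ge_of_tendsto' this hle
  exact ⟨π, hπ, hdet _ _ hπP hπ fun n => (Phi_eq hV hVu hup' hle' n).symm⟩

/-- Proposition 4.1: if the ordered Polish space `E` satisfies (BMC) and the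
monotone kernel `P` satisfies condition (PR), then the Markov chain admits at least one
stationary distribution. -/
theorem stmt15 {E : Type*} [MetricSpace E] [PolishSpace E] [MeasurableSpace E] [BorelSpace E]
    [PartialOrder E] [OrderClosedTopology E]
    (hbmc : BMC E)
    (P : Kernel E E) [IsMarkovKernel P] (hmono : MonotoneKernel P)
    (hpr : PRCond P) :
    ∃ π : Measure E, IsProbabilityMeasure π ∧ π.bind (fun a => P a) = π := by
  exact main_exists hbmc P hmono hpr
end
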